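/- arXiv:1610.03301 — 2 statements merged into one kernel-verified Lean document; each statement's English description precedes it below -/
import Mathlib

section
/- The sequence k ↦ (Nat.card {p : Equiv.Perm (Fin k) × Equiv.Perm (Fin k) // G_c(p.1, p.2) = ⊤} : ℝ) / (k !)^2 tends to 1/2 as k → ∞; that is, the group circularly generated by a pair of uniformly random permutations of k points is all of S_k × S_k with probability tending to 1/2. -/
/-- The group circularly generated by a pair `(σ, τ)` of permutations: the subgroup
of `Equiv.Perm (Fin k) × Equiv.Perm (Fin k)` generated by `(σ, τ)` and `(τ, σ)`. -/
def circGenPair {k : ℕ} (σ τ : Equiv.Perm (Fin k)) :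
    Subgroup (Equiv.Perm (Fin k) × Equiv.Perm (Fin k)) :=
  Subgroup.closure {(σ, τ), (τ, σ)}

section helpers
open Equiv Equiv.Perm MulAction
open scoped Pointwise


lemma isThreeCycle_commutator_of_inter {α : Type*} [Fintype α] [DecidableEq α]
    (g h : Perm α) (x : α) (hgx : g x ≠ x) (hhx : h x ≠ x)
    (hd : ∀ y, g y ≠ y → h y ≠ y → y = x) :
    IsThreeCycle (g * h * g⁻¹ * h⁻¹) := by
  have hfix : ∀ y, y ≠ x → g y ≠ y → h y = y := fun y hy h1 => by
    by_contra h2; exact hy (hd y h1 h2)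
  have hgg : g (g x) ≠ g x := fun e => hgx (g.injective e)
  have hhh : h (h x) ≠ h x := fun e => hhx (h.injective e)
  have h1 : h (g x) = g x := hfix _ hgx hgg
  have h2 : g (h x) = h x := by
    by_contra h2; exact hhx (hd _ h2 hhh)
  have hne : g x ≠ h x := fun e => hgg (by rw [e, h2])
  have key : g * h * g⁻¹ * h⁻¹ = swap x (h x) * swap x (g x) := by
    have : g * h = swap x (h x) * swap x (g x) * (h * g) := by
      ext y
      simp only [Perm.mul_apply]
      by_cases hyx : y = x
      · subst hyx
        rw [h1, h2, swap_apply_right, swap_apply_left]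
      by_cases hgy : g y = y
      · rw [hgy]
        by_cases hhy : h y = y
        · rw [hhy, hgy]
          have a1 : y ≠ g x := fun e => by rw [e] at hgy; exact hgg hgy
          have a2 : y ≠ h x := fun e => by rw [e] at hhy; exact hhh hhy
          rw [swap_apply_of_ne_of_ne hyx a1, swap_apply_of_ne_of_ne hyx a2]
        · by_cases hhyx : h y = x
          · rw [hhyx, swap_apply_left, swap_apply_of_ne_of_ne hgx hne]
          · have a3 : h (h y) ≠ h y := fun e => hhy (h.injective e)
            have a4 : g (h y) = h y := by
              by_contra h2; exact hhyx (hd _ h2 a3)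
            have a5 : h y ≠ h x := fun e => hyx (h.injective e)
            have a6 : h y ≠ g x := fun e => hgg (by rw [← e, a4])
            rw [a4, swap_apply_of_ne_of_ne hhyx a6, swap_apply_of_ne_of_ne hhyx a5]
      · have hhy := hfix y hyx hgy
        rw [hhy]
        by_cases hgyx : g y = x
        · rw [hgyx, swap_apply_of_ne_of_ne hhx hne.symm, swap_apply_right]
        · have a3 : g (g y) ≠ g y := fun e => hgy (g.injective e)
          have a4 := hfix _ hgyx a3
          have a5 : g y ≠ g x := fun e => hyx (g.injective e)
          have a6 : g y ≠ h x := fun e => by rw [e] at a3; exact a3 h2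
          rw [a4, swap_apply_of_ne_of_ne hgyx a5, swap_apply_of_ne_of_ne hgyx a6]
    rw [this]; group
  rw [key]
  exact isThreeCycle_swap_mul_swap_same hhx.symm hgx.symm hne.symm

lemma jordan_prime {α : Type*} [Fintype α] [DecidableEq α] (G : Subgroup (Perm α))
    (hG : IsPreprimitive G α) (c : Perm α) (hcG : c ∈ G) (hc : c.IsCycle)
    (hp : c.support.card.Prime) (hle : 2 * c.support.card ≤ Fintype.card α) :
    alternatingGroup α ≤ G := by
  classical
  have h2p := hp.two_le
  obtain ⟨n, hn⟩ : ∃ n, Fintype.card α = c.support.card + n + 1 :=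
    ⟨Fintype.card α - c.support.card - 1, by omega⟩
  have hmul : IsMultiplyPreprimitive G α (n + 2) := by
    apply hG.isMultiplyPreprimitive (s := (c.supportᶜ : Set α))
    · apply Nat.add_left_cancel
      rw [Set.ncard_add_ncard_compl, Set.ncard_coe_finset, Nat.card_eq_fintype_card, hn, add_assoc]
    · rw [Nat.card_eq_fintype_card]; omega
    have := isPretransitive_of_isCycle_mem hc hcG
    apply IsPreprimitive.of_prime_card
    convert! hp
    rw [Nat.card_eq_fintype_card, Fintype.card_subtype]
    apply congr_arg
    ext x
    simp [SubMulAction.mem_ofFixingSubgroup_iff]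
  have hmt : IsMultiplyPretransitive G α (n + 2) :=
    IsMultiplyPreprimitive.isMultiplyPretransitive ..
  have hpt : IsMultiplyPretransitive G α c.support.card :=
    MulAction.isMultiplyPretransitive_of_le' (n := n + 2) (by omega)
      (by rw [ENat.card_eq_coe_fintype_card]; exact_mod_cast (by omega : n + 2 ≤ Fintype.card α))
  -- enumerate the support
  obtain ⟨a, ha, -⟩ := hc
  have haS : a ∈ c.support := by simpa using ha
  obtain ⟨T, hTsub, hTcard⟩ : ∃ T ⊆ c.supportᶜ, T.card = c.support.card - 1 :=
    Finset.exists_subset_card_eq (by rw [Finset.card_compl]; omega)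
  have haT : a ∉ T := fun h => by
    have := hTsub h; simp at this; exact ha this
  have hcard2 : (insert a T).card = c.support.card := by
    rw [Finset.card_insert_of_notMem haT]; omega
  let e : c.support ≃ Fin c.support.card := c.support.equivFin
  let e' : (insert a T : Finset α) ≃ Fin c.support.card :=
    ((insert a T).equivFin).trans (finCongr hcard2)
  let f1 : Fin c.support.card ↪ α := e.symm.toEmbedding.trans (Function.Embedding.subtype _)
  let f2 : Fin c.support.card ↪ α := e'.symm.toEmbedding.trans (Function.Embedding.subtype _)
  obtain ⟨g, hg⟩ := hpt.exists_smul_eq f1 f2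
  have himg : ∀ y ∈ c.support, (g : Perm α) y ∈ insert a T := by
    intro y hy
    have := DFunLike.congr_fun hg (e ⟨y, hy⟩)
    have h1 : (g • f1) (e ⟨y, hy⟩) = (g : Perm α) y := by
      simp [f1, Function.Embedding.smul_apply, Subgroup.smul_def]
    rw [← h1, this]
    simp only [f2]
    exact (e'.symm (e ⟨y, hy⟩)).2
  have himg2 : ∃ y ∈ c.support, (g : Perm α) y = a := by
    refine ⟨e.symm (e' ⟨a, Finset.mem_insert_self _ _⟩), (e.symm _).2, ?_⟩
    have := DFunLike.congr_fun hg (e' ⟨a, Finset.mem_insert_self _ _⟩)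
    simpa [f1, f2, Function.Embedding.smul_apply, Subgroup.smul_def] using this
  obtain ⟨g', hg'G⟩ := g
  simp only at himg himg2
  have h3 : IsThreeCycle (c * (g' * c * g'⁻¹) * c⁻¹ * (g' * c * g'⁻¹)⁻¹) := by
    apply isThreeCycle_commutator_of_inter _ _ a ha
    · obtain ⟨y, hy, hya⟩ := himg2
      rw [← hya]
      simpa using hy
    · intro y hy1 hy2
      have : g'⁻¹ y ∈ c.support := by
        rw [mem_support]
        intro e
        apply hy2
        simp only [Perm.mul_apply]; rw [e]; simp
      have := himg _ this
      rw [show g' (g'⁻¹ y) = y by simp, Finset.mem_insert] at this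
      rcases this with h | h
      · exact h
      · have := hTsub h; simp at this; exact absurd this hy1
  refine alternatingGroup_le_of_isPreprimitive_of_isThreeCycle_mem hG h3 ?_
  have hc' : g' * c * g'⁻¹ ∈ G := G.mul_mem (G.mul_mem hg'G hcG) (G.inv_mem hg'G)
  exact G.mul_mem (G.mul_mem (G.mul_mem hcG hc') (G.inv_mem hcG)) (G.inv_mem hc')

lemma exists_pow_isCycle {α : Type*} [Fintype α] [DecidableEq α] (σ c : Perm α)
    (hc : c ∈ σ.cycleFactorsFinset) (hp : c.support.card.Prime)
    (hne : ∀ c' ∈ σ.cycleFactorsFinset, c' ≠ c → ¬ c.support.card ∣ c'.support.card) :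
    ∃ m : ℕ, (σ ^ m).IsCycle ∧ (σ ^ m).support.card = c.support.card := by
  have hcyc := (mem_cycleFactorsFinset_iff.mp hc).1
  have hdis : (σ * c⁻¹).Disjoint c := disjoint_mul_inv_of_mem_cycleFactorsFinset hc
  set ρ := σ * c⁻¹ with hρ
  have hσ : σ = ρ * c := by simp [hρ]
  have hcop : Nat.Coprime c.support.card (orderOf ρ) := by
    rw [Nat.Prime.coprime_iff_not_dvd hp, ← lcm_cycleType]
    intro hdvd
    have hfac : ρ.cycleFactorsFinset = σ.cycleFactorsFinset \ {c} :=
      cycleFactorsFinset_mul_inv_mem_eq_sdiff hc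
    have : ∀ (s : Multiset ℕ), c.support.card ∣ s.lcm → ∃ n ∈ s, c.support.card ∣ n := by
      intro s
      induction s using Multiset.induction_on with
      | empty => 
        intro h; simp at h; exact absurd h hp.one_lt.ne'
      | cons a s ih =>
        intro h
        rw [Multiset.lcm_cons] at h
        have := h.trans (lcm_dvd_mul a s.lcm)
        rcases hp.dvd_mul.mp this with h | h
        · exact ⟨a, by simp, h⟩
        · obtain ⟨n, hn, h⟩ := ih h
          exact ⟨n, by simp [hn], h⟩
    obtain ⟨n, hn, hdn⟩ := this _ hdvd
    rw [cycleType_def, Multiset.mem_map] at hn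
    obtain ⟨c', hc', rfl⟩ := hn
    rw [Finset.mem_val, hfac] at hc'
    simp at hc'
    exact hne c' hc'.1 hc'.2 hdn
  refine ⟨orderOf ρ, ?_⟩
  have : σ ^ orderOf ρ = c ^ orderOf ρ := by
    rw [hσ, hdis.commute.mul_pow, pow_orderOf_eq_one, one_mul]
  have ho : orderOf c = c.support.card := hcyc.orderOf
  rw [this]
  have hcop' : (orderOf ρ).Coprime (orderOf c) := by rw [ho]; exact hcop.symm
  refine ⟨hcyc.pow_iff.mpr hcop', ?_⟩
  rw [support_pow_coprime hcop']

lemma eq_top_of_alternating_le {α : Type*} [Fintype α] [DecidableEq α] (K : Subgroup (Perm α))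
    (hA : alternatingGroup α ≤ K) (σ : Perm α) (hσ : σ ∈ K) (hs : sign σ = -1) : K = ⊤ := by
  rw [eq_top_iff]
  intro g _
  rcases Int.units_eq_one_or (sign g) with h | h
  · exact hA (mem_alternatingGroup.mpr h)
  · have : g * σ ∈ K := hA (mem_alternatingGroup.mpr (by rw [Perm.sign_mul, h, hs]; rfl))
    simpa using K.mul_mem this (K.inv_mem hσ)

lemma circGenPair_swap {k : ℕ} (σ τ : Perm (Fin k)) (a b : Perm (Fin k))
    (h : (a, b) ∈ circGenPair σ τ) : (b, a) ∈ circGenPair σ τ := by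
  have : circGenPair σ τ ≤ (circGenPair σ τ).comap
      (MulEquiv.prodComm : Perm (Fin k) × Perm (Fin k) ≃* _).toMonoidHom := by
    conv_lhs => unfold circGenPair
    rw [Subgroup.closure_le]
    rintro x (rfl | rfl)
    · exact Subgroup.subset_closure (by simp)
    · exact Subgroup.subset_closure (by simp)
  exact this h

lemma circGenPair_eq_top {k : ℕ} (hk : 5 ≤ k) (σ τ : Perm (Fin k))
    (hA : alternatingGroup (Fin k) ≤ Subgroup.closure {σ, τ})
    (hs : sign σ ≠ sign τ) : circGenPair σ τ = ⊤ := by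
  set H := circGenPair σ τ with hH
  have hστ : (σ, τ) ∈ H := Subgroup.subset_closure (by simp)
  have hτσ : (τ, σ) ∈ H := Subgroup.subset_closure (by simp)
  have hswap : ∀ a b, (a, b) ∈ H → (b, a) ∈ H := circGenPair_swap σ τ
  obtain ⟨o, e, hoe, ho, he, hoK⟩ : ∃ o e : Perm (Fin k), (o, e) ∈ H ∧ sign o = -1 ∧ sign e = 1 ∧
      o ∈ Subgroup.closure {σ, τ} := by
    rcases Int.units_eq_one_or (sign σ) with h1 | h1 <;>
    rcases Int.units_eq_one_or (sign τ) with h2 | h2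
    · exact absurd (h1.trans h2.symm) hs
    · exact ⟨τ, σ, hτσ, h2, h1, Subgroup.subset_closure (by simp)⟩
    · exact ⟨σ, τ, hστ, h1, h2, Subgroup.subset_closure (by simp)⟩
    · exact absurd (h1.trans h2.symm) hs
  have hK : Subgroup.closure {σ, τ} = ⊤ := eq_top_of_alternating_le _ hA o hoK ho
  have hfst : ∀ a, ∃ b, (a, b) ∈ H := by
    intro a
    have h1 : H.map (MonoidHom.fst _ _) = ⊤ := by
      rw [hH, circGenPair, MonoidHom.map_closure, ← hK]
      congr 1
      simp [Set.image_pair]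
    have : a ∈ H.map (MonoidHom.fst _ _) := by rw [h1]; trivial
    obtain ⟨⟨x, b⟩, hx, rfl⟩ := this
    exact ⟨b, hx⟩
  let N : Subgroup (Perm (Fin k)) := H.comap (MonoidHom.inl _ _)
  have hN : ∀ a, a ∈ N ↔ (a, 1) ∈ H := fun a => Iff.rfl
  have hNn : N.Normal := by
    constructor
    intro n hn g
    obtain ⟨b, hb⟩ := hfst g
    rw [hN] at hn ⊢
    have := H.mul_mem (H.mul_mem hb hn) (H.inv_mem hb)
    simpa using this
  have hN' : (N.subgroupOf (alternatingGroup (Fin k))).Normal := inferInstance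
  rcases alternatingGroup.normal_subgroup_eq_bot_or_eq_top (α := Fin k) (by simpa using hk)
    (N := N.subgroupOf (alternatingGroup (Fin k))) with hbot | htop
  · exfalso
    have hNA : ∀ n ∈ N, sign n = 1 → n = 1 := by
      intro n hn h1
      have : (⟨n, mem_alternatingGroup.mpr h1⟩ : alternatingGroup (Fin k)) ∈
          N.subgroupOf (alternatingGroup (Fin k)) := hn
      rw [hbot, Subgroup.mem_bot] at this
      exact congrArg Subtype.val this
    have hNbot : ∀ n ∈ N, n = 1 := by
      intro n hn
      have hcen : n ∈ Subgroup.center (Perm (Fin k)) := by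
        rw [Subgroup.mem_center_iff]
        intro g
        have h1 : g * n * g⁻¹ * n⁻¹ = 1 := by
          apply hNA
          · exact N.mul_mem (hNn.conj_mem n hn g) (N.inv_mem hn)
          · rw [Perm.sign_mul, Perm.sign_mul, Perm.sign_mul, Perm.sign_inv, Perm.sign_inv]
            rcases Int.units_eq_one_or (sign g) with h | h <;>
            rcases Int.units_eq_one_or (sign n) with h' | h' <;> rw [h, h'] <;> rfl
        rw [mul_inv_eq_one, mul_inv_eq_iff_eq_mul] at h1
        exact h1
      rw [Subgroup.mem_center_iff] at hcen
      by_contra hn1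
      obtain ⟨a, ha⟩ : ∃ a, n a ≠ a := by
        by_contra hall
        push Not at hall
        exact hn1 (Equiv.ext hall)
      obtain ⟨b, hb⟩ : ∃ b : Fin k, b ∉ ({a, n a} : Finset (Fin k)) := by
        by_contra hall
        push Not at hall
        have h1 := Finset.card_le_two (a := a) (b := n a)
        rw [Finset.eq_univ_of_forall hall] at h1
        simp at h1
        omega
      simp at hb
      have h1 := Equiv.congr_fun (hcen (swap (n a) b)) a
      simp only [Perm.mul_apply, swap_apply_left] at h1
      rw [swap_apply_of_ne_of_ne (Ne.symm ha) (Ne.symm hb.1)] at h1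
      exact hb.2 h1
    let f : H →* Perm (Fin k) := (MonoidHom.fst _ _).comp H.subtype
    have hf : Function.Bijective f := by
      constructor
      · rw [injective_iff_map_eq_one]
        rintro ⟨⟨a, b⟩, hab⟩ h
        simp [f] at h
        subst h
        have : b = 1 := hNbot b (hswap _ _ hab)
        subst this; rfl
      · intro a
        obtain ⟨b, hb⟩ := hfst a
        exact ⟨⟨(a, b), hb⟩, rfl⟩
    let F := MulEquiv.ofBijective f hf
    let s : Perm (Fin k) →* ℤˣ :=
      sign.comp (((MonoidHom.snd _ _).comp H.subtype).comp F.symm.toMonoidHom)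
    have hsv : ∀ a b, (a, b) ∈ H → s a = sign b := by
      intro a b hab
      have : F.symm a = ⟨(a, b), hab⟩ := by
        rw [MulEquiv.symm_apply_eq]; rfl
      simp only [s, MonoidHom.comp_apply, MulEquiv.coe_toMonoidHom, this]
      rfl
    have hsurj : Function.Surjective s := by
      intro u
      rcases Int.units_eq_one_or u with h | h
      · exact ⟨1, by simp [h]⟩
      · exact ⟨e, by rw [hsv e o (hswap _ _ hoe), ho, h]⟩
    have := eq_sign_of_surjective_hom hsurj
    have h1 := hsv o e hoe
    rw [this, ho, he] at h1
    exact absurd h1 (by decide)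
  · have hAN : alternatingGroup (Fin k) ≤ N := by
      rwa [Subgroup.subgroupOf_eq_top] at htop
    have h1 : (1, e) ∈ H := hswap _ _ (hAN (mem_alternatingGroup.mpr he))
    have h2 : o ∈ N := by
      rw [hN]
      simpa using H.mul_mem hoe (H.inv_mem h1)
    have hNtop := eq_top_of_alternating_le N hAN o h2 ho
    rw [eq_top_iff]
    rintro ⟨a, b⟩ -
    have ha : a ∈ N := by rw [hNtop]; trivial
    have hb : b ∈ N := by rw [hNtop]; trivial
    simpa using H.mul_mem ((hN a).mp ha) (hswap _ _ ((hN b).mp hb))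

lemma sign_ne_of_circGenPair_eq_top {k : ℕ} (hk : 2 ≤ k) (σ τ : Perm (Fin k))
    (h : circGenPair σ τ = ⊤) : sign σ ≠ sign τ := by
  intro hs
  have : circGenPair σ τ ≤ (MonoidHom.eqLocus (sign.comp (MonoidHom.fst _ _))
      (sign.comp (MonoidHom.snd _ _))) := by
    unfold circGenPair
    rw [Subgroup.closure_le]
    rintro x (rfl | rfl)
    · exact hs
    · exact hs.symm
  rw [h] at this
  have h2 : sign (swap (⟨0, by omega⟩ : Fin k) ⟨1, by omega⟩) = sign (1 : Perm (Fin k)) :=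
    this (x := (swap (⟨0, by omega⟩ : Fin k) ⟨1, by omega⟩, 1)) trivial
  rw [sign_swap (by simp)] at h2
  simp at h2


lemma card_stab_mul_le {G X : Type*} [Group G] [Fintype G] [MulAction G X] [DecidableEq X]
    (T : Finset X) (hT : ∀ x ∈ T, ∀ y ∈ T, ∃ g : G, g • x = y) (x : X) (hx : x ∈ T) :
    (Finset.univ.filter (fun g : G => g • x = x)).card * T.card ≤ Fintype.card G := by
  classical
  choose! f hf using hT x hx
  rw [← Finset.card_product, ← Finset.card_univ]
  apply Finset.card_le_card_of_injOn (fun q => f q.2 * q.1) (by simp)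
  rintro ⟨s, y⟩ h1 ⟨s', y'⟩ h2 h
  simp at h1 h2 h
  have e1 : (f y * s) • x = y := by rw [mul_smul, h1.1, hf y h1.2]
  have e2 : (f y' * s') • x = y' := by rw [mul_smul, h2.1, hf y' h2.2]
  have : y = y' := by rw [← e1, h, e2]
  subst this
  simpa using h

lemma union_stab {G X : Type*} [Group G] [Fintype G] [MulAction G X] [DecidableEq X]
    (T : Finset X) (hT : ∀ x ∈ T, ∀ y ∈ T, ∃ g : G, g • x = y)
    [DecidablePred (fun p : G × G => ∃ x ∈ T, p.1 • x = x ∧ p.2 • x = x)] :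
    (Finset.univ.filter (fun p : G × G => ∃ x ∈ T, p.1 • x = x ∧ p.2 • x = x)).card * T.card
      ≤ Fintype.card G ^ 2 := by
  classical
  rcases T.eq_empty_or_nonempty with h0 | h0
  · simp [h0]
  set S : X → Finset G := fun x => Finset.univ.filter (fun g : G => g • x = x) with hS
  have key := card_stab_mul_le T hT
  have h1 : (Finset.univ.filter (fun p : G × G => ∃ x ∈ T, p.1 • x = x ∧ p.2 • x = x)).card
      ≤ ∑ x ∈ T, (S x).card * (S x).card := by
    calc _ ≤ (T.biUnion (fun x => (S x) ×ˢ (S x))).card := by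
          apply Finset.card_le_card
          intro p hp
          simpa [hS] using hp
      _ ≤ ∑ x ∈ T, ((S x) ×ˢ (S x)).card := Finset.card_biUnion_le
      _ = _ := by simp [Finset.card_product]
  have h2 : (∑ x ∈ T, (S x).card) ≤ Fintype.card G := by
    have : (∑ x ∈ T, (S x).card) * T.card ≤ Fintype.card G * T.card := by
      rw [Finset.sum_mul]
      calc _ ≤ ∑ x ∈ T, Fintype.card G := Finset.sum_le_sum (fun x hx => key x hx)
        _ = _ := by simp [mul_comm]
    exact Nat.le_of_mul_le_mul_right this h0.card_pos
  calc _ ≤ (∑ x ∈ T, (S x).card * (S x).card) * T.card := Nat.mul_le_mul_right _ h1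
    _ = ∑ x ∈ T, (S x).card * ((S x).card * T.card) := by
      rw [Finset.sum_mul]; exact Finset.sum_congr rfl (fun x _ => by ring)
    _ ≤ ∑ x ∈ T, (S x).card * Fintype.card G :=
      Finset.sum_le_sum (fun x hx => Nat.mul_le_mul_left _ (key x hx))
    _ = (∑ x ∈ T, (S x).card) * Fintype.card G := by rw [Finset.sum_mul]
    _ ≤ Fintype.card G * Fintype.card G := Nat.mul_le_mul_right _ h2
    _ = _ := by ring

lemma union_stab_real {G X : Type*} [Group G] [Fintype G] [MulAction G X] [DecidableEq X]
    (T : Finset X) (hT : ∀ x ∈ T, ∀ y ∈ T, ∃ g : G, g • x = y)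
    [DecidablePred (fun p : G × G => ∃ x ∈ T, p.1 • x = x ∧ p.2 • x = x)] (c : ℕ) (hc : 0 < c)
    (hcT : T.Nonempty → c ≤ T.card) :
    ((Finset.univ.filter (fun p : G × G => ∃ x ∈ T, p.1 • x = x ∧ p.2 • x = x)).card : ℝ)
      ≤ (1 / c) * (Fintype.card G : ℝ) ^ 2 := by
  rcases T.eq_empty_or_nonempty with h0 | h0
  · simp [h0]; positivity
  have h1 := union_stab T hT
  have h2 := (Nat.mul_le_mul_left _ (hcT h0)).trans h1
  have h3 : (0 : ℝ) < c := by exact_mod_cast hc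
  rw [one_div, inv_mul_eq_div, le_div_iff₀ h3]
  exact_mod_cast h2

lemma union_stab_exists {G X : Type*} [Group G] [Fintype G] [MulAction G X] [DecidableEq X]
    (T : Finset X) (hT : ∀ x ∈ T, ∀ y ∈ T, ∃ g : G, g • x = y) (c : ℕ) (hc : 0 < c)
    (hcT : T.Nonempty → c ≤ T.card) :
    ∃ F : Finset (G × G), (∀ p, (∃ x ∈ T, p.1 • x = x ∧ p.2 • x = x) → p ∈ F) ∧
      (F.card : ℝ) ≤ (1 / c) * (Fintype.card G : ℝ) ^ 2 := by
  classical
  exact ⟨_, fun p hp => Finset.mem_filter.mpr ⟨Finset.mem_univ _, hp⟩,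
    union_stab_real T hT c hc hcT⟩

lemma exists_perm_smul_eq {α : Type*} [Fintype α] [DecidableEq α] (A B : Finset α)
    (h : A.card = B.card) : ∃ g : Perm α, g • A = B := by
  let e : {x // x ∈ A} ≃ {x // x ∈ B} := Finset.equivOfCardEq h
  refine ⟨e.extendSubtype, ?_⟩
  apply Finset.eq_of_subset_of_card_le
  · intro x hx
    rw [Finset.mem_smul_finset] at hx
    obtain ⟨y, hy, rfl⟩ := hx
    exact e.extendSubtype_mem y hy
  · rw [Finset.card_smul_finset, h]

lemma closure_fix {α X : Type*} [MulAction (Perm α) X] (σ τ : Perm α) (x : X) (h1 : σ • x = x)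
    (h2 : τ • x = x) (g : Perm α) (hg : g ∈ Subgroup.closure {σ, τ}) : g • x = x := by
  have : Subgroup.closure {σ, τ} ≤ stabilizer (Perm α) x := by
    rw [Subgroup.closure_le]
    rintro y (rfl | rfl)
    · exact h1
    · exact h2
  exact this hg

/-- A non-transitive pair fixes a small nonempty set. -/
lemma exists_fixed_set {k : ℕ} (σ τ : Perm (Fin k))
    (h : ¬ IsPretransitive (Subgroup.closure {σ, τ}) (Fin k)) :
    ∃ i ∈ Finset.Icc 1 (k / 2), ∃ A ∈ Finset.powersetCard i (Finset.univ : Finset (Fin k)),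
      σ • A = A ∧ τ • A = A := by
  classical
  set G := Subgroup.closure {σ, τ} with hG
  have hσ : σ ∈ G := Subgroup.subset_closure (by simp)
  have hτ : τ ∈ G := Subgroup.subset_closure (by simp)
  rw [isPretransitive_iff] at h
  push Not at h
  obtain ⟨a, b, hab⟩ := h
  let O : Finset (Fin k) := Finset.univ.filter (fun x => x ∈ orbit G a)
  have hO : ∀ x, x ∈ O ↔ x ∈ orbit G a := by simp [O]
  have hfix : ∀ g ∈ G, g • O = O := by
    intro g hg
    apply Finset.eq_of_subset_of_card_le
    · intro x hx
      rw [Finset.mem_smul_finset] at hx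
      obtain ⟨y, hy, rfl⟩ := hx
      rw [hO] at hy ⊢
      exact mem_orbit_of_mem_orbit (⟨g, hg⟩ : G) hy
    · rw [Finset.card_smul_finset]
  have hfixc : ∀ g ∈ G, g • Oᶜ = Oᶜ := by
    intro g hg
    apply Finset.eq_of_subset_of_card_le
    · intro x hx
      rw [Finset.mem_smul_finset] at hx
      obtain ⟨y, hy, rfl⟩ := hx
      rw [Finset.mem_compl] at hy ⊢
      intro h'
      rw [← hfix g hg, Finset.smul_mem_smul_finset_iff] at h'
      exact hy h'
    · rw [Finset.card_smul_finset]
  have haO : a ∈ O := by rw [hO]; exact mem_orbit_self a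
  have hbO : b ∈ Oᶜ := by
    rw [Finset.mem_compl, hO]
    rintro ⟨g, hg⟩
    exact hab g hg
  have hcard : O.card + Oᶜ.card = k := by
    simp
  have p1 : 0 < O.card := Finset.card_pos.mpr ⟨a, haO⟩
  have p2 : 0 < Oᶜ.card := Finset.card_pos.mpr ⟨b, hbO⟩
  by_cases hh : O.card ≤ k / 2
  · exact ⟨O.card, by simp only [Finset.mem_Icc]; omega, O, by simp, hfix σ hσ, hfix τ hτ⟩
  · exact ⟨Oᶜ.card, by simp only [Finset.mem_Icc]; omega, Oᶜ, by simp, hfixc σ hσ, hfixc τ hτ⟩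

open Classical in
lemma nontransitive_bound (k : ℕ) :
    ((Finset.univ.filter (fun p : Perm (Fin k) × Perm (Fin k) =>
      ¬ IsPretransitive (Subgroup.closure {p.1, p.2}) (Fin k))).card : ℝ) ≤
    (∑ i ∈ Finset.Icc 1 (k / 2), 1 / (k.choose i : ℝ)) * (k.factorial : ℝ) ^ 2 := by
  have hsub : (Finset.univ.filter (fun p : Perm (Fin k) × Perm (Fin k) =>
      ¬ IsPretransitive (Subgroup.closure {p.1, p.2}) (Fin k))) ⊆
      (Finset.Icc 1 (k / 2)).biUnion (fun i => Finset.univ.filter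
        (fun p : Perm (Fin k) × Perm (Fin k) =>
          ∃ A ∈ Finset.powersetCard i (Finset.univ : Finset (Fin k)),
            p.1 • A = A ∧ p.2 • A = A)) := by
    intro p hp
    rw [Finset.mem_filter] at hp
    obtain ⟨i, hi, hA⟩ := exists_fixed_set p.1 p.2 hp.2
    rw [Finset.mem_biUnion]
    exact ⟨i, hi, by rw [Finset.mem_filter]; exact ⟨Finset.mem_univ _, hA⟩⟩
  have h1 := (Finset.card_le_card hsub).trans Finset.card_biUnion_le
  have h2 : ((Finset.univ.filter (fun p : Perm (Fin k) × Perm (Fin k) =>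
      ¬ IsPretransitive (Subgroup.closure {p.1, p.2}) (Fin k))).card : ℝ) ≤ 
      ∑ i ∈ Finset.Icc 1 (k / 2), ((Finset.univ.filter
        (fun p : Perm (Fin k) × Perm (Fin k) =>
          ∃ A ∈ Finset.powersetCard i (Finset.univ : Finset (Fin k)),
            p.1 • A = A ∧ p.2 • A = A)).card : ℝ) := by exact_mod_cast h1
  refine h2.trans ?_
  rw [Finset.sum_mul]
  apply Finset.sum_le_sum
  intro i hi
  rw [Finset.mem_Icc] at hi
  have := union_stab_real (G := Perm (Fin k)) (Finset.powersetCard i (Finset.univ : Finset (Fin k)))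
    (by
      intro A hA B hB
      rw [Finset.mem_powersetCard] at hA hB
      exact exists_perm_smul_eq A B (hA.2.trans hB.2.symm)) (k.choose i)
    (Nat.choose_pos (by omega)) (by simp)
  rw [Fintype.card_perm, Fintype.card_fin] at this
  exact this

lemma sum_inv_choose (n m : ℕ) (hn : 2 ≤ n) (hm : m ≤ n / 2) :
    ∑ i ∈ Finset.Icc 1 m, 1 / (n.choose i : ℝ) ≤ 2 / ((n : ℝ) - 1) := by
  have hmono : ∀ i, 2 ≤ i → i ≤ n / 2 → n.choose 2 ≤ n.choose i := by
    intro i hi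
    induction i, hi using Nat.le_induction with
    | base => intro _; exact le_rfl
    | succ i hi ih =>
      intro h
      exact (ih (by omega)).trans (Nat.choose_le_succ_of_lt_half_left (by omega))
  have hn' : (2 : ℝ) ≤ n := by exact_mod_cast hn
  have hb : ∀ i ∈ Finset.Icc 1 m, 1 / (n.choose i : ℝ) ≤
      (if i = 1 then 1 / (n : ℝ) else 0) + 2 / (n * (n - 1)) := by
    intro i hi
    rw [Finset.mem_Icc] at hi
    have hpos : (0 : ℝ) < 2 / (n * (n - 1)) := by
      apply div_pos two_pos; apply mul_pos <;> linarith
    by_cases h1 : i = 1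
    · subst h1; simp only [Nat.choose_one_right, if_true]; linarith
    · rw [if_neg h1, zero_add]
      have h2 : (n.choose 2 : ℝ) ≤ n.choose i := by exact_mod_cast hmono i (by omega) (by omega)
      have h3 : (n.choose 2 : ℝ) = n * (n - 1) / 2 := Nat.cast_choose_two ℝ n
      have h4 : (0 : ℝ) < n * (n - 1) / 2 := by
        apply div_pos _ two_pos; apply mul_pos <;> linarith
      calc 1 / (n.choose i : ℝ) ≤ 1 / (n.choose 2 : ℝ) := by
            apply one_div_le_one_div_of_le _ h2; rw [h3]; exact h4
        _ = _ := by rw [h3]; field_simp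
  refine (Finset.sum_le_sum hb).trans ?_
  rw [Finset.sum_add_distrib, Finset.sum_ite_eq', Finset.sum_const, Nat.card_Icc]
  have hm' : (m : ℝ) ≤ n / 2 := by
    have : 2 * m ≤ n := by omega
    have : (2 : ℝ) * m ≤ n := by exact_mod_cast this
    linarith
  have e1 : (if 1 ∈ Finset.Icc 1 m then 1 / (n : ℝ) else 0) ≤ 1 / (n - 1) := by
    have : 1 / (n : ℝ) ≤ 1 / (n - 1) := one_div_le_one_div_of_le (by linarith) (by linarith)
    have h0 : (0 : ℝ) ≤ 1 / (n - 1) := one_div_nonneg.mpr (by linarith)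
    split_ifs <;> linarith
  have e2 : ((m + 1 - 1 : ℕ) • (2 / ((n : ℝ) * (n - 1)))) ≤ 1 / (n - 1) := by
    rw [Nat.add_sub_cancel, nsmul_eq_mul]
    calc (m : ℝ) * (2 / ((n : ℝ) * (n - 1))) ≤ (n / 2) * (2 / ((n : ℝ) * (n - 1))) := by
          apply mul_le_mul_of_nonneg_right hm'
          apply div_nonneg two_pos.le; apply mul_nonneg <;> linarith
      _ = 1 / (n - 1) := by
          have : (n : ℝ) - 1 ≠ 0 := by linarith
          field_simp
  have : 2 / ((n : ℝ) - 1) = 1 / (n - 1) + 1 / (n - 1) := by ring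
  rw [this]
  exact add_le_add e1 e2

/-- The class of `a` under the relation encoded by `R`. -/
def relClass {α : Type*} [Fintype α] [DecidableEq α] (R : Finset (α × α)) (a : α) : Finset α :=
  Finset.univ.filter (fun b => (a, b) ∈ R)

open Classical in
/-- Equivalence relations all of whose classes have `d` elements. -/
noncomputable def eqRels (α : Type*) [Fintype α] [DecidableEq α] (d : ℕ) :
    Finset (Finset (α × α)) :=
  Finset.univ.filter (fun R => Equivalence (fun a b => (a, b) ∈ R) ∧
    ∀ a, (relClass R a).card = d)

lemma mem_eqRels {α : Type*} [Fintype α] [DecidableEq α] {d : ℕ} {R : Finset (α × α)} :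
    R ∈ eqRels α d ↔ Equivalence (fun a b => (a, b) ∈ R) ∧ ∀ a, (relClass R a).card = d := by
  simp [eqRels]

lemma mem_relClass {α : Type*} [Fintype α] [DecidableEq α] {R : Finset (α × α)} {a b : α} :
    b ∈ relClass R a ↔ (a, b) ∈ R := by simp [relClass]

lemma mem_smul_rel {α : Type*} [Fintype α] [DecidableEq α] {R : Finset (α × α)} {a b : α}
    (g : Perm α) : (g a, g b) ∈ g • R ↔ (a, b) ∈ R := by
  have : (g a, g b) = g • (a, b) := rfl
  rw [this, Finset.smul_mem_smul_finset_iff]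

lemma mem_smul_rel' {α : Type*} [Fintype α] [DecidableEq α] {R : Finset (α × α)} {a b : α}
    (g : Perm α) : (a, b) ∈ g • R ↔ (g⁻¹ a, g⁻¹ b) ∈ R := by
  rw [← mem_smul_rel (R := R) g]; simp

lemma smul_mem_eqRels {α : Type*} [Fintype α] [DecidableEq α] {d : ℕ} {R : Finset (α × α)}
    (hR : R ∈ eqRels α d) (g : Perm α) : g • R ∈ eqRels α d ∧
      ∀ a, relClass (g • R) (g a) = g • relClass R a := by
  rw [mem_eqRels] at hR
  have hcl : ∀ a, relClass (g • R) (g a) = g • relClass R a := by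
    intro a
    ext b
    rw [mem_relClass, mem_smul_rel', Finset.mem_smul_finset]
    constructor
    · intro h
      exact ⟨g⁻¹ b, by rw [mem_relClass]; simpa using h, by simp⟩
    · rintro ⟨c, hc, rfl⟩
      rw [mem_relClass] at hc
      simpa using hc
  refine ⟨?_, hcl⟩
  rw [mem_eqRels]
  refine ⟨⟨?_, ?_, ?_⟩, ?_⟩
  · intro a
    rw [mem_smul_rel']; exact hR.1.refl _
  · intro a b h
    rw [mem_smul_rel'] at h ⊢; exact hR.1.symm h
  · intro a b c h h'
    rw [mem_smul_rel'] at h h' ⊢; exact hR.1.trans h h'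
  · intro a
    have := hcl (g⁻¹ a)
    rw [show g (g⁻¹ a) = a by simp] at this
    rw [this, Finset.card_smul_finset, hR.2]

lemma eqRels_transitive {α : Type*} [Fintype α] [DecidableEq α] {d : ℕ} (hd : 0 < d)
    (R : Finset (α × α)) (hR : R ∈ eqRels α d)
    (R' : Finset (α × α)) (hR' : R' ∈ eqRels α d) : ∃ g : Perm α, g • R = R' := by
  classical
  rw [mem_eqRels] at hR hR'
  let r : Setoid α := ⟨_, hR.1⟩
  let r' : Setoid α := ⟨_, hR'.1⟩
  have fib : ∀ (S : Finset (α × α)) (hS : Equivalence (fun a b => (a, b) ∈ S) ∧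
      ∀ a, (relClass S a).card = d) (q : Quotient (⟨_, hS.1⟩ : Setoid α)),
      Fintype.card {a // Quotient.mk (⟨_, hS.1⟩ : Setoid α) a = q} = d := by
    intro S hS q
    induction q using Quotient.inductionOn with
    | h a =>
      refine Eq.trans ?_ (hS.2 a)
      rw [Fintype.card_subtype]
      congr 1
      ext b
      rw [mem_relClass, Finset.mem_filter]
      simp only [Finset.mem_univ, true_and]
      rw [Quotient.eq]
      exact ⟨fun h => hS.1.symm h, fun h => hS.1.symm h⟩
  have cardq : ∀ (S : Finset (α × α)) (hS : Equivalence (fun a b => (a, b) ∈ S) ∧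
      ∀ a, (relClass S a).card = d),
      Fintype.card (Quotient (⟨_, hS.1⟩ : Setoid α)) * d = Fintype.card α := by
    intro S hS
    rw [← Fintype.card_congr (Equiv.sigmaFiberEquiv (Quotient.mk (⟨_, hS.1⟩ : Setoid α))),
      Fintype.card_sigma, Finset.sum_congr rfl (fun q _ => fib S hS q)]
    simp
  have hq : Fintype.card (Quotient r) = Fintype.card (Quotient r') :=
    Nat.eq_of_mul_eq_mul_right hd ((cardq R hR).trans (cardq R' hR').symm)
  let e : Quotient r ≃ Quotient r' := Fintype.equivOfCardEq hq
  let ef : ∀ q : Quotient r, {a // Quotient.mk r a = q} ≃ {a // Quotient.mk r' a = e q} :=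
    fun q => Fintype.equivOfCardEq ((fib R hR q).trans (fib R' hR' (e q)).symm)
  let g : Perm α := (Equiv.sigmaFiberEquiv (Quotient.mk r)).symm.trans
    ((Equiv.sigmaCongr e ef).trans (Equiv.sigmaFiberEquiv (Quotient.mk r')))
  have hg : ∀ a, Quotient.mk r' (g a) = e (Quotient.mk r a) := by
    intro a
    exact (ef (Quotient.mk r a) ⟨a, rfl⟩).2
  refine ⟨g, ?_⟩
  ext ⟨a, b⟩
  obtain ⟨a, rfl⟩ := g.surjective a
  obtain ⟨b, rfl⟩ := g.surjective b
  rw [mem_smul_rel]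
  have h1 : (a, b) ∈ R ↔ Quotient.mk r a = Quotient.mk r b := by rw [Quotient.eq]; rfl
  have h2 : (g a, g b) ∈ R' ↔ Quotient.mk r' (g a) = Quotient.mk r' (g b) := by
    rw [Quotient.eq]; rfl
  rw [h1, h2, hg, hg, e.injective.eq_iff]

lemma eqRels_card {k j : ℕ} (hk : 0 < k) (hne : (eqRels (Fin k) (j + 1)).Nonempty) :
    (k - 1).choose j ≤ (eqRels (Fin k) (j + 1)).card := by
  classical
  obtain ⟨R, hR⟩ := hne
  let a0 : Fin k := ⟨0, hk⟩
  have hc : (Finset.powersetCard j (Finset.univ.erase a0)).card = (k - 1).choose j := by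
    rw [Finset.card_powersetCard, Finset.card_erase_of_mem (Finset.mem_univ _)]; simp
  rw [← hc]
  apply Finset.card_le_card_of_surjOn (fun S => (relClass S a0).erase a0)
  intro B hB
  rw [Finset.mem_coe, Finset.mem_powersetCard] at hB
  have ha0 : a0 ∉ B := fun h => by simpa using hB.1 h
  have hR' := mem_eqRels.mp hR
  obtain ⟨g, hg⟩ := exists_perm_smul_eq (relClass R a0) (insert a0 B)
    (by rw [hR'.2, Finset.card_insert_of_notMem ha0, hB.2])
  obtain ⟨h1, h2⟩ := smul_mem_eqRels hR g
  refine ⟨g • R, h1, ?_⟩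
  have h3 := h2 a0
  rw [hg] at h3
  have h4 : (g a0, a0) ∈ g • R := by
    rw [← mem_relClass, h3]; simp
  have h1' := (mem_eqRels.mp h1).1
  have h5 : relClass (g • R) a0 = relClass (g • R) (g a0) := by
    ext b
    rw [mem_relClass, mem_relClass]
    exact ⟨fun h => h1'.trans h4 h, fun h => h1'.trans (h1'.symm h4) h⟩
  simp only
  rw [h5, h3, Finset.erase_insert ha0]

lemma exists_fixed_rel {k : ℕ} (σ τ : Perm (Fin k))
    (h : IsPretransitive (Subgroup.closure {σ, τ}) (Fin k))
    (h' : ¬ IsPreprimitive (Subgroup.closure {σ, τ}) (Fin k)) :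
    ∃ j ∈ Finset.Icc 1 ((k - 1) / 2), ∃ R ∈ eqRels (Fin k) (j + 1), σ • R = R ∧ τ • R = R := by
  classical
  set G := Subgroup.closure {σ, τ} with hG
  have hσ : σ ∈ G := Subgroup.subset_closure (by simp)
  have hτ : τ ∈ G := Subgroup.subset_closure (by simp)
  obtain ⟨B, hB, hBn⟩ : ∃ B : Set (Fin k), IsBlock G B ∧ ¬ IsTrivialBlock B := by
    by_contra hcon
    push Not at hcon
    exact h' { isTrivialBlock_of_isBlock := fun {B} hB => hcon B hB }
  unfold IsTrivialBlock at hBn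
  push Not at hBn
  obtain ⟨hB1, hB2⟩ := hBn
  obtain ⟨a, ha, a', ha', haa⟩ := hB1
  obtain ⟨b, hb⟩ := (Set.ne_univ_iff_exists_notMem B).mp hB2
  let C : Finset (Fin k) := B.toFinset
  have hC : ∀ x, x ∈ C ↔ x ∈ B := by simp [C]
  have hCblock : ∀ g₁ g₂ : G, ∀ x, x ∈ (g₁ : Perm (Fin k)) • C → x ∈ (g₂ : Perm (Fin k)) • C →
      (g₁ : Perm (Fin k)) • C = (g₂ : Perm (Fin k)) • C := by
    intro g₁ g₂ x h1 h2
    have e : ∀ g : G, (((g : Perm (Fin k)) • C : Finset (Fin k)) : Set (Fin k)) = g • B := by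
      intro g
      rw [Finset.coe_smul_finset]; simp [C]; rfl
    by_contra hne
    have hne' : g₁ • B ≠ g₂ • B := by
      rw [← e, ← e]; exact fun h => hne (Finset.coe_injective h)
    have := hB hne'
    rw [← e, ← e] at this
    exact Set.disjoint_left.mp this h1 h2
  have hcov : ∀ x : Fin k, ∃ g : G, x ∈ (g : Perm (Fin k)) • C := by
    intro x
    obtain ⟨g, hg⟩ := h.exists_smul_eq a x
    exact ⟨g, by rw [← hg]; exact Finset.smul_mem_smul_finset ((hC a).mpr ha)⟩
  have hC2 : 2 ≤ C.card := by
    have : ({a, a'} : Finset (Fin k)) ⊆ C := by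
      intro x hx
      rw [hC]
      simp at hx
      rcases hx with rfl | rfl <;> assumption
    calc 2 = ({a, a'} : Finset (Fin k)).card := (Finset.card_pair haa).symm
      _ ≤ _ := Finset.card_le_card this
  have hCk : 2 * C.card ≤ k := by
    obtain ⟨g, hg⟩ := hcov b
    have hdisj : Disjoint C ((g : Perm (Fin k)) • C) := by
      rw [Finset.disjoint_left]
      intro x hx hx'
      have := hCblock 1 g x (by simpa using hx) hx'
      rw [← this] at hg
      simp at hg
      exact hb ((hC b).mp hg)
    have := Finset.card_union_of_disjoint hdisj
    rw [Finset.card_smul_finset] at this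
    have h3 := Finset.card_le_univ (C ∪ (g : Perm (Fin k)) • C)
    rw [this, Fintype.card_fin] at h3
    omega
  let R : Finset (Fin k × Fin k) := Finset.univ.filter (fun p => ∃ g : G,
    p.1 ∈ (g : Perm (Fin k)) • C ∧ p.2 ∈ (g : Perm (Fin k)) • C)
  have hR : ∀ x y, (x, y) ∈ R ↔ ∃ g : G,
    x ∈ (g : Perm (Fin k)) • C ∧ y ∈ (g : Perm (Fin k)) • C := by simp [R]
  have hfix : ∀ g ∈ G, g • R = R := by
    intro g hg
    apply Finset.eq_of_subset_of_card_le
    · rintro ⟨x, y⟩ hx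
      obtain ⟨x, rfl⟩ := g.surjective x
      obtain ⟨y, rfl⟩ := g.surjective y
      rw [mem_smul_rel, hR] at hx
      rw [hR]
      obtain ⟨g', h1, h2⟩ := hx
      refine ⟨⟨g, hg⟩ * g', ?_, ?_⟩
      · simp only [Subgroup.coe_mul, mul_smul]
        exact Finset.smul_mem_smul_finset h1
      · simp only [Subgroup.coe_mul, mul_smul]
        exact Finset.smul_mem_smul_finset h2
    · rw [Finset.card_smul_finset]
  refine ⟨C.card - 1, by rw [Finset.mem_Icc]; omega, R, ?_, hfix σ hσ, hfix τ hτ⟩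
  rw [mem_eqRels]
  refine ⟨⟨?_, ?_, ?_⟩, ?_⟩
  · intro x
    obtain ⟨g, hg⟩ := hcov x
    exact (hR x x).mpr ⟨g, hg, hg⟩
  · intro x y hxy
    obtain ⟨g, h1, h2⟩ := (hR x y).mp hxy
    exact (hR y x).mpr ⟨g, h2, h1⟩
  · intro x y z hxy hyz
    obtain ⟨g, h1, h2⟩ := (hR x y).mp hxy
    obtain ⟨g', h3, h4⟩ := (hR y z).mp hyz
    rw [← hCblock g g' y h2 h3] at h4
    exact (hR x z).mpr ⟨g, h1, h4⟩
  · intro x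
    obtain ⟨g, hg⟩ := hcov x
    have : relClass R x = (g : Perm (Fin k)) • C := by
      ext y
      rw [mem_relClass, hR]
      constructor
      · rintro ⟨g', h1, h2⟩
        rwa [hCblock g g' x hg h1]
      · intro hy
        exact ⟨g, hg, hy⟩
    rw [this, Finset.card_smul_finset]
    omega

open Classical in
lemma imprimitive_bound (k : ℕ) (hk : 0 < k) :
    ((Finset.univ.filter (fun p : Perm (Fin k) × Perm (Fin k) =>
      IsPretransitive (Subgroup.closure {p.1, p.2}) (Fin k) ∧
      ¬ IsPreprimitive (Subgroup.closure {p.1, p.2}) (Fin k))).card : ℝ) ≤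
    (∑ i ∈ Finset.Icc 1 ((k - 1) / 2), 1 / ((k - 1).choose i : ℝ)) * (k.factorial : ℝ) ^ 2 := by
  have hex : ∀ i : ℕ, ∃ F : Finset (Perm (Fin k) × Perm (Fin k)), i ∈ Finset.Icc 1 ((k - 1) / 2) →
      (∀ p : Perm (Fin k) × Perm (Fin k),
        (∃ A ∈ eqRels (Fin k) (i + 1), p.1 • A = A ∧ p.2 • A = A) → p ∈ F) ∧
      (F.card : ℝ) ≤ (1 / ((k - 1).choose i : ℝ)) * (k.factorial : ℝ) ^ 2 := by
    intro i
    by_cases hi : i ∈ Finset.Icc 1 ((k - 1) / 2)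
    · have hi' := Finset.mem_Icc.mp hi
      obtain ⟨F, h1, h2⟩ := union_stab_exists (G := Perm (Fin k)) (eqRels (Fin k) (i + 1))
        (fun A hA B hB => eqRels_transitive (Nat.succ_pos i) A hA B hB) ((k - 1).choose i)
        (Nat.choose_pos (by omega)) (eqRels_card hk)
      rw [Fintype.card_perm, Fintype.card_fin] at h2
      exact ⟨F, fun _ => ⟨h1, h2⟩⟩
    · exact ⟨∅, fun h => absurd h hi⟩
  choose F hF using hex
  have hsub : (Finset.univ.filter (fun p : Perm (Fin k) × Perm (Fin k) =>
      IsPretransitive (Subgroup.closure {p.1, p.2}) (Fin k) ∧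
      ¬ IsPreprimitive (Subgroup.closure {p.1, p.2}) (Fin k))) ⊆
      (Finset.Icc 1 ((k - 1) / 2)).biUnion F := by
    intro p hp
    rw [Finset.mem_filter] at hp
    obtain ⟨i, hi, hA⟩ := exists_fixed_rel p.1 p.2 hp.2.1 hp.2.2
    rw [Finset.mem_biUnion]
    exact ⟨i, hi, (hF i hi).1 p hA⟩
  have h1 := (Finset.card_le_card hsub).trans Finset.card_biUnion_le
  have h2 : ((Finset.univ.filter (fun p : Perm (Fin k) × Perm (Fin k) =>
      IsPretransitive (Subgroup.closure {p.1, p.2}) (Fin k) ∧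
      ¬ IsPreprimitive (Subgroup.closure {p.1, p.2}) (Fin k))).card : ℝ) ≤
      ∑ i ∈ Finset.Icc 1 ((k - 1) / 2), ((F i).card : ℝ) := by
    exact_mod_cast h1
  refine h2.trans ?_
  rw [Finset.sum_mul]
  exact Finset.sum_le_sum (fun i hi => (hF i hi).2)


section moments
variable {α : Type*} [Fintype α] [DecidableEq α]

lemma card_perm_agree (S : Finset α) (f : Perm α) :
    (Finset.univ.filter (fun σ : Perm α => ∀ a ∈ S, σ a = f a)).card
      = (Fintype.card α - S.card).factorial := by
  have e : (Finset.univ.filter (fun σ : Perm α => ∀ a ∈ S, σ a = f a)).card =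
      (Finset.univ.filter (fun σ : Perm α => ∀ a, ¬ (a ∉ S) → σ a = a)).card := by
    apply Finset.card_bij' (fun σ _ => f⁻¹ * σ) (fun σ _ => f * σ)
    · intro σ hσ
      simp only [Finset.mem_filter, Finset.mem_univ, true_and, not_not] at hσ ⊢
      intro a ha
      rw [Perm.mul_apply, hσ a ha]; simp
    · intro σ hσ
      simp only [Finset.mem_filter, Finset.mem_univ, true_and, not_not] at hσ ⊢
      intro a ha
      rw [Perm.mul_apply, hσ a ha]
    · intro σ _; simp
    · intro σ _; simp
  rw [e, ← Fintype.card_subtype,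
    ← Fintype.card_congr (Equiv.Perm.subtypeEquivSubtypePerm (fun a => a ∉ S)),
    Fintype.card_perm, Fintype.card_subtype_compl]
  simp

/-- The cycles of length `p`. -/
def cyclesOfLen (α : Type*) [Fintype α] [DecidableEq α] (p : ℕ) : Finset (Perm α) :=
  Finset.univ.filter (fun c => c.cycleType = {p})

lemma mem_cyclesOfLen {p : ℕ} (hp : 2 ≤ p) {c : Perm α} :
    c ∈ cyclesOfLen α p ↔ c.IsCycle ∧ c.support.card = p := by
  rw [cyclesOfLen, Finset.mem_filter]
  simp only [Finset.mem_univ, true_and]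
  constructor
  · intro h
    refine ⟨?_, ?_⟩
    · rw [← card_cycleType_eq_one, h]; simp
    · rw [← sum_cycleType, h]; simp
  · rintro ⟨h1, h2⟩
    rw [h1.cycleType, h2]

lemma card_cyclesOfLen {p : ℕ} (hp : 2 ≤ p) (hpα : p ≤ Fintype.card α) :
    (cyclesOfLen α p).card * (p * (Fintype.card α - p).factorial) = (Fintype.card α).factorial := by
  rw [cyclesOfLen, card_of_cycleType_singleton hp hpα, ← Nat.choose_mul_factorial_mul_factorial hpα,
    ← Nat.mul_factorial_pred (by omega : p ≠ 0)]
  ring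

lemma card_cyclesOfLen_subset_le {p : ℕ} (S : Finset α) :
    ((cyclesOfLen α p).filter (fun c => c.support ⊆ S)).card ≤ (cyclesOfLen S p).card := by
  apply Finset.card_le_card_of_surjOn (fun c => ofSubtype c)
  intro c hc
  simp only [Finset.coe_filter, Set.mem_setOf_eq, cyclesOfLen, Finset.mem_univ, true_and,
    Finset.mem_filter] at hc
  have hmem : ∀ x, x ∈ S ↔ c x ∈ S := by
    intro x
    by_cases h : c x = x
    · rw [h]
    · have h1 : x ∈ c.support := by simpa using h
      exact ⟨fun _ => hc.2 (apply_mem_support.mpr h1), fun _ => hc.2 h1⟩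
  have e : ofSubtype (c.subtypePerm (p := fun x => x ∈ S) (fun x => (hmem x).symm)) = c := 
    ofSubtype_subtypePerm _ (fun x hx => hc.2 (by simpa using hx))
  refine ⟨c.subtypePerm (p := fun x => x ∈ S) (fun x => (hmem x).symm), ?_, e⟩
  simp only [cyclesOfLen, Finset.coe_filter, Set.mem_setOf_eq, Finset.mem_univ, true_and]
  rw [← hc.1, ← cycleType_ofSubtype, e]

/-- The cycles of length `p` of `σ`. -/
def cycOf (p : ℕ) (σ : Perm α) : Finset (Perm α) :=
  σ.cycleFactorsFinset.filter (fun c => c.support.card = p)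

/-- The pairs of distinct cycles of lengths `p`, `q` of `σ`. -/
def cycPairs (p q : ℕ) (σ : Perm α) : Finset (Perm α × Perm α) :=
  (cycOf p σ ×ˢ cycOf q σ).filter (fun x => x.1 ≠ x.2)

lemma mem_cycOf {p : ℕ} (hp : 2 ≤ p) {σ c : Perm α} :
    c ∈ cycOf p σ ↔ c ∈ cyclesOfLen α p ∧ ∀ a ∈ c.support, σ a = c a := by
  rw [cycOf, Finset.mem_filter, mem_cyclesOfLen hp, mem_cycleFactorsFinset_iff]
  constructor
  · rintro ⟨⟨h1, h2⟩, h3⟩; exact ⟨⟨h1, h3⟩, fun a ha => (h2 a ha).symm⟩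
  · rintro ⟨⟨h1, h2⟩, h3⟩; exact ⟨⟨h1, fun a ha => (h3 a ha).symm⟩, h2⟩

lemma first_moment {p : ℕ} (hp : 2 ≤ p) (hpα : p ≤ Fintype.card α) :
    (∑ σ : Perm α, (cycOf p σ).card) * p = (Fintype.card α).factorial := by
  have h1 : ∀ σ : Perm α, (cycOf p σ).card =
      ∑ c ∈ cyclesOfLen α p, if (∀ a ∈ c.support, σ a = c a) then 1 else 0 := by
    intro σ
    rw [← Finset.card_filter]
    congr 1
    ext c
    rw [mem_cycOf hp, Finset.mem_filter]
  simp_rw [h1]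
  rw [Finset.sum_comm]
  have h2 : ∀ c ∈ cyclesOfLen α p,
      (∑ σ : Perm α, if (∀ a ∈ c.support, σ a = c a) then 1 else 0) =
      (Fintype.card α - p).factorial := by
    intro c hc
    rw [← Finset.card_filter, card_perm_agree, ((mem_cyclesOfLen hp).mp hc).2]
  rw [Finset.sum_congr rfl h2, ← card_cyclesOfLen hp hpα]
  simp; ring

lemma second_moment {p q : ℕ} (hp : 2 ≤ p) (hq : 2 ≤ q) :
    (∑ σ : Perm α, (cycPairs p q σ).card) * (p * q) ≤ (Fintype.card α).factorial := by
  -- pairs of disjoint cycles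
  let D : Finset (Perm α × Perm α) := (cyclesOfLen α p ×ˢ cyclesOfLen α q).filter
    (fun x => x.2.support ⊆ x.1.supportᶜ)
  have h1 : ∀ σ : Perm α, (cycPairs p q σ).card ≤
      ∑ x ∈ D, if (∀ a ∈ x.1.support ∪ x.2.support, σ a = (x.1 * x.2) a) then 1 else 0 := by
    intro σ
    rw [← Finset.card_filter]
    apply Finset.card_le_card
    rintro ⟨c, c'⟩ hx
    rw [cycPairs, Finset.mem_filter, Finset.mem_product, mem_cycOf hp, mem_cycOf hq] at hx
    obtain ⟨⟨⟨hc1, hc2⟩, hc'1, hc'2⟩, hne⟩ := hx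
    simp only at hc1 hc2 hc'1 hc'2 hne
    have m1 := (mem_cyclesOfLen hp).mp hc1
    have m2 := (mem_cyclesOfLen hq).mp hc'1
    have hdis : c.Disjoint c' := by
      apply cycleFactorsFinset_pairwise_disjoint σ _ _ hne
      · exact mem_cycleFactorsFinset_iff.mpr ⟨m1.1, fun a ha => (hc2 a ha).symm⟩
      · exact mem_cycleFactorsFinset_iff.mpr ⟨m2.1, fun a ha => (hc'2 a ha).symm⟩
    have hds := hdis.disjoint_support
    rw [Finset.mem_filter, Finset.mem_filter, Finset.mem_product]
    refine ⟨⟨⟨hc1, hc'1⟩, ?_⟩, ?_⟩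
    · intro a ha
      rw [Finset.mem_compl]
      exact fun h => Finset.disjoint_left.mp hds h ha
    · intro a ha
      rw [Finset.mem_union] at ha
      rw [Perm.mul_apply]
      rcases ha with ha | ha
      · have : c' a = a := by
          rw [← notMem_support]; exact Finset.disjoint_left.mp hds ha
        simp only at this ⊢
        rw [this]; exact hc2 a ha
      · have h3 : c' a ∈ c'.support := apply_mem_support.mpr ha
        have : c (c' a) = c' a := by
          rw [← notMem_support]; exact Finset.disjoint_right.mp hds h3
        simp only at this ⊢
        rw [this]; exact hc'2 a ha
  have h2 : ∀ x ∈ D, (∑ σ : Perm α,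
      if (∀ a ∈ x.1.support ∪ x.2.support, σ a = (x.1 * x.2) a) then 1 else 0) =
      (Fintype.card α - p - q).factorial := by
    rintro ⟨c, c'⟩ hx
    rw [Finset.mem_filter, Finset.mem_product] at hx
    have m1 := (mem_cyclesOfLen hp).mp hx.1.1
    have m2 := (mem_cyclesOfLen hq).mp hx.1.2
    rw [← Finset.card_filter, card_perm_agree, Finset.card_union_of_disjoint, m1.2, m2.2,
      Nat.sub_sub]
    rw [Finset.disjoint_right]
    intro a ha
    exact Finset.mem_compl.mp (hx.2 ha)
  have h3 : (∑ σ : Perm α, (cycPairs p q σ).card) ≤ D.card * (Fintype.card α - p - q).factorial := by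
    refine (Finset.sum_le_sum (fun σ _ => h1 σ)).trans ?_
    rw [Finset.sum_comm, Finset.sum_congr rfl h2]
    simp
  by_cases hle : p + q ≤ Fintype.card α
  swap
  · have hD : D = ∅ := by
      rw [Finset.eq_empty_iff_forall_notMem]
      rintro ⟨c, c'⟩ hx
      rw [Finset.mem_filter, Finset.mem_product] at hx
      have m1 := (mem_cyclesOfLen hp).mp hx.1.1
      have m2 := (mem_cyclesOfLen hq).mp hx.1.2
      have := Finset.card_le_card hx.2
      rw [Finset.card_compl] at this
      simp only at this m1 m2
      omega
    rw [hD] at h3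
    simp only [Finset.card_empty, zero_mul, Nat.le_zero] at h3
    rw [h3]; simp
  have h4 : D.card * (q * (Fintype.card α - p - q).factorial) ≤
      (cyclesOfLen α p).card * (Fintype.card α - p).factorial := by
    have e1 : D.card = ∑ c ∈ cyclesOfLen α p,
        ((cyclesOfLen α q).filter (fun c' => c'.support ⊆ c.supportᶜ)).card := by
      rw [Finset.card_filter, Finset.sum_product]
      apply Finset.sum_congr rfl
      intro c _
      rw [Finset.card_filter]
    rw [e1, Finset.sum_mul, ← smul_eq_mul (cyclesOfLen α p).card, ← Finset.sum_const]
    apply Finset.sum_le_sum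
    intro c hc
    have m1 := (mem_cyclesOfLen hp).mp hc
    have hcc : Fintype.card (c.supportᶜ : Finset α) = Fintype.card α - p := by
      rw [Fintype.card_coe, Finset.card_compl, m1.2]
    have := card_cyclesOfLen (α := (c.supportᶜ : Finset α)) hq (by rw [hcc]; omega)
    rw [hcc] at this
    rw [← this]
    exact Nat.mul_le_mul_right _ (card_cyclesOfLen_subset_le _)
  calc _ ≤ D.card * (Fintype.card α - p - q).factorial * (p * q) := Nat.mul_le_mul_right _ h3
    _ = D.card * (q * (Fintype.card α - p - q).factorial) * p := by ring
    _ ≤ (cyclesOfLen α p).card * (Fintype.card α - p).factorial * p := Nat.mul_le_mul_right _ h4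
    _ = (Fintype.card α).factorial := by
      rw [← card_cyclesOfLen hp (by omega)]; ring

end moments

section badcount
variable {α : Type*} [Fintype α] [DecidableEq α]

lemma first_moment_real {p : ℕ} (hp : 2 ≤ p) (hpα : p ≤ Fintype.card α) :
    ∑ σ : Perm α, ((cycOf p σ).card : ℝ) = ((Fintype.card α).factorial : ℝ) * (1 / p) := by
  have h := first_moment (α := α) hp hpα
  have hp0 : (p : ℝ) ≠ 0 := by positivity
  rw [mul_one_div, eq_div_iff hp0]
  exact_mod_cast h

lemma second_moment_real {p q : ℕ} (hp : 2 ≤ p) (hq : 2 ≤ q) :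
    ∑ σ : Perm α, ((cycPairs p q σ).card : ℝ)
      ≤ ((Fintype.card α).factorial : ℝ) * (1 / p * (1 / q)) := by
  have h := second_moment (α := α) hp hq
  have hp0 : (0 : ℝ) < p * q := by positivity
  rw [one_div_mul_one_div, mul_one_div, le_div_iff₀ hp0]
  exact_mod_cast h

lemma card_cycOf_mul_le (p q : ℕ) (σ : Perm α) :
    ((cycOf p σ).card : ℝ) * (cycOf q σ).card
      ≤ (cycPairs p q σ).card + if p = q then ((cycOf p σ).card : ℝ) else 0 := by
  have h1 : (cycOf p σ ×ˢ cycOf q σ) ⊆ cycPairs p q σ ∪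
      (if p = q then (cycOf p σ).image (fun c => (c, c)) else ∅) := by
    rintro ⟨a, b⟩ hab
    rw [Finset.mem_union]
    by_cases hne : a = b
    · right
      subst hne
      rw [Finset.mem_product] at hab
      have ha := (Finset.mem_filter.1 hab.1).2
      have hb := (Finset.mem_filter.1 hab.2).2
      simp only at ha hb
      rw [if_pos (ha.symm.trans hb)]
      exact Finset.mem_image.2 ⟨a, hab.1, rfl⟩
    · left
      exact Finset.mem_filter.2 ⟨hab, hne⟩
  have h2 := (Finset.card_le_card h1).trans (Finset.card_union_le _ _)
  rw [Finset.card_product] at h2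
  split_ifs with hpq
  · rw [if_pos hpq] at h2
    have h3 := h2.trans (Nat.add_le_add_left Finset.card_image_le _)
    exact_mod_cast h3
  · rw [if_neg hpq] at h2
    simp only [Finset.card_empty, add_zero] at h2 ⊢
    exact_mod_cast h2

lemma bad_no_cycle (P : Finset ℕ) (hP : ∀ p ∈ P, 2 ≤ p ∧ p ≤ Fintype.card α)
    (hμ : 0 < ∑ p ∈ P, (1 : ℝ) / p) (F : Finset (Perm α))
    (hF : ∀ σ ∈ F, ∀ p ∈ P, cycOf p σ = ∅) :
    (F.card : ℝ) ≤ ((Fintype.card α).factorial : ℝ) * (1 / ∑ p ∈ P, (1 : ℝ) / p) := by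
  set μ := ∑ p ∈ P, (1 : ℝ) / p with hμd
  set N : ℝ := ((Fintype.card α).factorial : ℝ) with hN
  let X : Perm α → ℝ := fun σ => ∑ p ∈ P, ((cycOf p σ).card : ℝ)
  have m1 : ∑ σ, X σ = N * μ := by
    simp only [X]
    rw [Finset.sum_comm, hμd, Finset.mul_sum]
    exact Finset.sum_congr rfl fun p hp => first_moment_real (hP p hp).1 (hP p hp).2
  have m2 : ∑ σ, X σ ^ 2 ≤ N * (μ ^ 2 + μ) := by
    calc ∑ σ, X σ ^ 2 = ∑ σ, ∑ p ∈ P, ∑ q ∈ P, ((cycOf p σ).card : ℝ) * (cycOf q σ).card := by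
          refine Finset.sum_congr rfl fun σ _ => ?_
          rw [sq, Finset.sum_mul_sum]
      _ ≤ ∑ σ : Perm α, ∑ p ∈ P, ∑ q ∈ P, (((cycPairs p q σ).card : ℝ) +
            if p = q then ((cycOf p σ).card : ℝ) else 0) :=
          Finset.sum_le_sum fun σ _ => Finset.sum_le_sum fun p _ => Finset.sum_le_sum fun q _ =>
            card_cycOf_mul_le p q σ
      _ = (∑ p ∈ P, ∑ q ∈ P, ∑ σ : Perm α, ((cycPairs p q σ).card : ℝ)) + ∑ σ, X σ := by
          simp only [Finset.sum_add_distrib, X]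
          congr 1
          · rw [Finset.sum_comm]
            exact Finset.sum_congr rfl fun p _ => Finset.sum_comm
          · refine Finset.sum_congr rfl fun σ _ => Finset.sum_congr rfl fun p hp => ?_
            rw [Finset.sum_ite_eq, if_pos hp]
      _ ≤ (∑ p ∈ P, ∑ q ∈ P, N * (1 / p * (1 / q))) + N * μ := by
          rw [m1]
          gcongr with p hp q hq
          exact second_moment_real (hP p hp).1 (hP q hq).1
      _ = N * (μ ^ 2 + μ) := by
          rw [mul_add, sq, hμd, Finset.sum_mul_sum, Finset.mul_sum]
          simp only [Finset.mul_sum]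
  have m3 : ∑ σ : Perm α, (X σ - μ) ^ 2 ≤ N * μ := by
    have : ∑ σ : Perm α, (X σ - μ) ^ 2 = ∑ σ, X σ ^ 2 - 2 * μ * ∑ σ, X σ + N * μ ^ 2 := by
      simp only [sub_sq, Finset.sum_add_distrib, Finset.sum_sub_distrib, Finset.sum_const,
        Finset.card_univ, Fintype.card_perm, nsmul_eq_mul, Finset.mul_sum]
      congr 2
      exact Finset.sum_congr rfl fun σ _ => by ring
    rw [this, m1]
    nlinarith
  have m4 : (F.card : ℝ) * μ ^ 2 ≤ ∑ σ : Perm α, (X σ - μ) ^ 2 := by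
    calc (F.card : ℝ) * μ ^ 2 = ∑ σ ∈ F, (X σ - μ) ^ 2 := by
          rw [← nsmul_eq_mul, ← Finset.sum_const]
          refine Finset.sum_congr rfl fun σ hσ => ?_
          have : X σ = 0 := Finset.sum_eq_zero fun p hp => by rw [hF σ hσ p hp]; simp
          rw [this]; ring
      _ ≤ _ := Finset.sum_le_sum_of_subset_of_nonneg (Finset.subset_univ _)
          fun _ _ _ => sq_nonneg _
  rw [mul_one_div, le_div_iff₀ hμ]
  have : (F.card : ℝ) * μ * μ ≤ N * μ := by nlinarith
  exact le_of_mul_le_mul_right this hμ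

lemma bad_divides (P : Finset ℕ) (hP : ∀ p ∈ P, 2 ≤ p ∧ p ≤ Fintype.card α) (F : Finset (Perm α))
    (hF : ∀ σ ∈ F, ∃ p ∈ P, ∃ c ∈ σ.cycleFactorsFinset, c.support.card = p ∧
      ∃ c' ∈ σ.cycleFactorsFinset, c' ≠ c ∧ p ∣ c'.support.card) :
    (F.card : ℝ) ≤ ((Fintype.card α).factorial : ℝ) *
      ((∑ p ∈ P, 1 / (p : ℝ) ^ 2) * ∑ j ∈ Finset.Icc 1 (Fintype.card α), 1 / (j : ℝ)) := by
  have h1 : ∀ σ ∈ F, (1 : ℝ) ≤ ∑ p ∈ P, ∑ j ∈ Finset.Icc 1 (Fintype.card α),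
      ((cycPairs p (p * j) σ).card : ℝ) := by
    intro σ hσ
    obtain ⟨p, hp, c, hc, hcp, c', hc', hne, j, hj⟩ := hF σ hσ
    have hc'c := (mem_cycleFactorsFinset_iff.1 hc').1
    have hj1 : 1 ≤ j := by
      rcases Nat.eq_zero_or_pos j with h | h
      · rw [h, mul_zero] at hj
        have := hc'c.two_le_card_support
        omega
      · exact h
    have hj2 : j ≤ Fintype.card α := by
      have h2 : c'.support.card ≤ Fintype.card α := Finset.card_le_univ _
      have := (hP p hp).1
      nlinarith
    have hmem : (c, c') ∈ cycPairs p (p * j) σ := by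
      have a1 : c ∈ cycOf p σ := by rw [cycOf, Finset.mem_filter]; exact ⟨hc, hcp⟩
      have a2 : c' ∈ cycOf (p * j) σ := by rw [cycOf, Finset.mem_filter]; exact ⟨hc', hj⟩
      rw [cycPairs, Finset.mem_filter, Finset.mem_product]
      exact ⟨⟨a1, a2⟩, hne.symm⟩
    have hpos : (1 : ℝ) ≤ ((cycPairs p (p * j) σ).card : ℝ) := by
      have := Finset.card_pos.2 ⟨_, hmem⟩
      exact_mod_cast this
    let g : ℕ → ℕ → ℝ := fun p j => ((cycPairs p (p * j) σ).card : ℝ)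
    have hg : ∀ p j, 0 ≤ g p j := fun p j => Nat.cast_nonneg _
    have s1 : g p j ≤ ∑ j ∈ Finset.Icc 1 (Fintype.card α), g p j :=
      Finset.single_le_sum (fun j _ => hg p j) (Finset.mem_Icc.2 ⟨hj1, hj2⟩)
    have s2 : ∑ j ∈ Finset.Icc 1 (Fintype.card α), g p j ≤
        ∑ p ∈ P, ∑ j ∈ Finset.Icc 1 (Fintype.card α), g p j :=
      Finset.single_le_sum (f := fun p => ∑ j ∈ Finset.Icc 1 (Fintype.card α), g p j)
        (fun p _ => Finset.sum_nonneg fun j _ => hg p j) hp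
    exact hpos.trans (s1.trans s2)
  calc (F.card : ℝ) = ∑ σ ∈ F, (1 : ℝ) := by simp
    _ ≤ ∑ σ ∈ F, ∑ p ∈ P, ∑ j ∈ Finset.Icc 1 (Fintype.card α),
        ((cycPairs p (p * j) σ).card : ℝ) := Finset.sum_le_sum h1
    _ ≤ ∑ σ : Perm α, ∑ p ∈ P, ∑ j ∈ Finset.Icc 1 (Fintype.card α),
        ((cycPairs p (p * j) σ).card : ℝ) :=
        Finset.sum_le_sum_of_subset_of_nonneg (Finset.subset_univ _)
          fun _ _ _ => by positivity
    _ = ∑ p ∈ P, ∑ j ∈ Finset.Icc 1 (Fintype.card α), ∑ σ : Perm α,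
        ((cycPairs p (p * j) σ).card : ℝ) := by
        rw [Finset.sum_comm]
        exact Finset.sum_congr rfl fun p _ => Finset.sum_comm
    _ ≤ ∑ p ∈ P, ∑ j ∈ Finset.Icc 1 (Fintype.card α),
        ((Fintype.card α).factorial : ℝ) * (1 / (p : ℝ) ^ 2 * (1 / (j : ℝ))) := by
        refine Finset.sum_le_sum fun p hp => Finset.sum_le_sum fun j hj => ?_
        have h2 := (hP p hp).1
        have h3 := (Finset.mem_Icc.1 hj).1
        refine (second_moment_real h2 (by nlinarith)).trans (le_of_eq ?_)
        push_cast
        rw [one_div_mul_one_div, one_div_mul_one_div]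
        congr 2
        ring
    _ = _ := by
        rw [Finset.sum_mul_sum, Finset.mul_sum]
        simp only [Finset.mul_sum]

lemma bad_total (P : Finset ℕ) (hP : ∀ p ∈ P, 2 ≤ p ∧ p ≤ Fintype.card α)
    (hμ : 0 < ∑ p ∈ P, (1 : ℝ) / p) (F : Finset (Perm α))
    (hF : ∀ σ ∈ F, ∀ c ∈ σ.cycleFactorsFinset, c.support.card ∈ P →
      ∃ c' ∈ σ.cycleFactorsFinset, c' ≠ c ∧ c.support.card ∣ c'.support.card) :
    (F.card : ℝ) ≤ ((Fintype.card α).factorial : ℝ) * (1 / ∑ p ∈ P, (1 : ℝ) / p +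
      (∑ p ∈ P, 1 / (p : ℝ) ^ 2) * ∑ j ∈ Finset.Icc 1 (Fintype.card α), 1 / (j : ℝ)) := by
  have h := Finset.card_filter_add_card_filter_not (s := F)
    (fun σ : Perm α => ∀ p ∈ P, cycOf p σ = ∅)
  have e1 := bad_no_cycle P hP hμ (F.filter (fun σ : Perm α => ∀ p ∈ P, cycOf p σ = ∅))
    (fun σ hσ => (Finset.mem_filter.1 hσ).2)
  have e2 := bad_divides P hP (F.filter (fun σ : Perm α => ¬ ∀ p ∈ P, cycOf p σ = ∅)) (by
    intro σ hσ
    obtain ⟨hσF, hn⟩ := Finset.mem_filter.1 hσ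
    push Not at hn
    obtain ⟨p, hp, c, hc⟩ := hn
    obtain ⟨hc1, hc2⟩ := Finset.mem_filter.1 hc
    obtain ⟨c', h1, h2, h3⟩ := hF σ hσF c hc1 (hc2 ▸ hp)
    exact ⟨p, hp, c, hc1, hc2, c', h1, h2, hc2 ▸ h3⟩)
  rw [mul_add, ← h]
  push_cast
  exact add_le_add e1 e2

end badcount


section primes

/-- The Mertens product over primes up to `n`. -/
noncomputable def mertensW (n : ℕ) : ℝ := ∏ p ∈ Nat.primesBelow (n + 1), (1 - (p : ℝ)⁻¹)⁻¹

lemma mertens_factor_ge_one {p : ℕ} (hp : p.Prime) : (1 : ℝ) ≤ (1 - (p : ℝ)⁻¹)⁻¹ := by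
  have h2 : (2 : ℝ) ≤ p := by exact_mod_cast hp.two_le
  have h3 : (p : ℝ)⁻¹ ≤ 2⁻¹ := inv_anti₀ (by norm_num) h2
  have h4 : (0 : ℝ) < (p : ℝ)⁻¹ := by positivity
  rw [one_le_inv₀ (by linarith)]
  linarith

lemma harmonic_le_mertensW (n : ℕ) : ∑ j ∈ Finset.Icc 1 n, (1 : ℝ) / j ≤ mertensW n := by
  let f : ℕ →* ℝ := ((invMonoidWithZeroHom : ℝ →*₀ ℝ).comp (Nat.castRingHom ℝ).toMonoidWithZeroHom).toMonoidHom
  have hf : ∀ n : ℕ, f n = (n : ℝ)⁻¹ := fun n => rfl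
  have h := (EulerProduct.summable_and_hasSum_smoothNumbers_prod_primesBelow_geometric (f := f)
    (fun {p} hp => by
      rw [hf, norm_inv, Real.norm_natCast]
      exact inv_lt_one_of_one_lt₀ (by exact_mod_cast hp.one_lt)) (n + 1)).2
  have hm : ∀ j ∈ Finset.Icc 1 n, j ∈ Nat.smoothNumbers (n + 1) := by
    intro j hj
    rw [Finset.mem_Icc] at hj
    exact Nat.mem_smoothNumbers_of_lt (by omega) (by omega)
  have h2 := sum_le_hasSum ((Finset.Icc 1 n).attach.image (fun j => (⟨j.1, hm j.1 j.2⟩ :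
    Nat.smoothNumbers (n + 1)))) (fun i _ => by rw [hf]; positivity) h
  rw [Finset.sum_image (by
    intro a _ b _ hab
    have := congrArg Subtype.val hab
    exact Subtype.ext this)] at h2
  simp only [hf] at h2
  rw [Finset.sum_attach (Finset.Icc 1 n) (fun j => (j : ℝ)⁻¹)] at h2
  simpa [mertensW] using h2

lemma mertensW_pos (n : ℕ) : 0 < mertensW n :=
  Finset.prod_pos fun p hp => lt_of_lt_of_le one_pos
    (mertens_factor_ge_one (Nat.prime_of_mem_primesBelow hp))

lemma mertensW_succ_le (n : ℕ) (hn : 1 ≤ n) :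
    mertensW (n + 1) ≤ mertensW n * ((n + 1) / n) := by
  have h0 : (0 : ℝ) < n := by exact_mod_cast hn
  have hW := mertensW_pos n
  unfold mertensW at *
  rw [Nat.primesBelow_succ (n + 1)]
  split_ifs with h
  · rw [Finset.prod_insert (by simp [Nat.mem_primesBelow])]
    apply le_of_eq
    rw [mul_comm]
    congr 1
    push_cast
    rw [inv_eq_one_div, inv_eq_one_div]
    have h1 : (1 : ℝ) - 1 / (n + 1) = n / (n + 1) := by field_simp; ring
    rw [h1, one_div_div]
  · have : (1 : ℝ) ≤ (n + 1) / n := by rw [le_div_iff₀ h0]; linarith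
    nlinarith

lemma mertensW_succ_of_even (m : ℕ) (hm : 1 ≤ m) : mertensW (2 * m + 2) = mertensW (2 * m + 1) := by
  unfold mertensW
  rw [Nat.primesBelow_succ (2 * m + 2), if_neg]
  intro h
  have := h.eq_one_or_self_of_dvd 2 ⟨m + 1, by ring⟩
  omega

lemma mertensW_sq_le (m : ℕ) (hm : 1 ≤ m) : mertensW (2 * m) ^ 2 ≤ 4 * (2 * m - 1) := by
  induction m, hm using Nat.le_induction with
  | base =>
    have : mertensW 2 = 2 := by
      unfold mertensW
      rw [show Nat.primesBelow (2 + 1) = {2} by decide]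
      norm_num
    norm_num [this]
  | succ m hm ih =>
    have h1 := mertensW_succ_le (2 * m) (by omega)
    rw [show 2 * (m + 1) = 2 * m + 2 by ring, mertensW_succ_of_even m hm]
    have hm' : (1 : ℝ) ≤ m := by exact_mod_cast hm
    push_cast at h1 ⊢
    have hp := mertensW_pos (2 * m + 1)
    calc mertensW (2 * m + 1) ^ 2 ≤ (mertensW (2 * m) * ((2 * m + 1) / (2 * m))) ^ 2 := by gcongr
      _ = mertensW (2 * m) ^ 2 * ((2 * m + 1) / (2 * m)) ^ 2 := by ring
      _ ≤ 4 * (2 * m - 1) * ((2 * m + 1) / (2 * m)) ^ 2 := by gcongr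
      _ ≤ 4 * (2 * (m + 1) - 1) := by
        rw [div_pow, mul_div_assoc', div_le_iff₀ (by positivity)]
        nlinarith

/-- primes in `(a, b]` -/
def primesIoc (a b : ℕ) : Finset ℕ := (Finset.Ioc a b).filter Nat.Prime

lemma mertensW_le_mul (a b : ℕ) :
    mertensW b ≤ mertensW a * Real.exp (2 * ∑ p ∈ primesIoc a b, (1 : ℝ) / p) := by
  have h1 : mertensW b ≤ mertensW a * ∏ p ∈ primesIoc a b, (1 - (p : ℝ)⁻¹)⁻¹ := by
    unfold mertensW
    have hd : Disjoint (Nat.primesBelow (a + 1)) (primesIoc a b) := by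
      rw [Finset.disjoint_left]
      intro p hp hq
      rw [Nat.mem_primesBelow] at hp
      rw [primesIoc, Finset.mem_filter, Finset.mem_Ioc] at hq
      omega
    rw [← Finset.prod_union hd]
    have hpr : ∀ p ∈ Nat.primesBelow (a + 1) ∪ primesIoc a b, p.Prime := by
      intro p hp
      rw [Finset.mem_union] at hp
      rcases hp with hp | hp
      · exact Nat.prime_of_mem_primesBelow hp
      · exact (Finset.mem_filter.1 hp).2
    have hs : Nat.primesBelow (b + 1) ⊆ Nat.primesBelow (a + 1) ∪ primesIoc a b := by
      intro p hp
      rw [Nat.mem_primesBelow] at hp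
      rw [Finset.mem_union, Nat.mem_primesBelow, primesIoc, Finset.mem_filter, Finset.mem_Ioc]
      rcases le_or_gt p a with h | h
      · left; exact ⟨by omega, hp.2⟩
      · right; exact ⟨⟨h, by omega⟩, hp.2⟩
    exact Finset.prod_le_prod_of_subset_of_one_le hs
      (fun p hp => zero_le_one.trans (mertens_factor_ge_one (hpr p (hs hp))))
      (fun p hp _ => mertens_factor_ge_one (hpr p hp))
  refine h1.trans (mul_le_mul_of_nonneg_left ?_ (mertensW_pos a).le)
  rw [Finset.mul_sum, Real.exp_sum]
  have hpr : ∀ p ∈ primesIoc a b, p.Prime := fun p hp => (Finset.mem_filter.1 hp).2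
  refine Finset.prod_le_prod (fun p hp => zero_le_one.trans (mertens_factor_ge_one (hpr p hp)))
    fun p hp => ?_
  have h2 : (2 : ℝ) ≤ p := by exact_mod_cast (hpr p hp).two_le
  have h3 := Real.add_one_le_exp (2 * (1 / (p : ℝ)))
  refine le_trans ?_ h3
  have h4 : (1 : ℝ) - (p : ℝ)⁻¹ = (p - 1) / p := by field_simp
  rw [h4, inv_div, div_le_iff₀ (by linarith)]
  have h5 : (2 * (1 / (p : ℝ)) + 1) * (p - 1) - p = 1 - 2 / p := by field_simp; ring
  have h6 : 2 / (p : ℝ) ≤ 1 := by rw [div_le_one (by linarith)]; exact h2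
  linarith

lemma sum_inv_sq_le (a b : ℕ) (ha : 1 ≤ a) :
    ∑ p ∈ primesIoc a b, 1 / (p : ℝ) ^ 2 ≤ 1 / (a : ℝ) := by
  rcases le_or_gt a b with hab | hab
  · have h1 : ∑ p ∈ Finset.Ioc a b, 1 / (p : ℝ) ^ 2 ≤ 1 / (a : ℝ) - 1 / (b : ℝ) := by
      induction b, hab using Nat.le_induction with
      | base => simp
      | succ b hb ih =>
        rw [Finset.sum_Ioc_succ_top (by omega)]
        have hb' : (1 : ℝ) ≤ b := by exact_mod_cast ha.trans hb
        have : 1 / ((b + 1 : ℕ) : ℝ) ^ 2 ≤ 1 / b - 1 / ((b + 1 : ℕ) : ℝ) := by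
          push_cast
          rw [div_sub_div _ _ (by positivity) (by positivity), div_le_div_iff₀ (by positivity)
            (by positivity)]
          nlinarith
        linarith
    have h2 : ∑ p ∈ primesIoc a b, 1 / (p : ℝ) ^ 2 ≤ ∑ p ∈ Finset.Ioc a b, 1 / (p : ℝ) ^ 2 :=
      Finset.sum_le_sum_of_subset_of_nonneg (Finset.filter_subset _ _) fun _ _ _ => by positivity
    have h3 : (0 : ℝ) ≤ 1 / b := by positivity
    linarith
  · rw [primesIoc, Finset.Ioc_eq_empty (by omega)]
    simp

/-- The lower threshold for the primes used. -/
noncomputable def thr (k : ℕ) : ℕ := ⌊(√(Real.log k)) ^ 3⌋₊ + 1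

/-- The primes used for permutations of `k` points. -/
noncomputable def goodPrimes (k : ℕ) : Finset ℕ := primesIoc (2 * thr k) (k / 2)

lemma tendsto_sqrt_log : Filter.Tendsto (fun k : ℕ => √(Real.log k)) Filter.atTop Filter.atTop :=
  Real.tendsto_sqrt_atTop.comp (Real.tendsto_log_atTop.comp tendsto_natCast_atTop_atTop)

lemma mu_ge (k : ℕ) (hk : 2 ≤ √(Real.log k)) :
    Real.log (√(Real.log k) / 64) / 4 ≤ ∑ p ∈ goodPrimes k, (1 : ℝ) / p := by
  set s := √(Real.log k) with hs
  set μ := ∑ p ∈ goodPrimes k, (1 : ℝ) / p with hμ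
  have hs2 : s ^ 2 = Real.log k := Real.sq_sqrt (by
    by_contra h
    rw [hs, Real.sqrt_eq_zero_of_nonpos (by linarith)] at hk
    norm_num at hk)
  have hk0 : (0 : ℝ) < k := by
    rcases Nat.eq_zero_or_pos k with h | h
    · rw [h] at hs2; simp at hs2; rw [hs2] at hk; norm_num at hk
    · exact_mod_cast h
  have e1 : s ^ 2 - 1 ≤ mertensW (k / 2) := by
    have h1 := log_add_one_le_harmonic (k / 2)
    have h2 := harmonic_le_mertensW (k / 2)
    have h3 : (harmonic (k / 2) : ℝ) = ∑ j ∈ Finset.Icc 1 (k / 2), (1 : ℝ) / j := by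
      rw [harmonic_eq_sum_Icc]; push_cast; simp
    have h4 : Real.log (k / 2) ≤ Real.log ((k / 2 + 1 : ℕ) : ℝ) := by
      apply Real.log_le_log (by positivity)
      have : k ≤ 2 * (k / 2 + 1) := by omega
      have : (k : ℝ) ≤ 2 * ((k / 2 + 1 : ℕ) : ℝ) := by exact_mod_cast this
      linarith
    rw [Real.log_div hk0.ne' (by norm_num)] at h4
    have h5 : Real.log 2 ≤ 1 := by linarith [Real.log_two_lt_d9]
    linarith
  have e2 := mertensW_sq_le (thr k) (by unfold thr; omega)
  have e3 : ((thr k : ℕ) : ℝ) ≤ s ^ 3 + 1 := by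
    unfold thr
    push_cast
    have := Nat.floor_le (a := s ^ 3) (by positivity)
    linarith
  have e4 := mertensW_le_mul (2 * thr k) (k / 2)
  have e5 : s / 64 ≤ Real.exp (4 * μ) := by
    have hW := mertensW_pos (2 * thr k)
    have f1 : (s ^ 2 - 1) ^ 2 ≤ (mertensW (2 * thr k) * Real.exp (2 * μ)) ^ 2 := by
      apply pow_le_pow_left₀ (by nlinarith) (e1.trans e4)
    have f2 : (mertensW (2 * thr k) * Real.exp (2 * μ)) ^ 2
        ≤ (8 * (s ^ 3 + 1)) * Real.exp (4 * μ) := by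
      rw [mul_pow, ← Real.exp_nat_mul]
      have : ((2 : ℕ) : ℝ) * (2 * μ) = 4 * μ := by push_cast; ring
      rw [this]
      apply mul_le_mul_of_nonneg_right _ (Real.exp_pos _).le
      linarith
    have f3 : s ^ 4 / 4 ≤ (s ^ 2 - 1) ^ 2 := by
      have : s ^ 2 / 2 ≤ s ^ 2 - 1 := by nlinarith
      calc s ^ 4 / 4 = (s ^ 2 / 2) ^ 2 := by ring
        _ ≤ _ := by gcongr
    have f4 : (8 * (s ^ 3 + 1)) * Real.exp (4 * μ) ≤ 16 * s ^ 3 * Real.exp (4 * μ) := by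
      have : (1 : ℝ) ≤ s ^ 3 := one_le_pow₀ (by linarith)
      exact mul_le_mul_of_nonneg_right (by linarith) (Real.exp_pos _).le
    have f5 : s ^ 3 * (s / 64) ≤ s ^ 3 * Real.exp (4 * μ) := by nlinarith
    exact le_of_mul_le_mul_left f5 (by positivity)
  have e6 : Real.log (s / 64) ≤ 4 * μ := by
    rw [Real.log_le_iff_le_exp (by positivity)]
    exact e5
  linarith

lemma mu_tendsto : Filter.Tendsto (fun k : ℕ => ∑ p ∈ goodPrimes k, (1 : ℝ) / p)
    Filter.atTop Filter.atTop := by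
  refine Filter.tendsto_atTop_mono' _ (f₁ := fun k : ℕ => Real.log (√(Real.log k) / 64) / 4) ?_ ?_
  · filter_upwards [tendsto_sqrt_log.eventually_ge_atTop 2] with k hk using mu_ge k hk
  · exact (Real.tendsto_log_atTop.comp (tendsto_sqrt_log.atTop_div_const (by norm_num))).atTop_div_const
      (by norm_num)

lemma sq_bound (k : ℕ) (hk : 2 ≤ √(Real.log k)) :
    (∑ p ∈ goodPrimes k, 1 / (p : ℝ) ^ 2) * ∑ j ∈ Finset.Icc 1 k, 1 / (j : ℝ)
      ≤ 1 / √(Real.log k) := by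
  set s := √(Real.log k) with hs
  have hs2 : s ^ 2 = Real.log k := Real.sq_sqrt (by
    by_contra h
    rw [hs, Real.sqrt_eq_zero_of_nonpos (by linarith)] at hk
    norm_num at hk)
  have h1 := sum_inv_sq_le (2 * thr k) (k / 2) (by unfold thr; omega)
  have h2 : ∑ j ∈ Finset.Icc 1 k, 1 / (j : ℝ) ≤ 1 + s ^ 2 := by
    have := harmonic_le_one_add_log k
    have h3 : (harmonic k : ℝ) = ∑ j ∈ Finset.Icc 1 k, (1 : ℝ) / j := by
      rw [harmonic_eq_sum_Icc]; push_cast; simp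
    rw [hs2, ← h3]; exact this
  have h3 : s ^ 3 ≤ ((thr k : ℕ) : ℝ) := by
    unfold thr
    push_cast
    exact (Nat.lt_floor_add_one _).le
  have h4 : (1 : ℝ) / ((2 * thr k : ℕ) : ℝ) ≤ 1 / (2 * s ^ 3) := by
    push_cast
    apply one_div_le_one_div_of_le (by positivity)
    linarith
  calc _ ≤ 1 / (2 * s ^ 3) * (1 + s ^ 2) := by
        apply mul_le_mul (h1.trans h4) h2 (Finset.sum_nonneg fun _ _ => by positivity)
          (by positivity)
    _ ≤ 1 / s := by
        rw [div_mul_eq_mul_div, one_mul, div_le_div_iff₀ (by positivity) (by positivity)]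
        nlinarith [mul_pos (show 0 < s by linarith) (show 0 < s by linarith)]

lemma sq_tendsto : Filter.Tendsto (fun k : ℕ => (∑ p ∈ goodPrimes k, 1 / (p : ℝ) ^ 2) *
    ∑ j ∈ Finset.Icc 1 k, 1 / (j : ℝ)) Filter.atTop (nhds 0) := by
  refine squeeze_zero' (g := fun k : ℕ => 1 / √(Real.log k)) ?_ ?_ ?_
  · exact Filter.Eventually.of_forall fun k => mul_nonneg
      (Finset.sum_nonneg fun _ _ => by positivity) (Finset.sum_nonneg fun _ _ => by positivity)
  · filter_upwards [tendsto_sqrt_log.eventually_ge_atTop 2] with k hk using sq_bound k hk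
  · simp only [one_div]
    exact tendsto_inv_atTop_zero.comp tendsto_sqrt_log

lemma goodPrimes_spec (k : ℕ) {p : ℕ} (hp : p ∈ goodPrimes k) : p.Prime ∧ 2 * p ≤ k := by
  rw [goodPrimes, primesIoc, Finset.mem_filter, Finset.mem_Ioc] at hp
  exact ⟨hp.2, by omega⟩

end primes


section final

lemma exists_finset_iff {β : Type*} [Fintype β] (P : β → Prop) :
    ∃ T : Finset β, ∀ p, p ∈ T ↔ P p := by
  classical
  exact ⟨Finset.univ.filter P, fun p => by simp⟩

lemma card_sign_ne (k : ℕ) (hk : 2 ≤ k) :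
    2 * (Finset.univ.filter (fun p : Perm (Fin k) × Perm (Fin k) => sign p.1 ≠ sign p.2)).card
      = k.factorial ^ 2 := by
  have h := Finset.card_filter_add_card_filter_not (s := Finset.univ)
    (fun p : Perm (Fin k) × Perm (Fin k) => sign p.1 ≠ sign p.2)
  have hne : (⟨0, by omega⟩ : Fin k) ≠ ⟨1, by omega⟩ := by simp
  set t : Perm (Fin k) := swap ⟨0, by omega⟩ ⟨1, by omega⟩ with ht
  have hst : sign t = -1 := sign_swap hne
  have htt : t * t = 1 := swap_mul_self _ _
  have key : ∀ a b : ℤˣ, a ≠ b ↔ -1 * a = b := by decide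
  have e : (Finset.univ.filter (fun p : Perm (Fin k) × Perm (Fin k) =>
      ¬ sign p.1 ≠ sign p.2)).card =
      (Finset.univ.filter (fun p : Perm (Fin k) × Perm (Fin k) => sign p.1 ≠ sign p.2)).card := by
    refine Finset.card_bij' (fun p _ => (t * p.1, p.2)) (fun p _ => (t * p.1, p.2)) ?_ ?_ ?_ ?_
    · intro p hp
      simp only [Finset.mem_filter, Finset.mem_univ, true_and, not_not] at hp ⊢
      rw [key, Perm.sign_mul, hst, ← mul_assoc, hp]; simp
    · intro p hp
      simp only [Finset.mem_filter, Finset.mem_univ, true_and, not_not] at hp ⊢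
      rw [Perm.sign_mul, hst]; exact (key _ _).1 hp
    · intro p _; simp [← mul_assoc, htt]
    · intro p _; simp [← mul_assoc, htt]
  rw [e, Finset.card_univ, Fintype.card_prod, Fintype.card_perm, Fintype.card_fin] at h
  rw [sq, ← h]; ring

lemma good_of_not_bad {k : ℕ} (hk : 5 ≤ k) (σ τ : Perm (Fin k)) (hs : sign σ ≠ sign τ)
    (h2 : IsPreprimitive (Subgroup.closure {σ, τ}) (Fin k))
    (h3 : ∃ c ∈ σ.cycleFactorsFinset, c.support.card ∈ goodPrimes k ∧
      ∀ c' ∈ σ.cycleFactorsFinset, c' ≠ c → ¬ c.support.card ∣ c'.support.card) :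
    circGenPair σ τ = ⊤ := by
  obtain ⟨c, hc, hcP, hne⟩ := h3
  obtain ⟨hp, hle⟩ := goodPrimes_spec k hcP
  obtain ⟨m, hm, hmc⟩ := exists_pow_isCycle σ c hc hp hne
  apply circGenPair_eq_top hk σ τ _ hs
  refine jordan_prime _ h2 (σ ^ m) ?_ hm (by rw [hmc]; exact hp) (by rw [hmc]; simpa using hle)
  exact Subgroup.pow_mem _ (Subgroup.subset_closure (by simp)) m

open Classical in
lemma main_bound (k : ℕ) (hk : 5 ≤ k) (hμ : 0 < ∑ p ∈ goodPrimes k, (1 : ℝ) / p) :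
    |(Nat.card {p : Perm (Fin k) × Perm (Fin k) // circGenPair p.1 p.2 = ⊤} : ℝ) /
      (k.factorial : ℝ) ^ 2 - 1 / 2| ≤ 2 / ((k : ℝ) - 1) + 2 / ((k : ℝ) - 2) +
      (1 / (∑ p ∈ goodPrimes k, (1 : ℝ) / p) +
      (∑ p ∈ goodPrimes k, 1 / (p : ℝ) ^ 2) * ∑ j ∈ Finset.Icc 1 k, 1 / (j : ℝ)) := by
  have hN : (0 : ℝ) < (k.factorial : ℝ) := by exact_mod_cast k.factorial_pos
  obtain ⟨T, hT⟩ : ∃ T : Finset (Perm (Fin k) × Perm (Fin k)), ∀ p, p ∈ T ↔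
      circGenPair p.1 p.2 = ⊤ := exists_finset_iff _
  have hTc : Nat.card {p : Perm (Fin k) × Perm (Fin k) // circGenPair p.1 p.2 = ⊤} = T.card :=
    Nat.subtype_card T hT
  have hS := card_sign_ne k (by omega)
  set S := Finset.univ.filter (fun p : Perm (Fin k) × Perm (Fin k) => sign p.1 ≠ sign p.2) with hSd
  have hNT := nontransitive_bound k
  have hIM := imprimitive_bound k (by omega)
  set NT := Finset.univ.filter (fun p : Perm (Fin k) × Perm (Fin k) =>
    ¬ IsPretransitive (Subgroup.closure {p.1, p.2}) (Fin k)) with hNTd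
  set IM := Finset.univ.filter (fun p : Perm (Fin k) × Perm (Fin k) =>
    IsPretransitive (Subgroup.closure {p.1, p.2}) (Fin k) ∧
    ¬ IsPreprimitive (Subgroup.closure {p.1, p.2}) (Fin k)) with hIMd
  obtain ⟨F, hF⟩ : ∃ F : Finset (Perm (Fin k)), ∀ σ, σ ∈ F ↔
      ∀ c ∈ σ.cycleFactorsFinset, c.support.card ∈ goodPrimes k →
      ∃ c' ∈ σ.cycleFactorsFinset, c' ≠ c ∧ c.support.card ∣ c'.support.card :=
    exists_finset_iff _
  have hFb := bad_total (α := Fin k) (goodPrimes k) (fun p hp => by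
    obtain ⟨h1, h2⟩ := goodPrimes_spec k hp
    exact ⟨h1.two_le, by rw [Fintype.card_fin]; omega⟩) hμ F (fun σ hσ => (hF σ).1 hσ)
  rw [Fintype.card_fin] at hFb
  set B := 1 / (∑ p ∈ goodPrimes k, (1 : ℝ) / p) +
      (∑ p ∈ goodPrimes k, 1 / (p : ℝ) ^ 2) * ∑ j ∈ Finset.Icc 1 k, 1 / (j : ℝ) with hB
  have hTS : T ⊆ S := by
    intro p hp
    rw [hSd, Finset.mem_filter]
    exact ⟨Finset.mem_univ _, sign_ne_of_circGenPair_eq_top (by omega) _ _ ((hT p).1 hp)⟩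
  have hST : S ⊆ T ∪ (NT ∪ (IM ∪ F ×ˢ Finset.univ)) := by
    intro p hp
    rw [hSd, Finset.mem_filter] at hp
    simp only [Finset.mem_union]
    by_cases h1 : p ∈ NT
    · exact Or.inr (Or.inl h1)
    by_cases h2 : p ∈ IM
    · exact Or.inr (Or.inr (Or.inl h2))
    by_cases h3 : p.1 ∈ F
    · exact Or.inr (Or.inr (Or.inr (Finset.mem_product.2 ⟨h3, Finset.mem_univ _⟩)))
    left
    rw [hT]
    rw [hNTd, Finset.mem_filter] at h1
    rw [hIMd, Finset.mem_filter] at h2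
    have h1' : IsPretransitive (Subgroup.closure {p.1, p.2}) (Fin k) := by
      by_contra h; exact h1 ⟨Finset.mem_univ _, h⟩
    have h2' : IsPreprimitive (Subgroup.closure {p.1, p.2}) (Fin k) := by
      by_contra h; exact h2 ⟨Finset.mem_univ _, h1', h⟩
    rw [hF] at h3
    push Not at h3
    obtain ⟨c, hc, hcP, hne⟩ := h3
    exact good_of_not_bad hk p.1 p.2 hp.2 h2' ⟨c, hc, hcP, fun c' a b => hne c' a b⟩
  have c1 : (T.card : ℝ) ≤ S.card := by exact_mod_cast Finset.card_le_card hTS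
  have c2 : (S.card : ℝ) ≤ T.card + (NT.card + (IM.card + F.card * k.factorial)) := by
    have hprod : (F ×ˢ (Finset.univ : Finset (Perm (Fin k)))).card = F.card * k.factorial := by
      rw [Finset.card_product, Finset.card_univ, Fintype.card_perm, Fintype.card_fin]
    have a1 := Finset.card_le_card hST
    have a2 := Finset.card_union_le T (NT ∪ (IM ∪ F ×ˢ Finset.univ))
    have a3 := Finset.card_union_le NT (IM ∪ F ×ˢ Finset.univ)
    have a4 := Finset.card_union_le IM (F ×ˢ Finset.univ)
    rw [hprod] at a4
    have : S.card ≤ T.card + (NT.card + (IM.card + F.card * k.factorial)) := by omega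
    exact_mod_cast this
  have c3 : 2 * (S.card : ℝ) = (k.factorial : ℝ) ^ 2 := by exact_mod_cast hS
  have s1 := sum_inv_choose k (k / 2) (by omega) le_rfl
  have s2 := sum_inv_choose (k - 1) ((k - 1) / 2) (by omega) le_rfl
  rw [show (((k - 1 : ℕ) : ℝ) - 1) = (k : ℝ) - 2 by
    rw [Nat.cast_sub (by omega)]; push_cast; ring] at s2
  have hN2 : (0 : ℝ) < (k.factorial : ℝ) ^ 2 := by positivity
  have d1 : (NT.card : ℝ) ≤ 2 / ((k : ℝ) - 1) * (k.factorial : ℝ) ^ 2 :=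
    hNT.trans (mul_le_mul_of_nonneg_right s1 hN2.le)
  have d2 : (IM.card : ℝ) ≤ 2 / ((k : ℝ) - 2) * (k.factorial : ℝ) ^ 2 :=
    hIM.trans (mul_le_mul_of_nonneg_right s2 hN2.le)
  have d3 : (F.card : ℝ) * k.factorial ≤ B * (k.factorial : ℝ) ^ 2 := by
    calc (F.card : ℝ) * k.factorial ≤ (k.factorial * B) * k.factorial :=
          mul_le_mul_of_nonneg_right hFb hN.le
      _ = _ := by ring
  rw [hTc]
  have e1 : (T.card : ℝ) / (k.factorial : ℝ) ^ 2 - 1 / 2 =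
      (T.card - S.card) / (k.factorial : ℝ) ^ 2 := by
    rw [sub_div]
    congr 1
    rw [← c3]
    have : (S.card : ℝ) ≠ 0 := by
      intro h
      rw [h] at c3
      linarith
    field_simp
  rw [e1, abs_div, abs_of_pos hN2, div_le_iff₀ hN2, abs_of_nonpos (by linarith)]
  linarith

end final

end helpers

/-- The group circularly generated by a pair of uniformly random permutations of `k`
points is all of `S_k × S_k` with probability tending to `1/2`. -/
theorem circGenPair_top_probability :
    Filter.Tendsto
      (fun k : ℕ =>
        (Nat.card {p : Equiv.Perm (Fin k) × Equiv.Perm (Fin k) //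
            circGenPair p.1 p.2 = ⊤} : ℝ) / (Nat.factorial k : ℝ) ^ 2)
      Filter.atTop (nhds (1 / 2)) := by
  have hlim : Filter.Tendsto (fun k : ℕ => 2 / ((k : ℝ) - 1) + 2 / ((k : ℝ) - 2) +
      (1 / (∑ p ∈ goodPrimes k, (1 : ℝ) / p) +
      (∑ p ∈ goodPrimes k, 1 / (p : ℝ) ^ 2) * ∑ j ∈ Finset.Icc 1 k, 1 / (j : ℝ)))
      Filter.atTop (nhds 0) := by
    have t1 : ∀ a : ℝ, Filter.Tendsto (fun k : ℕ => 2 / ((k : ℝ) - a)) Filter.atTop (nhds 0) := by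
      intro a
      apply Filter.Tendsto.div_atTop tendsto_const_nhds
      exact Filter.tendsto_atTop_add_const_right _ (-a) tendsto_natCast_atTop_atTop
    have t2 : Filter.Tendsto (fun k : ℕ => 1 / (∑ p ∈ goodPrimes k, (1 : ℝ) / p))
        Filter.atTop (nhds 0) := Filter.Tendsto.div_atTop tendsto_const_nhds mu_tendsto
    simpa using ((t1 1).add (t1 2)).add (t2.add sq_tendsto)
  rw [tendsto_iff_dist_tendsto_zero]
  refine squeeze_zero' (Filter.Eventually.of_forall fun _ => dist_nonneg) ?_ hlim
  filter_upwards [Filter.eventually_ge_atTop 5, mu_tendsto.eventually_gt_atTop 0] with k hk hμ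
  rw [Real.dist_eq]
  exact main_bound k hk hμ
end

section
/- The sequence k ↦ (Nat.card {p : Equiv.Perm (Fin k) × Equiv.Perm (Fin k) // G_c(p.1, p.2) = the equal-sign subgroup of Equiv.Perm (Fin k) × Equiv.Perm (Fin k)} : ℝ) / (k !)^2 tends to 1/4 as k → ∞; that is, the group circularly generated by a pair of uniformly random permutations of k points equals (A_k × A_k) ⋊ ⟨(π, π)⟩ (π a transposition), i.e. the subgroup of pairs with equal signatures, with probability tending to 1/4. -/
/-- The equal-sign subgroup of `S_k × S_k`: the kernel of `(a, b) ↦ sign a * sign b`,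
i.e. the pairs of permutations with equal signatures. It is the internal semidirect
product `(A_k × A_k) ⋊ ⟨(π, π)⟩` for any transposition `π`. -/
def equalSignSubgroup (k : ℕ) : Subgroup (Equiv.Perm (Fin k) × Equiv.Perm (Fin k)) :=
  MonoidHom.ker
    ((Equiv.Perm.sign.comp (MonoidHom.fst (Equiv.Perm (Fin k)) (Equiv.Perm (Fin k)))) *
      (Equiv.Perm.sign.comp (MonoidHom.snd (Equiv.Perm (Fin k)) (Equiv.Perm (Fin k)))))

section DetPart
open Equiv Equiv.Perm MulAction
variable {α : Type*} [Fintype α] [DecidableEq α]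

lemma dx_three_cycle (c g : Perm α) (x y : α) (hx : x ∈ c.support) (hy : y ∉ c.support)
    (hg : ∀ z ∈ c.support, g z = swap x y z) :
    IsThreeCycle (c⁻¹ * (g * c * g⁻¹)) := by
  have hconj : g * c * g⁻¹ = swap x y * c * (swap x y)⁻¹ := by
    have hd : Disjoint ((swap x y)⁻¹ * g) c := by
      intro z
      by_cases hz : z ∈ c.support
      · left
        simp [hg z hz]
      · right
        simpa using hz
    have h := hd.commute.eq
    have h2 : g * c = swap x y * c * (swap x y)⁻¹ * g := by
      have : (swap x y) * ((swap x y)⁻¹ * g * c) = swap x y * (c * ((swap x y)⁻¹ * g)) := by rw [h]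
      simpa [mul_assoc] using this
    rw [h2]; group
  have hcy : c⁻¹ y = y := by
    have : c y = y := by simpa using hy
    rw [Perm.inv_eq_iff_eq, this]
  have hcx : c⁻¹ x ≠ x := by
    intro h
    rw [Perm.inv_eq_iff_eq] at h
    simp at hx
    exact hx h.symm
  have hxy : x ≠ y := by rintro rfl; exact hy hx
  have e : c⁻¹ * (g * c * g⁻¹) = swap (c⁻¹ x) y * swap x y := by
    rw [hconj]
    have := Equiv.swap_apply_apply c⁻¹ x y
    rw [hcy] at this
    rw [this]
    simp [mul_assoc]
  rw [e, swap_comm _ y, swap_comm x y]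
  refine isThreeCycle_swap_mul_swap_same ?_ hxy.symm hcx
  intro h
  apply hxy
  rw [Perm.eq_inv_iff_eq] at h
  rw [← h]
  exact (by simpa using hy : c y = y)

theorem dx_jordan (G : Subgroup (Perm α)) (hG : IsPreprimitive G α) (p : ℕ) (hp : p.Prime)
    (hpn : 2 * p ≤ Fintype.card α) (c : Perm α) (hc : c.IsCycle) (hcp : c.support.card = p)
    (hcG : c ∈ G) : alternatingGroup α ≤ G := by
  have hp2 := hp.two_le
  have hcard : ((c.support : Set α)ᶜ).ncard = (Fintype.card α - p - 1) + 1 := by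
    rw [Set.ncard_compl, Set.ncard_coe_finset, hcp, Nat.card_eq_fintype_card]
    omega
  have htr := isPretransitive_of_isCycle_mem (G := G) hc hcG
  have hprim : IsPreprimitive (fixingSubgroup G (c.support : Set α)ᶜ)
      (SubMulAction.ofFixingSubgroup G (c.support : Set α)ᶜ) := by
    apply IsPreprimitive.of_prime_card
    have : Nat.card (SubMulAction.ofFixingSubgroup G (c.support : Set α)ᶜ) = p := by
      classical
      rw [← hcp, Nat.card_eq_fintype_card, Fintype.card_subtype]
      congr 1
      ext x
      simp [SubMulAction.mem_ofFixingSubgroup_iff]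
    rw [this]; exact hp
  have hm := hG.isMultiplyPreprimitive hcard (by rw [Nat.card_eq_fintype_card]; omega) hprim
  have hm1 := hm.isMultiplyPretransitive
  have hmt : IsMultiplyPretransitive G α p := by
    apply isMultiplyPretransitive_of_le' (n := Fintype.card α - p - 1 + 2)
    · omega
    · rw [ENat.card_eq_coe_fintype_card]
      exact_mod_cast (by omega : Fintype.card α - p - 1 + 2 ≤ Fintype.card α)
  obtain ⟨x, hx⟩ := hc.nonempty_support
  obtain ⟨y, hy⟩ : ∃ y, y ∉ c.support := by
    by_contra! h
    have := Finset.card_univ (α := α)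
    have h2 : c.support = Finset.univ := by ext; simp [-mem_support, h]
    rw [h2] at hcp
    omega
  let f : Fin p ↪ α := ((finCongr hcp.symm).trans c.support.equivFin.symm).toEmbedding.trans
    (Function.Embedding.subtype _)
  obtain ⟨g, hg⟩ := hmt.exists_smul_eq f (f.trans (swap x y).toEmbedding)
  have key : ∀ z ∈ c.support, (g : Perm α) z = swap x y z := by
    intro z hz
    have := DFunLike.congr_fun hg ((finCongr hcp.symm).symm (c.support.equivFin ⟨z, hz⟩))
    simpa [f, Subgroup.smul_def] using this
  have h3 := dx_three_cycle c g x y hx hy key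
  refine alternatingGroup_le_of_isPreprimitive_of_isThreeCycle_mem hG h3 ?_
  exact G.mul_mem (G.inv_mem hcG) (G.mul_mem (G.mul_mem g.2 hcG) (G.inv_mem g.2))

lemma dx_normal (N : Subgroup (Perm α)) (hN : N.Normal) (c : Perm α) (hcN : c ∈ N) (hc : c ≠ 1)
    (hc2 : c.support ≠ Finset.univ) : alternatingGroup α ≤ N := by
  obtain ⟨x, hx⟩ := Finset.nonempty_iff_ne_empty.2 (mt Perm.support_eq_empty_iff.1 hc)
  obtain ⟨y, hy⟩ : ∃ y, y ∉ c.support := by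
    by_contra! h
    exact hc2 (by ext; simp [-mem_support, h])
  have h3 := dx_three_cycle c (swap x y) x y hx hy (fun _ _ => rfl)
  have hmem : c⁻¹ * (swap x y * c * (swap x y)⁻¹) ∈ N :=
    N.mul_mem (N.inv_mem hcN) (hN.conj_mem _ hcN _)
  rw [← closure_three_cycles_eq_alternating, Subgroup.closure_le]
  intro d hd
  have : IsConj (c⁻¹ * (swap x y * c * (swap x y)⁻¹)) d := by
    rw [isConj_iff_cycleType_eq]
    rw [h3.cycleType, (show IsThreeCycle d from hd).cycleType]
  obtain ⟨e, he⟩ := isConj_iff.1 this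
  rw [← he]
  exact hN.conj_mem _ hmem _


theorem dx_det {n : ℕ} (σ τ : Perm (Fin n)) (hσ : sign σ = -1) (hτ : sign τ = -1)
    (hprim : IsPreprimitive (Subgroup.closure {σ, τ}) (Fin n)) (p : ℕ) (hp : p.Prime)
    (hpn : 2 * p ≤ n) (M : ℕ) (hc : (σ ^ M).IsCycle) (hcp : (σ ^ M).support.card = p)
    (hM : τ ^ M = 1) : circGenPair σ τ = equalSignSubgroup n := by
  have hp2 := hp.two_le
  have hσH : σ ∈ Subgroup.closure {σ, τ} := Subgroup.subset_closure (by simp)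
  have hHA := dx_jordan _ hprim p hp (by simpa using hpn) (σ ^ M) hc hcp (Subgroup.pow_mem _ hσH M)
  have sgn : ∀ a : Perm (Fin n), sign a = 1 ∨ sign a = -1 := fun a => Int.units_eq_one_or _
  have hH : Subgroup.closure {σ, τ} = ⊤ := by
    rw [eq_top_iff]
    intro a _
    rcases sgn a with h | h
    · exact hHA (by simpa [mem_alternatingGroup] using h)
    · have : a * σ⁻¹ ∈ Subgroup.closure {σ, τ} := by
        apply hHA
        simp [mem_alternatingGroup, h, hσ]
      simpa using Subgroup.mul_mem _ this hσH
  set G := circGenPair σ τ with hG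
  have m1 : (σ, τ) ∈ G := Subgroup.subset_closure (by simp)
  have m2 : (τ, σ) ∈ G := Subgroup.subset_closure (by simp)
  have hfst : G.map (MonoidHom.fst _ _) = ⊤ := by
    rw [hG, circGenPair, MonoidHom.map_closure, ← hH]
    congr 1
    simp [Set.image_pair]
  have hswap : ∀ a b, (a, b) ∈ G → (b, a) ∈ G := by
    intro a b hab
    have hle : G ≤ G.comap (MulEquiv.prodComm : Perm (Fin n) × Perm (Fin n) ≃* _).toMonoidHom := by
      conv_lhs => rw [hG, circGenPair]
      rw [Subgroup.closure_le]
      rintro x (rfl | rfl)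
      · exact m2
      · exact m1
    exact hle hab
  let N : Subgroup (Perm (Fin n)) := G.comap (MonoidHom.inl _ _)
  have hmemN : ∀ a, a ∈ N ↔ (a, (1 : Perm (Fin n))) ∈ G := fun a => Iff.rfl
  have hN : N.Normal := by
    constructor
    intro a ha g
    have : g ∈ G.map (MonoidHom.fst _ _) := by rw [hfst]; trivial
    obtain ⟨⟨g', h⟩, hg, rfl⟩ := this
    rw [hmemN] at ha ⊢
    have := G.mul_mem (G.mul_mem hg ha) (G.inv_mem hg)
    simpa using this
  have hAN : alternatingGroup (Fin n) ≤ N := by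
    refine dx_normal N hN (σ ^ M) ?_ hc.ne_one ?_
    · rw [hmemN]
      have := G.pow_mem m1 M
      simpa [hM] using this
    · intro h
      rw [h] at hcp
      simp at hcp
      omega
  have hA1 : ∀ a, sign a = 1 → (a, (1 : Perm (Fin n))) ∈ G := fun a ha =>
    hAN (by simpa [mem_alternatingGroup] using ha)
  have hA : ∀ a b, sign a = 1 → sign b = 1 → (a, b) ∈ G := by
    intro a b ha hb
    simpa using G.mul_mem (hA1 a ha) (hswap _ _ (hA1 b hb))
  apply le_antisymm
  · rw [hG, circGenPair, Subgroup.closure_le]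
    rintro x (rfl | rfl) <;> simp [equalSignSubgroup, MonoidHom.mem_ker, hσ, hτ]
  · rintro ⟨a, b⟩ hab
    have hab : sign a * sign b = 1 := hab
    rcases sgn a with ha | ha <;> rcases sgn b with hb | hb
    · exact hA a b ha hb
    · simp [ha, hb] at hab
    · simp [ha, hb] at hab
    · have := G.mul_mem (hA (a * σ⁻¹) (b * τ⁻¹) (by simp [ha, hσ]) (by simp [hb, hτ])) m1
      simpa using this

/-- Conversely the generators must be odd. -/
theorem dx_det_conv {n : ℕ} (hn : 2 ≤ n) (σ τ : Perm (Fin n))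
    (h : circGenPair σ τ = equalSignSubgroup n) : sign σ = -1 ∧ sign τ = -1 := by
  have m1 : (σ, τ) ∈ circGenPair σ τ := Subgroup.subset_closure (by simp)
  rw [h] at m1
  have hab : sign σ * sign τ = 1 := m1
  rcases Int.units_eq_one_or (sign σ) with ha | ha <;>
    rcases Int.units_eq_one_or (sign τ) with hb | hb
  · exfalso
    have hle : circGenPair σ τ ≤ (MonoidHom.comp sign (MonoidHom.fst _ _)).ker := by
      rw [circGenPair, Subgroup.closure_le]
      rintro x (rfl | rfl) <;> simp [MonoidHom.mem_ker, ha, hb]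
    rw [h] at hle
    let s : Perm (Fin n) := swap ⟨0, by omega⟩ ⟨1, by omega⟩
    have hs : sign s = -1 := sign_swap (by simp)
    have : (s, s) ∈ equalSignSubgroup n := by
      simp [equalSignSubgroup, MonoidHom.mem_ker, hs]
    have := hle this
    simp [MonoidHom.mem_ker, hs] at this
  · simp [ha, hb] at hab
  · simp [ha, hb] at hab
  · exact ⟨ha, hb⟩

end DetPart

section CountPart
open Equiv Equiv.Perm MulAction
set_option linter.unusedSectionVars false
set_option linter.unusedSimpArgs false
variable {α : Type*} [Fintype α] [DecidableEq α]

/-- embeddings intertwining `r` and `σ` -/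
def dxE {ι : Type*} (r : Perm ι) (σ : Perm α) : Set (ι ↪ α) := {f | ∀ i, σ (f i) = f (r i)}

lemma dx_trans {ι : Type*} [Finite ι] (f g : ι ↪ α) : ∃ σ : Perm α, σ • f = g := by
  classical
  have := Fintype.ofFinite ι
  let e : {x // x ∈ Set.range f} ≃ {x // x ∈ Set.range g} :=
    f.toEquivRange.symm.trans g.toEquivRange
  refine ⟨e.extendSubtype, ?_⟩
  ext i
  have h := e.extendSubtype_apply_of_mem (f i) ⟨i, rfl⟩
  have h2 : (⟨f i, ⟨i, rfl⟩⟩ : {x // x ∈ Set.range f}) = f.toEquivRange i := rfl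
  simp only [Function.Embedding.smul_apply, Perm.smul_def]
  rw [h, h2]
  simp [e]

lemma dx_fiber {ι : Type*} [Finite ι] (f g : ι ↪ α) :
    {σ : Perm α | σ • f = g}.ncard * Nat.card (ι ↪ α) = (Fintype.card α).factorial := by
  classical
  have := Fintype.ofFinite ι
  obtain ⟨s, hs⟩ := dx_trans f g
  have h1 : {σ : Perm α | σ • f = g} = Set.image (fun x => s * x) (stabilizer (Perm α) f : Set (Perm α)) := by
    ext σ
    simp only [Set.mem_ofPred_eq, Set.mem_image, SetLike.mem_coe, mem_stabilizer_iff]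
    constructor
    · intro h
      exact ⟨s⁻¹ * σ, by rw [mul_smul, h, ← hs, inv_smul_smul], by group⟩
    · rintro ⟨x, hx, rfl⟩
      rw [mul_smul, hx, hs]
  rw [h1, Set.ncard_image_of_injective _ (mul_right_injective s)]
  have h2 : orbit (Perm α) f = Set.univ := by
    ext g'
    simp only [Set.mem_univ, iff_true]
    exact dx_trans f g'
  have h3 := MulAction.card_orbit_mul_card_stabilizer_eq_card_group (Perm α) f
  rw [Fintype.card_perm] at h3
  rw [← h3, mul_comm]
  congr 1
  · rw [← Nat.card_eq_fintype_card, Nat.card_coe_set_eq, h2, Set.ncard_univ]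
  · rw [← Nat.card_eq_fintype_card]; rfl

lemma dx_sum_eq_sum {ι : Type*} [Fintype ι] [DecidableEq ι] (r : Perm ι) :
    ∑ σ : Perm α, (dxE r σ).ncard = ∑ f : ι ↪ α, {σ : Perm α | σ • f = r.toEmbedding.trans f}.ncard := by
  classical
  simp only [Set.ncard_eq_toFinset_card', dxE]
  simp only [Set.toFinset_ofPred]
  simp only [Finset.card_filter]
  rw [Finset.sum_comm]
  apply Finset.sum_congr rfl
  intro f _
  apply Finset.sum_congr rfl
  intro σ _
  have : (∀ i, σ (f i) = f (r i)) ↔ σ • f = r.toEmbedding.trans f := by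
    rw [DFunLike.ext_iff]
    simp
  simp only [this]

lemma dx_sum_le {ι : Type*} [Finite ι] (r : Perm ι) :
    ∑ σ : Perm α, (dxE r σ).ncard ≤ (Fintype.card α).factorial := by
  classical
  have := Fintype.ofFinite ι
  rw [dx_sum_eq_sum]
  rcases isEmpty_or_nonempty (ι ↪ α) with h | h
  · simp
  · have hpos : 0 < Nat.card (ι ↪ α) := Nat.card_pos
    apply Nat.le_of_mul_le_mul_right _ hpos
    rw [Finset.sum_mul, Finset.sum_congr rfl (fun f _ => dx_fiber f _)]
    simp [mul_comm]

lemma dx_sum_eq {ι : Type*} [Finite ι] (r : Perm ι) (h : Nonempty (ι ↪ α)) :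
    ∑ σ : Perm α, (dxE r σ).ncard = (Fintype.card α).factorial := by
  classical
  have := Fintype.ofFinite ι
  rw [dx_sum_eq_sum]
  have hpos : 0 < Nat.card (ι ↪ α) := Nat.card_pos
  apply Nat.eq_of_mul_eq_mul_right hpos
  rw [Finset.sum_mul, Finset.sum_congr rfl (fun f _ => dx_fiber f _)]
  simp [mul_comm]

lemma dx_markov {ι κ : Type*} [Finite ι] [Finite κ] (r : Perm ι) (u : κ → Perm ι)
    (hu : Function.Injective u) (hur : ∀ k, u k * r = r * u k) :
    {σ : Perm α | (dxE r σ).Nonempty}.ncard * Nat.card κ ≤ (Fintype.card α).factorial := by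
  classical
  refine le_trans ?_ (dx_sum_le r)
  rw [Set.ncard_eq_toFinset_card', ← smul_eq_mul]
  refine le_trans (Finset.card_nsmul_le_sum _ (fun σ => (dxE r σ).ncard) _ ?_)
    (Finset.sum_le_univ_sum_of_nonneg (fun _ => Nat.zero_le _))
  intro σ hσ
  obtain ⟨f, hf⟩ : (dxE r σ).Nonempty := by simpa using hσ
  rw [← Set.ncard_univ, ← Set.ncard_image_of_injective (f := fun k => (u k).toEmbedding.trans f)]
  · apply Set.ncard_le_ncard _ (Set.toFinite _)
    rintro _ ⟨k, -, rfl⟩ i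
    have : (u k) (r i) = r (u k i) := DFunLike.congr_fun (hur k) i
    simp [hf (u k i), this]
  · intro k l hkl
    apply hu
    ext i
    have := DFunLike.congr_fun hkl i
    exact f.injective this

/-- rotation -/
def dxR (a : ℕ) : Perm (ZMod a) := Equiv.addRight 1

/-- number of parametrised `a`-cycles -/
noncomputable def dxY (a : ℕ) (σ : Perm α) : ℕ := (dxE (dxR a) σ).ncard

/-- number of pairs of disjoint parametrised cycles -/
noncomputable def dxYY (a b : ℕ) (σ : Perm α) : ℕ := (dxE (Equiv.sumCongr (dxR a) (dxR b)) σ).ncard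

lemma dx_iter {a : ℕ} {σ : Perm α} {f : ZMod a ↪ α} (hf : f ∈ dxE (dxR a) σ) (k : ℕ) (i : ZMod a) :
    σ^[k] (f i) = f (i + k) := by
  induction k with
  | zero => simp
  | succ k ih =>
    rw [Function.iterate_succ_apply', ih, hf]
    simp [dxR, add_assoc]

lemma dx_iter_pow {a : ℕ} {σ : Perm α} {f : ZMod a ↪ α} (hf : f ∈ dxE (dxR a) σ) (k : ℕ)
    (i : ZMod a) : (σ ^ k) (f i) = f (i + k) := by
  rw [← dx_iter hf, Perm.iterate_eq_pow]

lemma dx_period {a : ℕ} {σ : Perm α} {f : ZMod a ↪ α} (hf : f ∈ dxE (dxR a) σ) (i : ZMod a) :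
    Function.minimalPeriod σ (f i) = a := by
  have key : ∀ k, Function.IsPeriodicPt σ k (f i) ↔ a ∣ k := by
    intro k
    rw [Function.IsPeriodicPt, Function.IsFixedPt, dx_iter hf, f.injective.eq_iff]
    rw [← ZMod.natCast_eq_zero_iff]; simp
  apply Nat.dvd_antisymm
  · exact ((key a).2 dvd_rfl).minimalPeriod_dvd
  · exact (key _).1 (Function.isPeriodicPt_minimalPeriod _ _)

lemma dx_period_pos (σ : Perm α) (x : α) : 0 < Function.minimalPeriod σ x := by
  apply Function.minimalPeriod_pos_of_mem_periodicPts
  refine Function.mk_mem_periodicPts (orderOf_pos σ) ?_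
  rw [Function.IsPeriodicPt, Function.IsFixedPt, Perm.iterate_eq_pow, pow_orderOf_eq_one]
  rfl

lemma dx_exists_emb (σ : Perm α) (x : α) :
    ∃ f : ZMod (Function.minimalPeriod σ x) ↪ α, f ∈ dxE (dxR _) σ ∧ f 0 = x := by
  have hpos := dx_period_pos σ x
  generalize ha : Function.minimalPeriod σ x = a at *
  have : NeZero a := ⟨hpos.ne'⟩
  have hinj : Function.Injective (fun i : ZMod a => σ^[i.val] x) := by
    intro i j hij
    apply ZMod.val_injective
    apply Function.iterate_injOn_Iio_minimalPeriod (f := σ) (x := x) _ _ hij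
    · rw [ha]; exact ZMod.val_lt i
    · rw [ha]; exact ZMod.val_lt j
  refine ⟨⟨fun i => σ^[i.val] x, hinj⟩, ?_, ?_⟩
  · intro i
    change σ (σ^[i.val] x) = σ^[(i + 1).val] x
    have hm : ∀ k, σ^[k % a] x = σ^[k] x := by
      intro k
      rw [← ha]
      exact Function.iterate_mod_minimalPeriod_eq
    rw [← Function.iterate_succ_apply' (f := σ), ZMod.val_add, hm, ← hm, ← hm (_ + _)]
    have he : i.val.succ % a = (i.val + (1 : ZMod a).val) % a := by
      rw [ZMod.val_one_eq_one_mod, Nat.succ_eq_add_one]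
      simp
    rw [he]
  · change σ^[(0 : ZMod a).val] x = x
    simp

lemma dx_exists_emb' (σ : Perm α) (x : α) (a : ℕ) (ha : Function.minimalPeriod σ x = a) :
    ∃ f : ZMod a ↪ α, f ∈ dxE (dxR a) σ ∧ f 0 = x := by
  subst ha
  exact dx_exists_emb σ x

lemma dx_sumY {a : ℕ} (ha : 0 < a) (han : a ≤ Fintype.card α) :
    ∑ σ : Perm α, dxY a σ = (Fintype.card α).factorial := by
  have : NeZero a := ⟨ha.ne'⟩
  apply dx_sum_eq
  rw [Function.Embedding.nonempty_iff_card_le]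
  simpa using han

lemma dx_YY_le {a b : ℕ} (ha : 0 < a) (hb : 0 < b) (σ : Perm α) :
    dxY a σ * dxY b σ ≤ (if a = b then a * dxY a σ else 0) + dxYY a b σ := by
  have : NeZero a := ⟨ha.ne'⟩
  have : NeZero b := ⟨hb.ne'⟩
  let D : Set ((ZMod a ↪ α) × (ZMod b ↪ α)) := (dxE (dxR a) σ) ×ˢ (dxE (dxR b) σ)
  let D1 : Set ((ZMod a ↪ α) × (ZMod b ↪ α)) := {q ∈ D | ∃ i j, q.1 i = q.2 j}
  let D2 : Set ((ZMod a ↪ α) × (ZMod b ↪ α)) := {q ∈ D | ∀ i j, q.1 i ≠ q.2 j}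
  have h0 : dxY a σ * dxY b σ = D.ncard := by
    rw [dxY, dxY, Set.ncard_prod]
  have h1 : D ⊆ D1 ∪ D2 := by
    intro q hq
    by_cases h : ∃ i j, q.1 i = q.2 j
    · exact Or.inl ⟨hq, h⟩
    · push Not at h
      exact Or.inr ⟨hq, h⟩
  have h2 : D2.ncard ≤ dxYY a b σ := by
    let u : (ZMod a ⊕ ZMod b ↪ α) → (ZMod a ↪ α) × (ZMod b ↪ α) :=
      fun h => (Function.Embedding.inl.trans h, Function.Embedding.inr.trans h)
    have : D2 ⊆ Set.image u (dxE (Equiv.sumCongr (dxR a) (dxR b)) σ) := by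
      rintro ⟨f, g⟩ ⟨⟨hf, hg⟩, hd⟩
      refine ⟨⟨Sum.elim f g, f.injective.sumElim g.injective hd⟩, ?_, ?_⟩
      · rintro (i | i)
        · exact hf i
        · exact hg i
      · rfl
    exact (Set.ncard_le_ncard this (Set.toFinite _)).trans (Set.ncard_image_le (Set.toFinite _))
  have h3 : D1.ncard ≤ (if a = b then a * dxY a σ else 0) := by
    split_ifs with hab
    · subst hab
      let u : ZMod a × (ZMod a ↪ α) → (ZMod a ↪ α) × (ZMod a ↪ α) :=
        fun q => (q.2, (Equiv.addRight q.1).toEmbedding.trans q.2)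
      have : D1 ⊆ Set.image u (Set.univ ×ˢ (dxE (dxR a) σ)) := by
        rintro ⟨f, g⟩ ⟨⟨hf, hg⟩, i, j, hij⟩
        refine ⟨(i - j, f), ⟨trivial, hf⟩, ?_⟩
        simp only [u, Prod.mk.injEq, true_and]
        ext k
        have e1 := dx_iter hf (k - j).val i
        have e2 := dx_iter hg (k - j).val j
        simp only [ZMod.natCast_val, ZMod.cast_id', id_eq] at e1 e2
        simp only at hij
        rw [hij, e2] at e1
        simp only [add_sub_cancel] at e1
        rw [e1]
        simp only [Function.Embedding.trans_apply, Equiv.coe_toEmbedding, Equiv.coe_addRight]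
        congr 1
        ring
      refine (Set.ncard_le_ncard this (Set.toFinite _)).trans
        ((Set.ncard_image_le (Set.toFinite _)).trans ?_)
      rw [Set.ncard_prod, Set.ncard_univ, Nat.card_zmod]
      rfl
    · have : D1 = ∅ := by
        ext ⟨f, g⟩
        simp only [Set.mem_empty_iff_false, iff_false]
        rintro ⟨⟨hf, hg⟩, i, j, hij⟩
        apply hab
        simp only at hij
        rw [← dx_period hf i, hij, dx_period hg j]
      simp [this]
  rw [h0]
  exact (Set.ncard_le_ncard h1 (Set.toFinite _)).trans ((Set.ncard_union_le _ _).trans (add_le_add h3 h2))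

lemma dx_sumYY {a b : ℕ} (ha : 0 < a) (hb : 0 < b) (han : a ≤ Fintype.card α) :
    ∑ σ : Perm α, dxY a σ * dxY b σ ≤
      (if a = b then a else 0) * (Fintype.card α).factorial + (Fintype.card α).factorial := by
  have : NeZero a := ⟨ha.ne'⟩
  have : NeZero b := ⟨hb.ne'⟩
  refine (Finset.sum_le_sum (fun σ _ => dx_YY_le ha hb σ)).trans ?_
  rw [Finset.sum_add_distrib]
  refine add_le_add ?_ (dx_sum_le _)
  split_ifs
  · rw [← Finset.mul_sum, dx_sumY ha han]
  · simp

/-- few permutations have an `a`-cycle -/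
lemma dx_cnt1 {a : ℕ} (ha : 0 < a) :
    {σ : Perm α | (dxE (dxR a) σ).Nonempty}.ncard * a ≤ (Fintype.card α).factorial := by
  have : NeZero a := ⟨ha.ne'⟩
  have := dx_markov (α := α) (dxR a) (fun k : ZMod a => Equiv.addRight k) ?_ ?_
  · simpa using this
  · intro k l h
    simpa using DFunLike.congr_fun h 0
  · intro k
    ext i
    simp [dxR, add_right_comm]

lemma dx_cnt2 {a b : ℕ} (ha : 0 < a) (hb : 0 < b) :
    {σ : Perm α | (dxE (Equiv.sumCongr (dxR a) (dxR b)) σ).Nonempty}.ncard * (a * b)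
      ≤ (Fintype.card α).factorial := by
  have : NeZero a := ⟨ha.ne'⟩
  have : NeZero b := ⟨hb.ne'⟩
  have := dx_markov (α := α) (Equiv.sumCongr (dxR a) (dxR b))
    (fun k : ZMod a × ZMod b => Equiv.sumCongr (Equiv.addRight k.1) (Equiv.addRight k.2)) ?_ ?_
  · simpa using this
  · intro k l h
    have h1 := DFunLike.congr_fun h (Sum.inl 0)
    have h2 := DFunLike.congr_fun h (Sum.inr 0)
    simp at h1 h2
    exact Prod.ext h1 h2
  · intro k
    ext (i | i)
    · simp [dxR, add_comm]
    · simp [dxR, add_comm]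


lemma dx_second (P : Finset ℕ) (hP : ∀ p ∈ P, 0 < p ∧ p ≤ Fintype.card α) :
    ({σ : Perm α | ∀ p ∈ P, dxY p σ = 0}.ncard : ℝ) * (∑ p ∈ P, (1 / p : ℝ)) ≤
      (Fintype.card α).factorial := by
  classical
  set μ := ∑ p ∈ P, (1 / p : ℝ) with hμ
  set F : ℝ := ((Fintype.card α).factorial : ℝ) with hF
  have hF0 : 0 ≤ F := by positivity
  have hμ0 : 0 ≤ μ := Finset.sum_nonneg (fun _ _ => by positivity)
  rcases hμ0.eq_or_lt with h0 | h0
  · rw [← h0]; simpa using hF0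
  let X : Perm α → ℝ := fun σ => ∑ p ∈ P, (1 / p : ℝ) * dxY p σ
  have e1 : ∑ σ, X σ = μ * F := by
    simp only [X]
    rw [Finset.sum_comm, hμ, Finset.sum_mul]
    apply Finset.sum_congr rfl
    intro p hp
    rw [← Finset.mul_sum]
    congr 1
    rw [hF, ← dx_sumY (hP p hp).1 (hP p hp).2]
    push_cast; rfl
  have e2 : ∑ σ, X σ ^ 2 ≤ (μ ^ 2 + μ) * F := by
    have : ∀ σ, X σ ^ 2 = ∑ p ∈ P, ∑ q ∈ P, ((1 / p : ℝ) * (1 / q)) * ((dxY p σ * dxY q σ : ℕ) : ℝ) := by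
      intro σ
      simp only [X]
      rw [sq, Finset.sum_mul_sum]
      apply Finset.sum_congr rfl; intro p _
      apply Finset.sum_congr rfl; intro q _
      push_cast; ring
    simp only [this]
    rw [Finset.sum_comm]
    have hb : ∀ p ∈ P, ∑ σ : Perm α, ∑ q ∈ P, ((1 / p : ℝ) * (1 / q)) * ((dxY p σ * dxY q σ : ℕ) : ℝ)
        ≤ ((1 / p : ℝ) * μ + 1 / p) * F := by
      intro p hp
      rw [Finset.sum_comm]
      have hq : ∀ q ∈ P, ∑ σ : Perm α, ((1 / p : ℝ) * (1 / q)) * ((dxY p σ * dxY q σ : ℕ) : ℝ) ≤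
          (if p = q then (1 / p : ℝ) * F else 0) + (1 / p : ℝ) * (1 / q) * F := by
        intro q hq
        rw [← Finset.mul_sum, ← Nat.cast_sum]
        have h := dx_sumYY (α := α) (hP p hp).1 (hP q hq).1 (hP p hp).2
        have h' : ((∑ σ : Perm α, dxY p σ * dxY q σ : ℕ) : ℝ) ≤
            (if p = q then (p : ℝ) else 0) * F + F := by
          have := (Nat.cast_le (α := ℝ)).2 h
          push_cast at this ⊢
          exact this
        refine (mul_le_mul_of_nonneg_left h' (by positivity)).trans (le_of_eq ?_)
        have hp0 : (p : ℝ) ≠ 0 := by exact_mod_cast (hP p hp).1.ne'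
        split_ifs with hpq
        · subst hpq
          field_simp
        · ring
      refine (Finset.sum_le_sum hq).trans (le_of_eq ?_)
      rw [Finset.sum_add_distrib, Finset.sum_ite_eq, if_pos hp, ← Finset.sum_mul, ← Finset.mul_sum]
      ring
    refine (Finset.sum_le_sum hb).trans (le_of_eq ?_)
    rw [← Finset.sum_mul, Finset.sum_add_distrib, ← Finset.sum_mul]
    ring
  have e3 : ∑ σ, (X σ - μ) ^ 2 ≤ μ * F := by
    have : ∑ σ, (X σ - μ) ^ 2 = ∑ σ, X σ ^ 2 - 2 * μ * ∑ σ, X σ + F * μ ^ 2 := by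
      simp only [sub_sq, Finset.sum_add_distrib, Finset.sum_sub_distrib]
      rw [Finset.sum_const, Finset.card_univ, Fintype.card_perm, nsmul_eq_mul, Finset.mul_sum]
      congr 2
      apply Finset.sum_congr rfl; intro σ _; ring
    rw [this, e1]
    nlinarith
  have e4 : ({σ : Perm α | ∀ p ∈ P, dxY p σ = 0}.ncard : ℝ) * μ ^ 2 ≤ ∑ σ, (X σ - μ) ^ 2 := by
    rw [Set.ncard_eq_toFinset_card', ← nsmul_eq_mul]
    refine le_trans (Finset.card_nsmul_le_sum _ (fun σ => (X σ - μ) ^ 2) _ ?_)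
      (Finset.sum_le_univ_sum_of_nonneg (fun _ => by positivity))
    intro σ hσ
    have h : ∀ p ∈ P, dxY p σ = 0 := by simpa using hσ
    have : X σ = 0 := Finset.sum_eq_zero (fun p hp => by simp [h p hp])
    simp [this]
  have := e4.trans e3
  have h5 : (({σ : Perm α | ∀ p ∈ P, dxY p σ = 0}.ncard : ℝ) * μ) * μ ≤ F * μ := by nlinarith
  exact le_of_mul_le_mul_right h5 h0

/-- the good event for cycles -/
def dxGood (P : Finset ℕ) (σ τ : Perm α) : Prop :=
  ∃ p ∈ P, ∃ M : ℕ, (σ ^ M).IsCycle ∧ (σ ^ M).support.card = p ∧ τ ^ M = 1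

lemma dx_good (P : Finset ℕ) (hP : ∀ p ∈ P, p.Prime) (σ τ : Perm α)
    (h1 : ∃ p ∈ P, (dxE (dxR p) σ).Nonempty)
    (h2 : ∀ p ∈ P, ∀ j ∈ Finset.Icc 1 (Fintype.card α),
      ¬ (dxE (Equiv.sumCongr (dxR p) (dxR (j * p))) σ).Nonempty)
    (h3 : ∀ p ∈ P, ∀ j ∈ Finset.Icc 1 (Fintype.card α),
      ¬ ((dxE (dxR p) σ).Nonempty ∧ (dxE (dxR (j * p)) τ).Nonempty)) : dxGood P σ τ := by
  obtain ⟨p, hp, f, hf⟩ := h1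
  have hpp := hP p hp
  have hle : ∀ (ρ : Perm α) (x : α), Function.minimalPeriod ρ x ≤ Fintype.card α := by
    intro ρ x
    obtain ⟨g, hg, -⟩ := dx_exists_emb ρ x
    have : NeZero (Function.minimalPeriod ρ x) := ⟨(dx_period_pos ρ x).ne'⟩
    simpa using Fintype.card_le_of_embedding g
  have hj : ∀ (ρ : Perm α) (x : α), p ∣ Function.minimalPeriod ρ x →
      ∃ j ∈ Finset.Icc 1 (Fintype.card α), Function.minimalPeriod ρ x = j * p := by
    rintro ρ x ⟨j, hj⟩
    refine ⟨j, ?_, by rw [hj, mul_comm]⟩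
    have h1 := hle ρ x
    have h2 := dx_period_pos ρ x
    rw [hj] at h1 h2
    rw [Finset.mem_Icc]
    refine ⟨Nat.pos_of_mul_pos_left h2, ?_⟩
    exact le_trans (Nat.le_mul_of_pos_left j hpp.pos) h1
  have hτ : ∀ x, ¬ p ∣ Function.minimalPeriod τ x := by
    intro x hx
    obtain ⟨j, hj1, hj2⟩ := hj τ x hx
    obtain ⟨g, hg, -⟩ := dx_exists_emb' τ x _ hj2
    exact h3 p hp j hj1 ⟨⟨f, hf⟩, ⟨g, hg⟩⟩
  have hσ : ∀ x, x ∉ Set.range f → ¬ p ∣ Function.minimalPeriod σ x := by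
    intro x hxf hx
    obtain ⟨j, hj1, hj2⟩ := hj σ x hx
    obtain ⟨g, hg, hg0⟩ := dx_exists_emb' σ x _ hj2
    have hdis : ∀ i k, f i ≠ g k := by
      intro i k hik
      apply hxf
      have : NeZero (j * p) := ⟨by
        have := (Finset.mem_Icc.1 hj1).1
        have := hpp.pos
        positivity⟩
      have e := dx_iter hg (-k).val k
      simp only [ZMod.natCast_val, ZMod.cast_id', id_eq, add_neg_cancel, hg0] at e
      rw [← hik, dx_iter hf] at e
      exact ⟨_, e⟩
    refine h2 p hp j hj1 ⟨⟨Sum.elim f g, f.injective.sumElim g.injective hdis⟩, ?_⟩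
    rintro (i | i)
    · exact hf i
    · exact hg i
  classical
  have : Fact p.Prime := ⟨hpp⟩
  let A : ℕ := ∏ x : α, if x ∈ Set.range f then 1 else Function.minimalPeriod σ x
  let B : ℕ := ∏ x : α, Function.minimalPeriod τ x
  have hpM : ¬ p ∣ A * B := by
    intro h
    rcases hpp.prime.dvd_or_dvd h with h | h
    · obtain ⟨x, -, hx⟩ := hpp.prime.exists_mem_finset_dvd h
      split_ifs at hx with hxf
      · exact hpp.one_lt.ne' (Nat.dvd_one.1 hx)
      · exact hσ x hxf hx
    · obtain ⟨x, -, hx⟩ := hpp.prime.exists_mem_finset_dvd h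
      exact hτ x hx
  have hfix : ∀ (ρ : Perm α) (x : α) (m : ℕ), Function.minimalPeriod ρ x ∣ m → (ρ ^ m) x = x := by
    intro ρ x m hm
    have := (Function.isPeriodicPt_iff_minimalPeriod_dvd (f := ρ) (x := x)).2 hm
    rw [Function.IsPeriodicPt, Function.IsFixedPt, Perm.iterate_eq_pow] at this
    exact this
  have hτM : τ ^ (A * B) = 1 := by
    ext x
    rw [Perm.one_apply]
    exact hfix τ x _ (Dvd.dvd.mul_left (Finset.dvd_prod_of_mem _ (Finset.mem_univ x)) _)
  have hσfix : ∀ x, x ∉ Set.range f → (σ ^ (A * B)) x = x := by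
    intro x hx
    apply hfix
    apply Dvd.dvd.mul_right
    have := Finset.dvd_prod_of_mem
      (fun x : α => if x ∈ Set.range f then 1 else Function.minimalPeriod σ x) (Finset.mem_univ x)
    simp only [if_neg hx] at this
    exact this
  have hsupp : (σ ^ (A * B)).support = Finset.univ.map f := by
    ext x
    rw [mem_support]
    simp only [Finset.mem_map, Finset.mem_univ, true_and]
    constructor
    · intro h
      by_contra h'
      exact h (hσfix x h')
    · rintro ⟨i, rfl⟩
      rw [dx_iter_pow hf, Ne, f.injective.eq_iff]
      intro h
      apply hpM
      rw [← ZMod.natCast_eq_zero_iff]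
      simpa using h
  have hcard : (σ ^ (A * B)).support.card = p := by
    rw [hsupp, Finset.card_map, Finset.card_univ, ZMod.card]
  have hord : orderOf (σ ^ (A * B)) = p := by
    apply orderOf_eq_prime
    · ext x
      rw [Perm.one_apply]
      by_cases hx : x ∈ Set.range f
      · obtain ⟨i, rfl⟩ := hx
        rw [← pow_mul, dx_iter_pow hf]
        simp
      · rw [← Perm.iterate_eq_pow]
        exact Function.iterate_fixed (hσfix x hx) p
    · intro h
      rw [h] at hcard
      simp at hcard
      exact hpp.ne_zero hcard.symm
  refine ⟨p, hp, A * B, ?_, hcard, hτM⟩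
  apply isCycle_of_prime_order
  · rw [hord]; exact hpp
  · rw [hord, hcard]
    have := hpp.pos
    omega

lemma dx_bad (P : Finset ℕ) (hP : ∀ p ∈ P, p.Prime ∧ p ≤ Fintype.card α)
    (hμ : 0 < ∑ p ∈ P, (1 / p : ℝ)) :
    ({q : Perm α × Perm α | ¬ dxGood P q.1 q.2}.ncard : ℝ) ≤
      ((Fintype.card α).factorial : ℝ) ^ 2 * (1 / (∑ p ∈ P, (1 / p : ℝ)) +
        ∑ p ∈ P, ∑ j ∈ Finset.Icc 1 (Fintype.card α), 2 * (1 / ((p : ℝ) * (j * p)))) := by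
  classical
  set F : ℝ := ((Fintype.card α).factorial : ℝ) with hF
  have hF0 : 0 ≤ F := by positivity
  let b1 : Finset (Perm α) := {σ : Perm α | ∀ p ∈ P, dxY p σ = 0}.toFinset
  let b2 : ℕ → ℕ → Finset (Perm α) := fun p j =>
    {σ : Perm α | (dxE (Equiv.sumCongr (dxR p) (dxR (j * p))) σ).Nonempty}.toFinset
  let b3 : ℕ → Finset (Perm α) := fun a => {σ : Perm α | (dxE (dxR a) σ).Nonempty}.toFinset
  have hsub : {q : Perm α × Perm α | ¬ dxGood P q.1 q.2}.toFinset ⊆ (b1 ×ˢ Finset.univ) ∪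
      P.biUnion (fun p => (Finset.Icc 1 (Fintype.card α)).biUnion (fun j =>
        (b2 p j ×ˢ Finset.univ) ∪ (b3 p ×ˢ b3 (j * p)))) := by
    rintro ⟨σ, τ⟩ hq
    have hq : ¬ dxGood P σ τ := by simpa using hq
    by_contra hcon
    apply hq
    simp only [Finset.mem_union, Finset.mem_biUnion, Finset.mem_product, Finset.mem_univ, and_true,
      b1, b2, b3, Set.mem_toFinset, Set.mem_ofPred_eq, not_or, not_exists, not_and] at hcon
    apply dx_good P (fun p hp => (hP p hp).1)
    · by_contra hne
      push Not at hne
      apply hcon.1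
      intro p hp
      rw [dxY, hne p hp]
      simp
    · intro p hp j hj
      exact (hcon.2 p hp j hj).1
    · rintro p hp j hj ⟨h1, h2⟩
      exact (hcon.2 p hp j hj).2 h1 h2
  have huniv : ((Finset.univ : Finset (Perm α)).card : ℝ) = F := by
    rw [Finset.card_univ, Fintype.card_perm]
  have c1 : (b1.card : ℝ) ≤ F * (1 / (∑ p ∈ P, (1 / p : ℝ))) := by
    have := dx_second (α := α) P (fun p hp => ⟨(hP p hp).1.pos, (hP p hp).2⟩)
    rw [Set.ncard_eq_toFinset_card'] at this
    rw [mul_one_div, le_div_iff₀ hμ]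
    exact this
  have c2 : ∀ p ∈ P, ∀ j ∈ Finset.Icc 1 (Fintype.card α),
      ((b2 p j).card : ℝ) ≤ F * (1 / ((p : ℝ) * (j * p))) := by
    intro p hp j hj
    have hp0 := (hP p hp).1.pos
    have hj0 := (Finset.mem_Icc.1 hj).1
    have := dx_cnt2 (α := α) (a := p) (b := j * p) hp0 (by positivity)
    rw [Set.ncard_eq_toFinset_card'] at this
    rw [mul_one_div, le_div_iff₀ (by positivity)]
    rw [hF]
    exact_mod_cast this
  have c3 : ∀ a, 0 < a → ((b3 a).card : ℝ) ≤ F * (1 / a) := by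
    intro a ha
    have := dx_cnt1 (α := α) (a := a) ha
    rw [Set.ncard_eq_toFinset_card'] at this
    rw [mul_one_div, le_div_iff₀ (by positivity)]
    rw [hF]
    exact_mod_cast this
  rw [Set.ncard_eq_toFinset_card']
  calc (({q : Perm α × Perm α | ¬ dxGood P q.1 q.2}.toFinset.card : ℕ) : ℝ)
      ≤ ((b1.card * (Finset.univ : Finset (Perm α)).card + ∑ p ∈ P, ∑ j ∈ Finset.Icc 1 (Fintype.card α),
        ((b2 p j).card * (Finset.univ : Finset (Perm α)).card + (b3 p).card * (b3 (j * p)).card) : ℕ) : ℝ) := by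
        norm_cast
        refine (Finset.card_le_card hsub).trans ((Finset.card_union_le _ _).trans ?_)
        rw [Finset.card_product]
        gcongr
        refine Finset.card_biUnion_le.trans (Finset.sum_le_sum fun p hp => ?_)
        refine Finset.card_biUnion_le.trans (Finset.sum_le_sum fun j hj => ?_)
        refine (Finset.card_union_le _ _).trans ?_
        rw [Finset.card_product, Finset.card_product]
    _ ≤ F * (1 / (∑ p ∈ P, (1 / p : ℝ))) * F + ∑ p ∈ P, ∑ j ∈ Finset.Icc 1 (Fintype.card α),
        (F * (1 / ((p : ℝ) * (j * p))) * F + (F * (1 / p)) * (F * (1 / (j * p : ℕ)))) := by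
        push_cast
        rw [huniv]
        gcongr with p hp j hj
        · exact c2 p hp j hj
        · exact c3 p (hP p hp).1.pos
        · have := c3 (j * p) (by
            have := (hP p hp).1.pos
            have := (Finset.mem_Icc.1 hj).1
            positivity)
          exact_mod_cast this
    _ = _ := by
        rw [mul_add, Finset.mul_sum]
        congr 1
        · ring
        · apply Finset.sum_congr rfl; intro p hp
          rw [Finset.mul_sum]
          apply Finset.sum_congr rfl; intro j hj
          have hp0 : (p : ℝ) ≠ 0 := by exact_mod_cast (hP p hp).1.ne_zero
          have hj0 : (j : ℝ) ≠ 0 := by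
            have := (Finset.mem_Icc.1 hj).1
            exact_mod_cast (by omega : j ≠ 0)
          push_cast
          field_simp
          ring

end CountPart

section PrimPart
open Equiv Equiv.Perm MulAction
open scoped Pointwise
set_option linter.unusedSectionVars false
set_option linter.unusedSimpArgs false

lemma dx_fix {G Ω : Type*} [Group G] [Fintype G] [MulAction G Ω] (S : Set Ω) (w0 : Ω)
    (hS : S = orbit G w0) :
    {q : G × G | ∃ w ∈ S, q.1 • w = w ∧ q.2 • w = w}.ncard * S.ncard ≤ (Fintype.card G) ^ 2 := by
  classical
  have hfin : S.Finite := by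
    rw [hS]; exact Set.finite_range _
  let T : Finset Ω := hfin.toFinset
  have hT : S.ncard = T.card := Set.ncard_eq_toFinset_card S hfin
  have hst : ∀ w ∈ T, Fintype.card (stabilizer G w) * T.card = Fintype.card G := by
    intro w hw
    have hw : w ∈ orbit G w0 := by rw [← hS]; simpa [T] using hw
    have : Finite (orbit G w) := (Set.finite_range _ : (Set.range fun g : G => g • w).Finite)
    have : Fintype (orbit G w) := Fintype.ofFinite _
    have h := MulAction.card_orbit_mul_card_stabilizer_eq_card_group G w
    rw [← h, mul_comm]
    congr 1
    rw [← hT, hS, ← orbit_eq_iff.2 hw, ← Nat.card_coe_set_eq, Nat.card_eq_fintype_card]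
  have hsub : {q : G × G | ∃ w ∈ S, q.1 • w = w ∧ q.2 • w = w}.toFinset ⊆
      T.biUnion (fun w => (Finset.univ.filter (fun g : G => g • w = w)) ×ˢ
        (Finset.univ.filter (fun g : G => g • w = w))) := by
    intro q hq
    simpa [T] using hq
  have hcard : ∀ w : Ω, (Finset.univ.filter (fun g : G => g • w = w)).card = Fintype.card (stabilizer G w) := by
    intro w
    rw [Fintype.card_subtype]
    rfl
  rw [Set.ncard_eq_toFinset_card', hT]
  have h1 : {q : G × G | ∃ w ∈ S, q.1 • w = w ∧ q.2 • w = w}.toFinset.card ≤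
      ∑ w ∈ T, Fintype.card (stabilizer G w) * Fintype.card (stabilizer G w) := by
    refine (Finset.card_le_card hsub).trans (Finset.card_biUnion_le.trans ?_)
    simp only [Finset.card_product, hcard, le_refl]
  rcases Nat.eq_zero_or_pos T.card with h0 | h0
  · rw [h0]; simp
  · apply Nat.le_of_mul_le_mul_right _ h0
    calc _ ≤ ((∑ w ∈ T, Fintype.card (stabilizer G w) * Fintype.card (stabilizer G w)) * T.card) * T.card := by
          gcongr
      _ = ∑ w ∈ T, (Fintype.card G) ^ 2 := by
          rw [Finset.sum_mul, Finset.sum_mul]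
          apply Finset.sum_congr rfl
          intro w hw
          rw [← hst w hw]; ring
      _ = _ := by simp [mul_comm]

variable {α : Type*} [Fintype α] [DecidableEq α]

lemma dx_set_trans (s t : Set α) (h : s.ncard = t.ncard) : ∃ g : Perm α, g • s = t := by
  classical
  have hc : Nat.card s = Nat.card t := by
    rw [Nat.card_coe_set_eq, Nat.card_coe_set_eq]; exact h
  let e : s ≃ t := Classical.choice (Finite.card_eq.1 hc)
  let g : Perm α := Equiv.extendSubtype (p := fun x => x ∈ s) (q := fun x => x ∈ t) e
  refine ⟨g, ?_⟩
  have hsub : g • s ⊆ t := by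
    rintro _ ⟨x, hx, rfl⟩
    exact Equiv.extendSubtype_mem (p := fun x => x ∈ s) (q := fun x => x ∈ t) e x hx
  apply Set.eq_of_subset_of_ncard_le hsub _ (Set.toFinite _)
  rw [← h]
  exact (Set.ncard_image_of_injective s g.injective).ge

/-- partitions into blocks of size `d` -/
def dxPart (α : Type*) (d : ℕ) : Set (Set (Set α)) :=
  {C | (∀ x : α, ∃! B, B ∈ C ∧ x ∈ B) ∧ ∀ B ∈ C, B.ncard = d}

lemma dx_part_smul (d : ℕ) (C : Set (Set α)) (hC : C ∈ dxPart α d) (g : Perm α) :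
    g • C ∈ dxPart α d := by
  refine ⟨?_, ?_⟩
  · intro x
    obtain ⟨B, ⟨hB, hxB⟩, hu⟩ := hC.1 (g⁻¹ • x)
    refine ⟨g • B, ⟨Set.smul_mem_smul_set hB, by rwa [Set.mem_smul_set_iff_inv_smul_mem]⟩, ?_⟩
    rintro _ ⟨⟨B', hB', rfl⟩, hx⟩
    have hx : x ∈ g • B' := hx
    rw [Set.mem_smul_set_iff_inv_smul_mem] at hx
    change g • B' = g • B
    rw [hu B' ⟨hB', hx⟩]
  · rintro _ ⟨B, hB, rfl⟩
    rw [← hC.2 B hB]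
    exact Set.ncard_image_of_injective B g.injective

lemma dx_part_trans (d : ℕ) (hd : 0 < d) (C C' : Set (Set α)) (hC : C ∈ dxPart α d)
    (hC' : C' ∈ dxPart α d) : ∃ g : Perm α, g • C = C' := by
  classical
  have hpi : ∀ D ∈ dxPart α d, ∃ π : α → D, ∀ x (B : D), π x = B ↔ x ∈ (B : Set α) := by
    intro D hD
    choose π hπ using fun x => (hD.1 x).exists
    refine ⟨fun x => ⟨π x, (hπ x).1⟩, fun x B => ⟨?_, ?_⟩⟩
    · rintro rfl; exact (hπ x).2
    · intro hx
      apply Subtype.ext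
      exact (hD.1 x).unique (hπ x) ⟨B.2, hx⟩
  obtain ⟨π, hπ⟩ := hpi C hC
  obtain ⟨rho, hrho⟩ := hpi C' hC'
  have hfib : ∀ (D : Set (Set α)) (hD : D ∈ dxPart α d) (π : α → D)
      (_ : ∀ x (B : D), π x = B ↔ x ∈ (B : Set α)) (B : D), Nat.card {x // π x = B} = d := by
    intro D hD π hπ B
    simp only [hπ]
    exact hD.2 B B.2
  have hcnt : ∀ (D : Set (Set α)) (hD : D ∈ dxPart α d) (π : α → D)
      (_ : ∀ x (B : D), π x = B ↔ x ∈ (B : Set α)), Nat.card D * d = Nat.card α := by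
    intro D hD π hπ
    rw [← Nat.card_congr (Equiv.sigmaFiberEquiv π), Nat.card_sigma]
    rw [Finset.sum_congr rfl (fun B _ => hfib D hD π hπ B), Finset.sum_const, Finset.card_univ,
      Nat.card_eq_fintype_card, smul_eq_mul]
  have hcc : Nat.card C = Nat.card C' :=
    Nat.eq_of_mul_eq_mul_right hd ((hcnt C hC π hπ).trans (hcnt C' hC' rho hrho).symm)
  let e : C ≃ C' := Classical.choice (Finite.card_eq.1 hcc)
  let ε : ∀ B : C, {x // π x = B} ≃ {x // rho x = e B} := fun B =>
    Classical.choice (Finite.card_eq.1 <| (hfib C hC π hπ B).trans (hfib C' hC' rho hrho (e B)).symm)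
  let g : Perm α := (Equiv.sigmaFiberEquiv π).symm.trans
    ((Equiv.sigmaCongr e ε).trans (Equiv.sigmaFiberEquiv rho))
  have hg : ∀ x, rho (g x) = e (π x) := by
    intro x
    exact (ε (π x) ⟨x, rfl⟩).2
  have key : ∀ B : C, g • (B : Set α) = (e B : Set α) := by
    intro B
    ext y
    rw [Set.mem_smul_set_iff_inv_smul_mem, ← hπ, ← hrho, ← e.injective.eq_iff, ← hg]
    simp
  refine ⟨g, ?_⟩
  ext D
  constructor
  · rintro ⟨B, hB, rfl⟩
    have := key ⟨B, hB⟩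
    change g • B ∈ C'
    rw [this]
    exact (e ⟨B, hB⟩).2
  · intro hD
    refine ⟨e.symm ⟨D, hD⟩, Subtype.coe_prop _, ?_⟩
    change g • _ = D
    rw [key]; simp

lemma dx_part_card (d : ℕ) (hd : 0 < d) (C : Set (Set α)) (hC : C ∈ dxPart α d) (a : α) :
    (Fintype.card α - 1).choose (d - 1) ≤ (dxPart α d).ncard := by
  classical
  obtain ⟨B0, ⟨hB0, -⟩, -⟩ := hC.1 a
  have hex : ∀ t : Finset α, t ∈ Finset.powersetCard (d - 1) (Finset.univ.erase a) →
      ∃ D ∈ dxPart α d, ((insert a t : Finset α) : Set α) ∈ D := by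
    intro t ht
    rw [Finset.mem_powersetCard] at ht
    have hat : a ∉ t := fun h => by simpa using ht.1 h
    obtain ⟨g, hg⟩ := dx_set_trans B0 ((insert a t : Finset α) : Set α) (by
      rw [hC.2 B0 hB0, Set.ncard_coe_finset, Finset.card_insert_of_notMem hat, ht.2]
      omega)
    refine ⟨g • C, dx_part_smul d C hC g, ?_⟩
    rw [← hg]
    exact Set.smul_mem_smul_set hB0
  choose! φ hφ1 hφ2 using hex
  have : (Finset.powersetCard (d - 1) (Finset.univ.erase a)).card = (Fintype.card α - 1).choose (d - 1) := by
    rw [Finset.card_powersetCard, Finset.card_erase_of_mem (Finset.mem_univ a), Finset.card_univ]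
  rw [← this, ← Set.ncard_coe_finset]
  apply Set.ncard_le_ncard_of_injOn φ
  · intro t ht
    exact hφ1 t ht
  · intro t ht t' ht' h
    have h1 := hφ2 t ht
    have h2 := hφ2 t' ht'
    rw [← h] at h2
    have h3 := ((hφ1 t ht).1 a).unique ⟨h1, by simp⟩ ⟨h2, by simp⟩
    have h4 : insert a t = insert a t' := by exact_mod_cast h3
    have ha : ∀ t ∈ (Finset.powersetCard (d - 1) (Finset.univ.erase a) : Set (Finset α)), a ∉ t := by
      intro t ht h
      have := (Finset.mem_powersetCard.1 ht).1 h
      simp at this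
    rw [← Finset.erase_insert (ha t ht), h4, Finset.erase_insert (ha t' ht')]

lemma dx_prim_dichotomy (σ τ : Perm α) (hα : 2 ≤ Fintype.card α)
    (h : ¬ IsPreprimitive (Subgroup.closure {σ, τ}) α) :
    (∃ i ∈ Finset.Ioo 0 (Fintype.card α), ∃ s ∈ {s : Set α | s.ncard = i}, σ • s = s ∧ τ • s = s) ∨
    (∃ i ∈ Finset.Ioo 0 (Fintype.card α - 1), ∃ C ∈ dxPart α (i + 1), σ • C = C ∧ τ • C = C) := by
  classical
  set H := Subgroup.closure {σ, τ} with hH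
  have mσ : σ ∈ H := Subgroup.subset_closure (by simp)
  have mτ : τ ∈ H := Subgroup.subset_closure (by simp)
  have hne : Nonempty α := Fintype.card_pos_iff.1 (by omega)
  have hlt : ∀ s : Set α, s ≠ Set.univ → s.ncard < Fintype.card α := by
    intro s hs
    rw [← Nat.card_eq_fintype_card]
    exact Set.ncard_lt_card hs
  have hr : ∀ g ∈ H, ∀ B : Set α, g • (Set.range fun g : H => g • B) = Set.range fun g : H => g • B := by
    intro g hg B
    ext D
    rw [Set.mem_smul_set_iff_inv_smul_mem]
    constructor
    · rintro ⟨k, hk⟩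
      refine ⟨⟨g, hg⟩ * k, ?_⟩
      have hk : k • B = g⁻¹ • D := hk
      change (⟨g, hg⟩ * k : H) • B = D
      rw [mul_smul, hk]
      change g • g⁻¹ • D = D
      simp
    · rintro ⟨k, rfl⟩
      refine ⟨⟨g, hg⟩⁻¹ * k, ?_⟩
      change ((⟨g, hg⟩ : H)⁻¹ * k : H) • B = g⁻¹ • k • B
      rw [mul_smul]
      rfl
  by_cases htr : IsPretransitive H α
  · right
    have : ∃ B : Set α, IsBlock H B ∧ ¬ IsTrivialBlock B := by
      by_contra! hcon
      exact h ⟨fun {B} hB => hcon B hB⟩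
    obtain ⟨B, hB, hnt⟩ := this
    rw [IsTrivialBlock, not_or] at hnt
    have hB1 : 1 < B.ncard := by
      rw [← not_le, Set.ncard_le_one_iff_subsingleton]
      exact hnt.1
    have hB2 := hlt B hnt.2
    have hBne : B.Nonempty := Set.nonempty_of_ncard_ne_zero (by omega)
    have hsys := hB.isBlockSystem hBne
    refine ⟨B.ncard - 1, by rw [Finset.mem_Ioo]; omega, Set.range fun g : H => g • B, ⟨?_, ?_⟩, ?_, ?_⟩
    · exact hsys.1.2
    · rintro _ ⟨g, rfl⟩
      rw [Nat.sub_add_cancel hB1.le]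
      exact Set.ncard_image_of_injective B (MulAction.injective g)
    · exact hr σ mσ B
    · exact hr τ mτ B
  · left
    obtain ⟨x, y, hxy⟩ : ∃ x y : α, y ∉ orbit H x := by
      by_contra! hcon
      exact htr ⟨fun x y => hcon x y⟩
    have ho : ∀ g ∈ H, g • orbit H x = orbit H x := by
      intro g hg
      exact smul_orbit (⟨g, hg⟩ : H) x
    refine ⟨(orbit H x).ncard, ?_, orbit H x, rfl, ho σ mσ, ho τ mτ⟩
    rw [Finset.mem_Ioo]
    refine ⟨(Set.ncard_pos).2 ⟨x, mem_orbit_self x⟩, hlt _ ?_⟩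
    intro h
    exact hxy (h ▸ Set.mem_univ y)

lemma dx_prim_bad (hα : 2 ≤ Fintype.card α) :
    ({q : Perm α × Perm α | ¬ IsPreprimitive (Subgroup.closure {q.1, q.2}) α}.ncard : ℝ) ≤
      ((Fintype.card α).factorial : ℝ) ^ 2 *
        (∑ i ∈ Finset.Ioo 0 (Fintype.card α), (1 / ((Fintype.card α).choose i) : ℝ) +
         ∑ i ∈ Finset.Ioo 0 (Fintype.card α - 1), (1 / ((Fintype.card α - 1).choose i) : ℝ)) := by
  classical
  set n := Fintype.card α with hn
  have hne : Nonempty α := Fintype.card_pos_iff.1 (by omega)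
  obtain ⟨a⟩ := hne
  let E1 : ℕ → Set (Perm α × Perm α) := fun i =>
    {q | ∃ s ∈ {s : Set α | s.ncard = i}, q.1 • s = s ∧ q.2 • s = s}
  let E2 : ℕ → Set (Perm α × Perm α) := fun i =>
    {q | ∃ C ∈ dxPart α (i + 1), q.1 • C = C ∧ q.2 • C = C}
  have hG : Fintype.card (Perm α) = n.factorial := Fintype.card_perm
  have hb : ∀ (x y c : ℕ), 0 < c → c ≤ y → x * y ≤ n.factorial ^ 2 →
      (x : ℝ) ≤ (n.factorial : ℝ) ^ 2 * (1 / c) := by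
    intro x y c hc hcy h
    rw [mul_one_div, le_div_iff₀ (by exact_mod_cast hc)]
    exact_mod_cast (Nat.mul_le_mul_left x hcy).trans h
  have h1 : ∀ i ∈ Finset.Ioo 0 n, ((E1 i).ncard : ℝ) ≤ (n.factorial : ℝ) ^ 2 * (1 / (n.choose i)) := by
    intro i hi
    rw [Finset.mem_Ioo] at hi
    obtain ⟨s0, -, hs0⟩ := Finset.exists_subset_card_eq (s := (Finset.univ : Finset α)) (n := i)
      (by rw [Finset.card_univ]; exact hi.2.le)
    have horb : {s : Set α | s.ncard = i} = orbit (Perm α) (s0 : Set α) := by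
      ext t
      constructor
      · intro ht
        have ht : t.ncard = i := ht
        obtain ⟨g, hg⟩ := dx_set_trans (s0 : Set α) t (by rw [Set.ncard_coe_finset, hs0, ht])
        exact ⟨g, hg⟩
      · rintro ⟨g, rfl⟩
        change (g • (s0 : Set α)).ncard = i
        rw [← hs0, ← Set.ncard_coe_finset]
        exact Set.ncard_image_of_injective _ g.injective
    have := dx_fix _ _ horb
    rw [hG] at this
    refine hb _ _ _ (Nat.choose_pos hi.2.le) ?_ this
    have hp : (Finset.powersetCard i (Finset.univ : Finset α)).card = n.choose i := by
      rw [Finset.card_powersetCard, Finset.card_univ]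
    rw [← hp, ← Set.ncard_coe_finset]
    apply Set.ncard_le_ncard_of_injOn (fun t : Finset α => (t : Set α))
    · intro t ht
      change (t : Set α).ncard = i
      rw [Set.ncard_coe_finset]
      exact (Finset.mem_powersetCard.1 ht).2
    · intro t _ t' _ h
      exact Finset.coe_injective h
  have h2 : ∀ i ∈ Finset.Ioo 0 (n - 1), ((E2 i).ncard : ℝ) ≤ (n.factorial : ℝ) ^ 2 * (1 / ((n - 1).choose i)) := by
    intro i hi
    rw [Finset.mem_Ioo] at hi
    rcases (dxPart α (i + 1)).eq_empty_or_nonempty with he | ⟨C0, hC0⟩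
    · have : E2 i = ∅ := by
        ext q
        simp [E2, he]
      rw [this]
      simp only [Set.ncard_empty, Nat.cast_zero]
      positivity
    have horb : dxPart α (i + 1) = orbit (Perm α) C0 := by
      ext t
      constructor
      · intro ht
        obtain ⟨g, hg⟩ := dx_part_trans (i + 1) (by omega) C0 t hC0 ht
        exact ⟨g, hg⟩
      · rintro ⟨g, rfl⟩
        exact dx_part_smul _ C0 hC0 g
    have := dx_fix _ _ horb
    rw [hG] at this
    exact hb _ _ _ (Nat.choose_pos hi.2.le) (dx_part_card (i + 1) (by omega) C0 hC0 a) this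
  have hsub : {q : Perm α × Perm α | ¬ IsPreprimitive (Subgroup.closure {q.1, q.2}) α} ⊆
      (⋃ i ∈ Finset.Ioo 0 n, E1 i) ∪ (⋃ i ∈ Finset.Ioo 0 (n - 1), E2 i) := by
    intro q hq
    rcases dx_prim_dichotomy q.1 q.2 hα hq with ⟨i, hi, h⟩ | ⟨i, hi, h⟩
    · exact Or.inl (Set.mem_iUnion₂.2 ⟨i, hi, h⟩)
    · exact Or.inr (Set.mem_iUnion₂.2 ⟨i, hi, h⟩)
  have hU : ∀ (F : Finset ℕ) (E : ℕ → Set (Perm α × Perm α)),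
      (⋃ i ∈ F, E i).ncard ≤ ∑ i ∈ F, (E i).ncard := by
    intro F E
    exact Finset.set_ncard_biUnion_le F E
  have hle : {q : Perm α × Perm α | ¬ IsPreprimitive (Subgroup.closure {q.1, q.2}) α}.ncard ≤
      ∑ i ∈ Finset.Ioo 0 n, (E1 i).ncard + ∑ i ∈ Finset.Ioo 0 (n - 1), (E2 i).ncard :=
    ((Set.ncard_le_ncard hsub (Set.toFinite _)).trans (Set.ncard_union_le _ _)).trans
      (Nat.add_le_add (hU _ _) (hU _ _))
  have hle' : (({q : Perm α × Perm α | ¬ IsPreprimitive (Subgroup.closure {q.1, q.2}) α}.ncard : ℕ) : ℝ) ≤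
      ∑ i ∈ Finset.Ioo 0 n, ((E1 i).ncard : ℝ) + ∑ i ∈ Finset.Ioo 0 (n - 1), ((E2 i).ncard : ℝ) := by
    exact_mod_cast hle
  refine hle'.trans ?_
  rw [mul_add, Finset.mul_sum, Finset.mul_sum]
  exact add_le_add (Finset.sum_le_sum h1) (Finset.sum_le_sum h2)

end PrimPart

section BinomPart

lemma dx_choose_two (n : ℕ) : ∀ i, 2 ≤ i → i + 2 ≤ n → n.choose 2 ≤ n.choose i := by
  induction n with
  | zero => intro i h1 h2; omega
  | succ n ih =>
    intro i h1 h2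
    obtain ⟨j, rfl⟩ : ∃ j, i = j + 1 := ⟨i - 1, by omega⟩
    rcases Nat.lt_or_ge j 2 with hj | hj
    · have : j = 1 := by omega
      subst this; exact le_rfl
    · have h3 := ih j hj (by omega)
      rw [Nat.choose_succ_succ, Nat.choose_succ_succ]
      have h4 : n.choose 1 ≤ n.choose (j+1) := by
        have : n.choose (n - (j+1)) = n.choose (j+1) := Nat.choose_symm (by omega)
        rcases Nat.lt_or_ge n (j + 3) with h5 | h5
        · have h6 : n = j + 2 := by omega
          subst h6
          rw [← this]
          have : j + 2 - (j+1) = 1 := by omega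
          rw [this]
        · have := ih (j+1) (by omega) (by omega)
          refine le_trans ?_ this
          rw [Nat.choose_one_right, Nat.choose_two_right, Nat.le_div_iff_mul_le (by norm_num)]
          exact Nat.mul_le_mul_left _ (by omega)
      exact (Nat.add_comm _ _).le.trans (Nat.add_le_add h3 h4)

lemma dx_binom_sum (n : ℕ) (hn : 4 ≤ n) :
    ∑ i ∈ Finset.Ioo 0 n, (1 / (n.choose i) : ℝ) ≤ 4 / (n - 1 : ℝ) := by
  have hn' : (4:ℝ) ≤ n := by exact_mod_cast hn
  have h2 : (n.choose 2 : ℝ) = n * (n - 1) / 2 := Nat.cast_choose_two ℝ n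
  have hbd : ∀ i ∈ Finset.Ioo 0 n, (1 / (n.choose i) : ℝ) ≤
      2 / (n * (n - 1)) + (if i = 1 then (1 / n : ℝ) else 0) + (if i = n - 1 then (1 / n : ℝ) else 0) := by
    intro i hi
    rw [Finset.mem_Ioo] at hi
    have hp : (0:ℝ) ≤ 2 / (n * (n - 1)) := div_nonneg (by norm_num) (mul_nonneg (by linarith) (by linarith))
    have hq : (0:ℝ) ≤ 1 / n := by positivity
    by_cases h1 : i = 1
    · subst h1
      rw [if_pos rfl, Nat.choose_one_right]
      split_ifs <;> linarith
    by_cases h3 : i = n - 1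
    · subst h3
      rw [if_pos rfl, if_neg h1, Nat.choose_symm (by omega : 1 ≤ n), Nat.choose_one_right]
      linarith
    rw [if_neg h1, if_neg h3, add_zero, add_zero]
    have h4 : (n.choose 2 : ℝ) ≤ n.choose i := by
      exact_mod_cast dx_choose_two n i (by omega) (by omega)
    rw [h2] at h4
    have h5 : (0:ℝ) < n * (n - 1) := mul_pos (by linarith) (by linarith)
    have h6 : (2 / (n * (n - 1)) : ℝ) = 1 / (n * (n - 1) / 2) := by field_simp
    rw [h6]
    exact one_div_le_one_div_of_le (by linarith) h4
  refine (Finset.sum_le_sum hbd).trans ?_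
  rw [Finset.sum_add_distrib, Finset.sum_add_distrib, Finset.sum_const, Finset.sum_ite_eq',
    Finset.sum_ite_eq', if_pos (by simp; omega), if_pos (by simp; omega), Nat.card_Ioo, nsmul_eq_mul]
  have h7 : ((n - 0 - 1 : ℕ) : ℝ) = n - 1 := by
    rw [Nat.cast_sub (by omega)]; simp
  rw [h7]
  have h8 : (0:ℝ) < n - 1 := by linarith
  have h9 : (0:ℝ) < n := by linarith
  have : ((n:ℝ) - 1) * (2 / (n * (n - 1))) + 1 / n + 1 / n = 4 / n := by field_simp; ring
  rw [this]
  gcongr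
  linarith

end BinomPart

section NumPart

lemma dx_pow_bound (j : ℕ) (hj : 7 ≤ j) : 8 * (j + 1) + 1 ≤ 2 ^ j := by
  induction j, hj using Nat.le_induction with
  | base => norm_num
  | succ k hk ih => rw [pow_succ]; omega

lemma dx_prime_block (j : ℕ) (hj : 7 ≤ j) :
    (1 / (8 * (j + 1)) : ℝ) ≤
      ∑ p ∈ (Finset.Ioc (4 ^ j) (4 ^ (j + 1))).filter Nat.Prime, (1 / p : ℝ) := by
  set L := Real.log 2 with hL
  have hLpos : 0 < L := Real.log_pos (by norm_num)
  have hlog4 : Real.log 4 = 2 * L := by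
    rw [show (4:ℝ) = 2 ^ 2 by norm_num, Real.log_pow, hL]; norm_num
  have hlogj : Real.log ((4 : ℝ) ^ (j + 1)) = 2 * (j + 1) * L := by
    rw [Real.log_pow, hlog4]; push_cast; ring
  have hup := Chebyshev.theta_le_log4_mul_x (x := ((4 ^ j : ℕ) : ℝ)) (by positivity)
  have hlo := Chebyshev.theta_ge (4 ^ (j + 1))
  have hsqrt : √((4 ^ (j + 1) : ℕ) : ℝ) = 2 * 2 ^ j := by
    rw [Real.sqrt_eq_iff_mul_self_eq (by positivity) (by positivity)]
    push_cast
    rw [show (4:ℝ) = 2 * 2 by norm_num, mul_pow]; ring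
  have hdiff : Chebyshev.theta ((4 ^ (j+1) : ℕ) : ℝ) = Chebyshev.theta ((4 ^ j : ℕ) : ℝ) +
      ∑ p ∈ (Finset.Ioc (4 ^ j) (4 ^ (j + 1))).filter Nat.Prime, Real.log p := by
    rw [Chebyshev.theta, Chebyshev.theta, Nat.floor_natCast, Nat.floor_natCast,
      Finset.sum_filter, Finset.sum_filter, Finset.sum_filter]
    exact (Finset.sum_Ioc_consecutive _ (Nat.zero_le _) (Nat.pow_le_pow_right (by norm_num) (by omega))).symm
  have hl1 : Real.log (((4 ^ (j + 1) : ℕ) : ℝ) + 1) ≤ 2 * (j + 2) * L := by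
    have : Real.log ((4:ℝ) ^ (j + 2)) = 2 * (j + 2) * L := by
      rw [Real.log_pow, hlog4]; push_cast; ring
    rw [← this]
    apply Real.log_le_log (by positivity)
    push_cast
    have : (1:ℝ) ≤ 4 ^ (j + 1) := one_le_pow₀ (by norm_num)
    rw [pow_succ 4 (j + 1)]; linarith
  have hb : (8 * ((j:ℝ) + 1) + 1) ≤ 2 ^ j := by exact_mod_cast dx_pow_bound j hj
  rw [hsqrt] at hlo
  push_cast at hlo hup hdiff hl1
  rw [hlogj] at hlo
  rw [hlog4] at hup
  have h4 : (4:ℝ) ^ j = 2 ^ j * 2 ^ j := by rw [← mul_pow]; norm_num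
  have hjp : (0:ℝ) ≤ j := Nat.cast_nonneg j
  have hmain : (4:ℝ) ^ j * L ≤
      ∑ p ∈ (Finset.Ioc (4 ^ j) (4 ^ (j + 1))).filter Nat.Prime, Real.log p := by
    have e1 : (4:ℝ) ^ (j + 1) = 4 * 4 ^ j := by ring
    have e2 : (2 * (j + 2) + 8 * 2 ^ j * (j + 1) : ℝ) ≤ 4 ^ j := by
      rw [h4]
      nlinarith
    have e3 := mul_le_mul_of_nonneg_right e2 hLpos.le
    rw [e1] at hlo hdiff hl1
    nlinarith
  have hterm : ∀ p ∈ (Finset.Ioc (4 ^ j) (4 ^ (j + 1))).filter Nat.Prime,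
      Real.log p * (1 / (4 ^ (j + 1) * (2 * (j + 1) * L))) ≤ (1 / p : ℝ) := by
    intro p hp
    rw [Finset.mem_filter, Finset.mem_Ioc] at hp
    have hp0 : (0:ℝ) < p := by exact_mod_cast hp.2.pos
    have hp1 : (p:ℝ) ≤ 4 ^ (j + 1) := by exact_mod_cast hp.1.2
    have hlp : Real.log p ≤ 2 * (j + 1) * L := by
      rw [← hlogj]; exact Real.log_le_log hp0 hp1
    rw [mul_one_div, div_le_div_iff₀ (by positivity) hp0, one_mul, mul_comm]
    exact mul_le_mul hp1 hlp (Real.log_nonneg (by exact_mod_cast hp.2.one_lt.le)) (by positivity)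
  refine le_trans ?_ (Finset.sum_le_sum hterm)
  rw [← Finset.sum_mul]
  refine le_trans (le_of_eq ?_) (mul_le_mul_of_nonneg_right hmain (by positivity))
  rw [pow_succ]
  field_simp
  norm_num

lemma dx_prime_sum (a b : ℕ) (ha : 7 ≤ a) (hab : a ≤ b) :
    (1 / 8 : ℝ) * ((harmonic b : ℝ) - (harmonic a : ℝ)) ≤
      ∑ p ∈ (Finset.Ioc (4 ^ a) (4 ^ b)).filter Nat.Prime, (1 / p : ℝ) := by
  induction b, hab using Nat.le_induction with
  | base => simp
  | succ k hk ih =>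
    have h := dx_prime_block k (ha.trans hk)
    have : ∑ p ∈ (Finset.Ioc (4 ^ a) (4 ^ (k+1))).filter Nat.Prime, (1 / p : ℝ) =
        ∑ p ∈ (Finset.Ioc (4 ^ a) (4 ^ k)).filter Nat.Prime, (1 / p : ℝ) +
        ∑ p ∈ (Finset.Ioc (4 ^ k) (4 ^ (k+1))).filter Nat.Prime, (1 / p : ℝ) := by
      rw [Finset.sum_filter, Finset.sum_filter, Finset.sum_filter]
      exact (Finset.sum_Ioc_consecutive _ (Nat.pow_le_pow_right (by norm_num) hk)
        (Nat.pow_le_pow_right (by norm_num) (by omega))).symm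
    rw [this, harmonic_succ]
    push_cast
    have e : (1 / (8 * (k + 1)) : ℝ) = 1 / 8 * ((k:ℝ) + 1)⁻¹ := by
      field_simp
    rw [e] at h
    linarith

lemma dx_num (a b n : ℕ) (ha : 7 ≤ a) (h1 : a * a ≤ b) (h2 : b < (a + 1) * (a + 1))
    (h3 : 2 * 4 ^ b ≤ n) (h4 : n < 2 * 4 ^ (b + 1)) :
    ∃ P : Finset ℕ, (∀ p ∈ P, p.Prime ∧ 2 * p ≤ n) ∧
      (Real.log a - 1) / 8 ≤ ∑ p ∈ P, (1 / p : ℝ) ∧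
      ∑ p ∈ P, ∑ j ∈ Finset.Icc 1 n, 2 * (1 / ((p:ℝ) * (j * p))) ≤ (4 * (a + 1) ^ 2 + 8) / 4 ^ a := by
  refine ⟨(Finset.Ioc (4 ^ a) (4 ^ b)).filter Nat.Prime, ?_, ?_, ?_⟩
  · intro p hp
    rw [Finset.mem_filter, Finset.mem_Ioc] at hp
    exact ⟨hp.2, by omega⟩
  · have hab : a ≤ b := by nlinarith
    refine le_trans ?_ (dx_prime_sum a b ha hab)
    have e1 := log_add_one_le_harmonic b
    have e2 := harmonic_le_one_add_log a
    have ha0 : (0:ℝ) < a := by exact_mod_cast (by omega : 0 < a)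
    have e3 : 2 * Real.log a ≤ Real.log ((b + 1 : ℕ) : ℝ) := by
      have : 2 * Real.log a = Real.log ((a:ℝ) * a) := by
        rw [Real.log_mul ha0.ne' ha0.ne']; ring
      rw [this]
      apply Real.log_le_log (by positivity)
      exact_mod_cast h1.trans (Nat.le_succ b)
    push_cast at e1 e3
    linarith
  · have hH : ∑ j ∈ Finset.Icc 1 n, (1 / j : ℝ) ≤ 2 * b + 4 := by
      have e := harmonic_le_one_add_log n
      rw [harmonic_eq_sum_Icc] at e
      push_cast at e
      simp only [one_div]
      refine e.trans ?_
      have hn : (n:ℝ) ≤ 2 ^ (2 * b + 3) := by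
        have : 2 * 4 ^ (b + 1) = 2 ^ (2 * b + 3) := by
          rw [show 4 = 2 ^ 2 by norm_num, ← pow_mul]; ring
        exact_mod_cast (this ▸ h4.le)
      have hn0 : (0:ℝ) < n := by
        have : 0 < 4 ^ b := by positivity
        exact_mod_cast (by omega : 0 < n)
      have := Real.log_le_log hn0 hn
      rw [Real.log_pow] at this
      have h2 : Real.log 2 ≤ 1 := by linarith [Real.log_two_lt_d9]
      push_cast at this
      have hb0 : (0:ℝ) ≤ b := Nat.cast_nonneg b
      nlinarith
    have hsplit : ∀ p ∈ (Finset.Ioc (4 ^ a) (4 ^ b)).filter Nat.Prime,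
        ∑ j ∈ Finset.Icc 1 n, 2 * (1 / ((p:ℝ) * (j * p))) ≤ (2 * (2 * b + 4)) * ((p:ℝ) ^ 2)⁻¹ := by
      intro p hp
      have : ∑ j ∈ Finset.Icc 1 n, 2 * (1 / ((p:ℝ) * (j * p))) =
          (2 * ∑ j ∈ Finset.Icc 1 n, (1 / j : ℝ)) * ((p:ℝ) ^ 2)⁻¹ := by
        rw [Finset.mul_sum, Finset.sum_mul]
        apply Finset.sum_congr rfl
        intro j _
        rw [one_div, one_div, mul_inv, mul_inv]; ring
      rw [this]
      gcongr
    refine (Finset.sum_le_sum hsplit).trans ?_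
    rw [← Finset.mul_sum]
    have hsq : ∑ p ∈ (Finset.Ioc (4 ^ a) (4 ^ b)).filter Nat.Prime, ((p:ℝ) ^ 2)⁻¹ ≤ (4 ^ a)⁻¹ := by
      have hab : a ≤ b := by nlinarith
      have := sum_Ioc_inv_sq_le_sub (α := ℝ) (k := 4 ^ a) (n := 4 ^ b) (by positivity)
        (Nat.pow_le_pow_right (by norm_num) hab)
      refine (Finset.sum_le_sum_of_subset_of_nonneg (Finset.filter_subset _ _)
        (fun _ _ _ => by positivity)).trans (this.trans ?_)
      push_cast
      have : (0:ℝ) ≤ (4 ^ b)⁻¹ := by positivity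
      linarith
    rw [div_eq_mul_inv]
    have hb : (b:ℝ) + 1 ≤ (a + 1) ^ 2 := by
      rw [pow_two]; exact_mod_cast h2
    gcongr
    linarith

end NumPart

section FinalPart
open Equiv Equiv.Perm MulAction

lemma dx_odd_card (n : ℕ) (hn : 2 ≤ n) :
    2 * {σ : Perm (Fin n) | sign σ = -1}.ncard = n.factorial := by
  classical
  have : Nontrivial (Fin n) := Fin.nontrivial_iff_two_le.2 hn
  have h := two_mul_nat_card_alternatingGroup (α := Fin n)
  have hc : {σ : Perm (Fin n) | sign σ = -1} = ((alternatingGroup (Fin n) : Set (Perm (Fin n))))ᶜ := by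
    ext σ
    rw [Set.mem_compl_iff, SetLike.mem_coe, mem_alternatingGroup]
    change sign σ = -1 ↔ _
    rcases Int.units_eq_one_or (sign σ) with h | h <;> rw [h] <;> decide
  have h2 := Set.ncard_add_ncard_compl (alternatingGroup (Fin n) : Set (Perm (Fin n)))
  rw [← hc] at h2
  rw [← SetLike.coe_sort_coe, Nat.card_coe_set_eq] at h
  rw [Nat.card_perm, Nat.card_eq_fintype_card, Fintype.card_fin] at h h2
  omega

lemma dx_odd_pairs (n : ℕ) (hn : 2 ≤ n) :
    ({q : Perm (Fin n) × Perm (Fin n) | sign q.1 = -1 ∧ sign q.2 = -1}.ncard : ℝ) =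
      (n.factorial : ℝ) ^ 2 * (1 / 4) := by
  have h := dx_odd_card n hn
  have hp : {q : Perm (Fin n) × Perm (Fin n) | sign q.1 = -1 ∧ sign q.2 = -1} =
      {σ : Perm (Fin n) | sign σ = -1} ×ˢ {σ : Perm (Fin n) | sign σ = -1} := rfl
  rw [hp, Set.ncard_prod, ← h]
  push_cast
  ring

lemma dx_upper (n : ℕ) (hn : 2 ≤ n) :
    (Nat.card {p : Perm (Fin n) × Perm (Fin n) //
            circGenPair p.1 p.2 = equalSignSubgroup n} : ℝ) / (Nat.factorial n : ℝ) ^ 2 ≤ 1 / 4 := by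
  have hf : (0:ℝ) < (n.factorial : ℝ) ^ 2 := by positivity
  rw [div_le_iff₀ hf, mul_comm, ← dx_odd_pairs n hn]
  have : Nat.card {p : Perm (Fin n) × Perm (Fin n) // circGenPair p.1 p.2 = equalSignSubgroup n} =
      {p : Perm (Fin n) × Perm (Fin n) | circGenPair p.1 p.2 = equalSignSubgroup n}.ncard :=
    Nat.card_coe_set_eq _
  rw [this]
  apply Nat.cast_le.2
  apply Set.ncard_le_ncard _ (Set.toFinite _)
  intro q hq
  exact dx_det_conv hn q.1 q.2 hq

lemma dx_lower (n : ℕ) (hn : 5 ≤ n) (P : Finset ℕ) (hP : ∀ p ∈ P, p.Prime ∧ 2 * p ≤ n)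
    (hμ : 0 < ∑ p ∈ P, (1 / p : ℝ)) :
    1 / 4 - ((1 / (∑ p ∈ P, (1/p:ℝ)) + ∑ p ∈ P, ∑ j ∈ Finset.Icc 1 n, 2 * (1 / ((p:ℝ) * (j * p))))
      + (4 / (n - 1 : ℝ) + 4 / (n - 2 : ℝ))) ≤
    (Nat.card {p : Perm (Fin n) × Perm (Fin n) //
            circGenPair p.1 p.2 = equalSignSubgroup n} : ℝ) / (Nat.factorial n : ℝ) ^ 2 := by
  have hf : (0:ℝ) < (n.factorial : ℝ) ^ 2 := by positivity
  have h1 := dx_bad (α := Fin n) P (fun p hp => ⟨(hP p hp).1, by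
    rw [Fintype.card_fin]; have := (hP p hp).2; omega⟩) hμ
  have h2 := dx_prim_bad (α := Fin n) (by rw [Fintype.card_fin]; omega)
  have h3 := dx_odd_pairs n (by omega)
  have h4 := dx_binom_sum n (by omega)
  have h5 := dx_binom_sum (n - 1) (by omega)
  rw [Nat.cast_sub (by omega : 1 ≤ n), Nat.cast_one] at h5
  rw [show (n:ℝ) - 1 - 1 = n - 2 by ring] at h5
  rw [Fintype.card_fin] at h1 h2
  have : Nat.card {p : Perm (Fin n) × Perm (Fin n) // circGenPair p.1 p.2 = equalSignSubgroup n} =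
      {p : Perm (Fin n) × Perm (Fin n) | circGenPair p.1 p.2 = equalSignSubgroup n}.ncard :=
    Nat.card_coe_set_eq _
  rw [this, le_div_iff₀ hf]
  have hsub : {q : Perm (Fin n) × Perm (Fin n) | sign q.1 = -1 ∧ sign q.2 = -1} ⊆
      {p : Perm (Fin n) × Perm (Fin n) | circGenPair p.1 p.2 = equalSignSubgroup n} ∪
      ({q : Perm (Fin n) × Perm (Fin n) | ¬ dxGood P q.1 q.2} ∪
      {q : Perm (Fin n) × Perm (Fin n) | ¬ IsPreprimitive (Subgroup.closure {q.1, q.2}) (Fin n)}) := by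
    intro q hq
    by_cases ha : dxGood P q.1 q.2
    · by_cases hb : IsPreprimitive (Subgroup.closure {q.1, q.2}) (Fin n)
      · left
        obtain ⟨p, hp, M, hc, hcp, hM⟩ := ha
        exact dx_det q.1 q.2 hq.1 hq.2 hb p (hP p hp).1 (hP p hp).2 M hc hcp hM
      · exact Or.inr (Or.inr hb)
    · exact Or.inr (Or.inl ha)
  have hle := (Set.ncard_le_ncard hsub (Set.toFinite _)).trans ((Set.ncard_union_le _ _).trans
    (Nat.add_le_add_left (Set.ncard_union_le _ _) _))
  have hle' : ({q : Perm (Fin n) × Perm (Fin n) | sign q.1 = -1 ∧ sign q.2 = -1}.ncard : ℝ) ≤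
      ({p : Perm (Fin n) × Perm (Fin n) | circGenPair p.1 p.2 = equalSignSubgroup n}.ncard : ℝ) +
      (({q : Perm (Fin n) × Perm (Fin n) | ¬ dxGood P q.1 q.2}.ncard : ℝ) +
      ({q : Perm (Fin n) × Perm (Fin n) | ¬ IsPreprimitive (Subgroup.closure {q.1, q.2}) (Fin n)}.ncard : ℝ)) := by
    exact_mod_cast hle
  have h6 := mul_le_mul_of_nonneg_left (add_le_add h4 h5) hf.le
  rw [h3] at hle'
  linarith

lemma dx_tend : Filter.Tendsto (fun a : ℕ => (8 / (Real.log a - 1) + (4 * ((a:ℝ) + 1) ^ 2 + 8) / 4 ^ a))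
    Filter.atTop (nhds 0) := by
  have h1 : Filter.Tendsto (fun a : ℕ => 8 / (Real.log a - 1)) Filter.atTop (nhds 0) := by
    apply Filter.Tendsto.const_div_atTop
    apply Filter.tendsto_atTop_add_const_right
    exact Real.tendsto_log_atTop.comp tendsto_natCast_atTop_atTop
  have hk : ∀ k : ℕ, Filter.Tendsto (fun a : ℕ => (a:ℝ) ^ k / 4 ^ a) Filter.atTop (nhds 0) :=
    fun k => tendsto_pow_const_div_const_pow_of_one_lt k (by norm_num)
  have h2 : Filter.Tendsto (fun a : ℕ => 4 * ((a:ℝ) ^ 2 / 4 ^ a) + 8 * ((a:ℝ) ^ 1 / 4 ^ a) +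
      12 * ((a:ℝ) ^ 0 / 4 ^ a)) Filter.atTop (nhds (4 * 0 + 8 * 0 + 12 * 0)) :=
    (((hk 2).const_mul 4).add ((hk 1).const_mul 8)).add ((hk 0).const_mul 12)
  have h3 := h1.add h2
  simp only [mul_zero, add_zero] at h3
  refine h3.congr (fun a => ?_)
  congr 1
  field_simp
  ring

end FinalPart

/-- The group circularly generated by a pair of uniformly random permutations of `k`
points equals the equal-sign subgroup `(A_k × A_k) ⋊ ⟨(π, π)⟩` with probability
tending to `1/4`. -/
theorem circGenPair_equalSign_probability :
    Filter.Tendsto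
      (fun k : ℕ =>
        (Nat.card {p : Equiv.Perm (Fin k) × Equiv.Perm (Fin k) //
            circGenPair p.1 p.2 = equalSignSubgroup k} : ℝ) / (Nat.factorial k : ℝ) ^ 2)
      Filter.atTop (nhds (1 / 4)) := by
  let a : ℕ → ℕ := fun n => Nat.sqrt (Nat.log 4 (n / 2))
  have ha : Filter.Tendsto a Filter.atTop Filter.atTop := by
    rw [Filter.tendsto_atTop]
    intro m
    filter_upwards [Filter.eventually_ge_atTop (2 * 4 ^ (m * m))] with n hn
    have : 4 ^ (m * m) ≤ n / 2 := by omega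
    have h0 : n / 2 ≠ 0 := by
      have : 0 < 4 ^ (m * m) := by positivity
      omega
    exact Nat.le_sqrt.2 (Nat.le_log_of_pow_le (by norm_num) this)
  have hδ := dx_tend.comp ha
  have hn1 : ∀ c : ℝ, Filter.Tendsto (fun n : ℕ => 4 / ((n:ℝ) - c)) Filter.atTop (nhds 0) := by
    intro c
    apply Filter.Tendsto.const_div_atTop
    exact Filter.tendsto_atTop_add_const_right _ _ tendsto_natCast_atTop_atTop
  have hlow := (hδ.add ((hn1 1).add (hn1 2))).const_sub (1 / 4 : ℝ)
  simp only [add_zero, sub_zero] at hlow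
  refine tendsto_of_tendsto_of_tendsto_of_le_of_le' hlow tendsto_const_nhds ?_ ?_
  · filter_upwards [Filter.eventually_ge_atTop 5, ha.eventually_ge_atTop 7] with n hn han
    have h0 : n / 2 ≠ 0 := by omega
    have hb1 := Nat.pow_log_le_self 4 h0
    have hb2 := Nat.lt_pow_succ_log_self (b := 4) (by norm_num) (n / 2)
    obtain ⟨P, hP, hS, hR⟩ := dx_num (a n) (Nat.log 4 (n / 2)) n han (Nat.sqrt_le _)
      (Nat.lt_succ_sqrt _) (by omega) (by omega)
    have hlog : 1 < Real.log (a n) := by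
      rw [Real.lt_log_iff_exp_lt (by exact_mod_cast (by omega : 0 < a n))]
      have h7 : (7:ℝ) ≤ a n := by exact_mod_cast han
      linarith [Real.exp_one_lt_d9]
    have hpos : 0 < (Real.log (a n) - 1) / 8 := by linarith
    refine le_trans ?_ (dx_lower n hn P hP (hpos.trans_le hS))
    have hi : 1 / (∑ p ∈ P, (1/p:ℝ)) ≤ 8 / (Real.log (a n) - 1) := by
      rw [← one_div_div (Real.log (a n) - 1) 8]
      exact one_div_le_one_div_of_le hpos hS
    simp only [Function.comp_apply]
    linarith
  · filter_upwards [Filter.eventually_ge_atTop 2] with n hn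
    exact dx_upper n hn
end
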